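/- arXiv:1909.02089 — 3 statements merged into one kernel-verified Lean document; each statement's English description precedes it below -/
import Mathlib

section
/- Fix constants C, c > 0 and η > 0. There exists n₀ such that the following holds for all n ≥ n₀. Let G be an n-vertex C-Ramsey graph, let k be an integer with cn ≤ k ≤ (1−c)n, and let X be the number of edges induced by a uniformly random subset of k vertices of G. Then for every x ∈ ℤ we have Pr(X = x) ≤ n^{η−1}. -/
/-- An `n`-vertex graph is `C`-Ramsey if it has no clique and no independent set of size
`C·log₂ n`. -/
def IsCRamsey (C : ℝ) {n : ℕ} (G : SimpleGraph (Fin n)) : Prop :=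
  ∀ s : Finset (Fin n), C * Real.logb 2 n ≤ s.card →
    ¬ G.IsClique (s : Set (Fin n)) ∧ ¬ Gᶜ.IsClique (s : Set (Fin n))

/-- The number of edges of `G` with both endpoints in `s`. -/
noncomputable def inducedEdgeCount {n : ℕ} (G : SimpleGraph (Fin n)) (s : Finset (Fin n)) : ℕ :=
  Nat.card {e : Sym2 (Fin n) | e ∈ G.edgeSet ∧ ∀ v ∈ e, v ∈ s}

section GraphPart
open Finset Classical

set_option linter.unusedSectionVars false

variable {V : Type*} [Fintype V]

/-- A tuple of rows whose popular column patterns are linearly independent. -/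
def GoodT (M : V → V → ℤ) (B : Finset V) (t : ℕ) {L : ℕ} (a : Fin L → V) : Prop :=
  ∃ v : Fin L → Fin L → ℤ,
    (∀ s : Fin L → ℤ, (∀ i, ∑ j, s j * v j i = 0) → s = 0) ∧
    ∀ j, t ≤ (B.filter (fun b => ∀ i, M (a i) b = v j i)).card

lemma goodT_cons {M : V → V → ℤ} (hM : ∀ a b, M a b = 0 ∨ M a b = 1) {B : Finset V} {t r : ℕ}
    {a : Fin r → V} (ha : GoodT M B (2 * t) a) (x : V) (w : Fin r → ℤ)
    (h0 : t ≤ (B.filter (fun b => (∀ i, M (a i) b = w i) ∧ M x b = 0)).card)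
    (h1 : t ≤ (B.filter (fun b => (∀ i, M (a i) b = w i) ∧ M x b = 1)).card) :
    GoodT M B t (Fin.cons x a : Fin (r+1) → V) := by
  obtain ⟨v, hv, hp⟩ := ha
  have key : ∀ j, ∃ e : ℤ,
      t ≤ (B.filter (fun b => (∀ i, M (a i) b = v j i) ∧ M x b = e)).card := by
    intro j
    by_contra hcon
    push Not at hcon
    have c0 := hcon 0
    have c1 := hcon 1
    have : (B.filter (fun b => ∀ i, M (a i) b = v j i)) =
        (B.filter (fun b => (∀ i, M (a i) b = v j i) ∧ M x b = 0)) ∪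
        (B.filter (fun b => (∀ i, M (a i) b = v j i) ∧ M x b = 1)) := by
      ext b
      simp only [mem_filter, mem_union]
      have := hM x b
      tauto
    have h2 := hp j
    rw [this] at h2
    have := card_union_le (B.filter (fun b => (∀ i, M (a i) b = v j i) ∧ M x b = 0))
        (B.filter (fun b => (∀ i, M (a i) b = v j i) ∧ M x b = 1))
    omega
  choose e he using key
  have main : ∃ e0 : ℤ, (t ≤ (B.filter (fun b => (∀ i, M (a i) b = w i) ∧ M x b = e0)).card) ∧
      ∀ (s0 : ℤ) (s : Fin r → ℤ), (s0 * e0 + ∑ j, s j * e j = 0) →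
        (∀ i, s0 * w i + ∑ j, s j * v j i = 0) → s0 = 0 := by
    by_contra hcon
    push Not at hcon
    obtain ⟨s0, s, p1, p2, p3⟩ := hcon 0 h0
    obtain ⟨u0, u, q1, q2, q3⟩ := hcon 1 h1
    have hz : (fun j => u0 * s j - s0 * u j) = 0 := by
      apply hv
      intro i
      have : ∑ j, (u0 * s j - s0 * u j) * v j i
          = u0 * (∑ j, s j * v j i) - s0 * (∑ j, u j * v j i) := by
        rw [mul_sum, mul_sum, ← sum_sub_distrib]
        exact sum_congr rfl (fun j _ => by ring)
      rw [this]
      linear_combination u0 * p2 i - s0 * q2 i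
    have : ∑ j, (u0 * s j - s0 * u j) * e j
          = u0 * (∑ j, s j * e j) - s0 * (∑ j, u j * e j) := by
        rw [mul_sum, mul_sum, ← sum_sub_distrib]
        exact sum_congr rfl (fun j _ => by ring)
    have h3 : ∑ j, (u0 * s j - s0 * u j) * e j = 0 := by
      apply sum_eq_zero
      intro j _
      have := congrFun hz j
      simp only [Pi.zero_apply] at this
      rw [this, zero_mul]
    have : s0 * u0 = 0 := by
      linear_combination (-1) * u0 * p1 + s0 * q1 - this + h3
    rcases mul_eq_zero.mp this with h | h
    · exact p3 h
    · exact q3 h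
  obtain ⟨e0, he0, hind⟩ := main
  refine ⟨Fin.cons (Fin.cons e0 w) (fun j => Fin.cons (e j) (v j)), ?_, ?_⟩
  · intro s hs
    have hs0 := hs 0
    rw [Fin.sum_univ_succ] at hs0
    simp only [Fin.cons_zero, Fin.cons_succ] at hs0
    have hs1 : ∀ i : Fin r, s 0 * w i + ∑ j : Fin r, s j.succ * v j i = 0 := by
      intro i
      have := hs i.succ
      rw [Fin.sum_univ_succ] at this
      simpa only [Fin.cons_zero, Fin.cons_succ] using this
    have z0 := hind (s 0) (fun j => s j.succ) hs0 hs1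
    have z1 : (fun j : Fin r => s j.succ) = 0 := by
      apply hv
      intro i
      have := hs1 i
      rw [z0] at this
      simpa using this
    ext i
    refine Fin.cases ?_ ?_ i
    · simpa using z0
    · intro j; exact congrFun z1 j
  · intro j
    refine Fin.cases ?_ ?_ j
    · refine he0.trans (card_le_card ?_)
      intro b
      simp only [mem_filter]
      rintro ⟨hb, h1, h2⟩
      refine ⟨hb, fun i => ?_⟩
      refine Fin.cases ?_ ?_ i
      · simpa using h2
      · intro i; simpa using h1 i
    · intro j
      refine (he j).trans (card_le_card ?_)
      intro b
      simp only [mem_filter]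
      rintro ⟨hb, h1, h2⟩
      refine ⟨hb, fun i => ?_⟩
      refine Fin.cases ?_ ?_ i
      · simpa using h2
      · intro i; simpa using h1 i

/-- Near-homogeneous pair of sets. -/
def NearHom (M : V → V → ℤ) (A B : Finset V) (L t : ℕ) : Prop :=
  ∃ A' ⊆ A, ∃ B' ⊆ B, A.card ≤ 2 * A'.card ∧ B.card ≤ 2 ^ L * B'.card ∧
    ∃ e : ℤ, (e = 0 ∨ e = 1) ∧ ∀ a ∈ A', (B'.filter (fun b => M a b ≠ e)).card ≤ 2 ^ L * t

lemma dichotomy_aux {M : V → V → ℤ} (hM : ∀ a b, M a b = 0 ∨ M a b = 1) (A B : Finset V)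
    (L t : ℕ) (hn : ¬ NearHom M A B L t) (r : ℕ) (hr : r ≤ L) :
    ∃ a : Fin r → V, (∀ i, a i ∈ A) ∧ GoodT M B (2 ^ (L - r) * t) a := by
  induction r with
  | zero =>
    refine ⟨Fin.elim0, fun i => i.elim0, Fin.elim0, fun s _ => ?_, fun j => j.elim0⟩
    ext i; exact i.elim0
  | succ r ih =>
    obtain ⟨a, haA, ha⟩ := ih (by omega)
    have hpow : 2 ^ (L - r) * t = 2 * (2 ^ (L - (r+1)) * t) := by
      have : L - r = (L - (r+1)) + 1 := by omega
      rw [this, pow_succ]; ring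
    rw [hpow] at ha
    set T := 2 ^ (L - (r+1)) * t with hT
    -- the largest class
    have hcls : ∃ w : Fin r → ℤ, B.card ≤ 2 ^ L * (B.filter (fun b => ∀ i, M (a i) b = w i)).card := by
      by_contra hcon
      push Not at hcon
      have hmap : ∀ b ∈ B, (fun i => M (a i) b) ∈ Fintype.piFinset (fun _ : Fin r => ({0,1} : Finset ℤ)) := by
        intro b _
        simp only [Fintype.mem_piFinset, mem_insert, mem_singleton]
        intro i; exact hM _ _
      have hc := card_eq_sum_card_fiberwise hmap
      have hlt : ∀ w ∈ Fintype.piFinset (fun _ : Fin r => ({0,1} : Finset ℤ)),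
          2 ^ L * (B.filter (fun b => (fun i => M (a i) b) = w)).card < B.card := by
        intro w _
        have := hcon w
        simpa only [funext_iff] using this
      have hcard : (Fintype.piFinset (fun _ : Fin r => ({0,1} : Finset ℤ))).card = 2 ^ r := by
        simp
      have hne : (Fintype.piFinset (fun _ : Fin r => ({0,1} : Finset ℤ))).Nonempty := by
        rw [← card_pos, hcard]; positivity
      have := sum_lt_sum_of_nonempty hne hlt
      rw [← mul_sum, ← hc, sum_const, hcard, smul_eq_mul] at this
      have h2 : 2 ^ r * B.card ≤ 2 ^ L * B.card :=
        Nat.mul_le_mul_right _ (Nat.pow_le_pow_right (by norm_num) (by omega))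
      omega
    obtain ⟨w, hw⟩ := hcls
    by_contra hcon
    push Not at hcon
    apply hn
    set B' := B.filter (fun b => ∀ i, M (a i) b = w i) with hB'
    have hTt : T ≤ 2 ^ L * t := Nat.mul_le_mul_right _ (Nat.pow_le_pow_right (by norm_num) (by omega))
    have hx : ∀ x ∈ A, (B'.filter (fun b => M x b ≠ 0)).card ≤ 2 ^ L * t ∨
        (B'.filter (fun b => M x b ≠ 1)).card ≤ 2 ^ L * t := by
      intro x hx
      by_contra hc2
      push Not at hc2
      refine hcon (Fin.cons x a) ?_ (goodT_cons hM ha x w ?_ ?_)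
      · intro i
        refine Fin.cases ?_ ?_ i
        · simpa using hx
        · intro i; simpa using haA i
      · refine (hTt.trans hc2.2.le).trans (card_le_card ?_)
        intro b
        simp only [hB', mem_filter]
        rintro ⟨⟨h1, h2⟩, h3⟩
        exact ⟨h1, h2, (hM x b).resolve_right h3⟩
      · refine (hTt.trans hc2.1.le).trans (card_le_card ?_)
        intro b
        simp only [hB', mem_filter]
        rintro ⟨⟨h1, h2⟩, h3⟩
        exact ⟨h1, h2, (hM x b).resolve_left h3⟩
    set A0 := A.filter (fun x => (B'.filter (fun b => M x b ≠ 0)).card ≤ 2 ^ L * t) with hA0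
    set A1 := A.filter (fun x => (B'.filter (fun b => M x b ≠ 1)).card ≤ 2 ^ L * t) with hA1
    have hu : A ⊆ A0 ∪ A1 := by
      intro x hxA
      simp only [hA0, hA1, mem_union, mem_filter]
      have := hx x hxA
      tauto
    have hcu := (card_le_card hu).trans (card_union_le _ _)
    by_cases h01 : A1.card ≤ A0.card
    · exact ⟨A0, filter_subset _ _, B', filter_subset _ _, by omega, hw, 0, Or.inl rfl,
        fun x hx => (mem_filter.mp hx).2⟩
    · exact ⟨A1, filter_subset _ _, B', filter_subset _ _, by omega, hw, 1, Or.inr rfl,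
        fun x hx => (mem_filter.mp hx).2⟩

/-- homogeneous sets -/
def Hom (M : V → V → ℤ) (e : ℤ) (K : Finset V) : Prop :=
  ∀ x ∈ K, ∀ y ∈ K, x ≠ y → M x y = e

lemma hom_union {M : V → V → ℤ} (hs : ∀ a b, M a b = M b a) {e : ℤ} {K K' : Finset V}
    (h : Hom M e K) (h' : Hom M e K') (hc : ∀ x ∈ K, ∀ y ∈ K', M x y = e) : Hom M e (K ∪ K') := by
  intro x hx y hy hxy
  rcases mem_union.mp hx with hx | hx <;> rcases mem_union.mp hy with hy | hy
  · exact h x hx y hy hxy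
  · exact hc x hx y hy
  · rw [hs]; exact hc y hy x hx
  · exact h' x hx y hy hxy

lemma hom_rec {M : V → V → ℤ} (hM : ∀ a b, M a b = 0 ∨ M a b = 1) (hs : ∀ a b, M a b = M b a)
    (l L t s0 : ℕ) (hs0 : 1 ≤ s0) (hl : ∀ K : Finset V, (Hom M 0 K ∨ Hom M 1 K) → K.card ≤ l)
    (hbig : 2 ^ (L + 1) * (2 * l * (2 ^ L * t)) ≤ s0)
    (hno : ∀ A B : Finset V, Disjoint A B → s0 ≤ A.card → s0 ≤ B.card →
      ∃ A' ⊆ A, A.card ≤ 2 * A'.card ∧ ¬ ∃ a : Fin L → V, (∀ i, a i ∈ A') ∧ GoodT M B t a)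
    (D : ℕ) : ∀ S : Finset V, (2 ^ (L + 4)) ^ D * s0 ≤ S.card →
      ∃ K ⊆ S, ∃ I ⊆ S, Hom M 1 K ∧ Hom M 0 I ∧ 2 ^ D ≤ K.card * I.card := by
  induction D with
  | zero =>
    intro S hS
    have : 0 < S.card := by simp at hS; omega
    obtain ⟨x, hx⟩ := card_pos.mp this
    refine ⟨{x}, by simpa using hx, {x}, by simpa using hx, ?_, ?_, by simp⟩
    · intro a ha b hb hab; simp at ha hb; exact absurd (ha.trans hb.symm) hab
    · intro a ha b hb hab; simp at ha hb; exact absurd (ha.trans hb.symm) hab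
  | succ D ih =>
    intro S hS
    set R := (2 ^ (L + 4)) ^ D * s0 with hR
    have hRs : s0 ≤ R := Nat.le_mul_of_pos_left _ (by positivity)
    have hS' : 2 ^ L * (16 * R) ≤ S.card := by
      refine le_trans (le_of_eq ?_) hS
      rw [hR]; ring
    have h2L : 1 ≤ 2 ^ L := Nat.one_le_two_pow
    have hS16 : 16 * R ≤ S.card := le_trans (Nat.le_mul_of_pos_left _ (by positivity)) hS'
    obtain ⟨A, hAS, hAc⟩ := exists_subset_card_eq (s := S) (n := S.card / 2) (by omega)
    set B := S \ A with hB
    have hBc : B.card = S.card - S.card / 2 := by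
      rw [hB, card_sdiff_of_subset hAS, hAc]
    have hdis : Disjoint A B := disjoint_sdiff
    obtain ⟨A', hA'A, hA'c, hng⟩ := hno A B hdis (by omega) (by omega)
    have hnh : NearHom M A' B L t := by
      by_contra h
      have := dichotomy_aux hM A' B L t h L le_rfl
      simp only [Nat.sub_self, pow_zero, one_mul] at this
      exact hng this
    obtain ⟨A2, hA2, B2, hB2, hA2c, hB2c, e, he, herr⟩ := hnh
    obtain ⟨K, hK, I, hI, hKh, hIh, hKI⟩ := ih A2 (by omega)
    have hKl := hl K (Or.inr hKh)
    have hIl := hl I (Or.inl hIh)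
    set B3 := B2.filter (fun b => ∀ x ∈ K ∪ I, M x b = e) with hB3
    have hrem : B2 \ B3 ⊆ (K ∪ I).biUnion (fun x => B2.filter (fun b => M x b ≠ e)) := by
      intro b hb
      simp only [hB3, mem_sdiff, mem_filter, not_and, mem_biUnion] at hb ⊢
      obtain ⟨hb1, hb2⟩ := hb
      have := hb2 hb1
      push Not at this
      obtain ⟨x, hx, hx2⟩ := this
      exact ⟨x, hx, hb1, hx2⟩
    have hremc : (B2 \ B3).card ≤ 2 * l * (2 ^ L * t) := by
      refine (card_le_card hrem).trans ?_
      refine (card_biUnion_le_card_mul _ _ (2 ^ L * t) ?_).trans ?_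
      · intro x hx
        apply herr
        rcases mem_union.mp hx with hx | hx
        · exact hK hx
        · exact hI hx
      · apply Nat.mul_le_mul_right
        have := card_union_le K I
        omega
    have hB3c : R ≤ B3.card := by
      have h1 : (B2 \ B3).card + B3.card = B2.card := by
        exact card_sdiff_add_card_eq_card (filter_subset _ _)
      by_contra hlt
      push Not at hlt
      have h3 : B2.card ≤ 2 * l * (2 ^ L * t) + R := by omega
      have h4 : B.card ≤ 2 ^ L * (2 * l * (2 ^ L * t)) + 2 ^ L * R := by
        refine hB2c.trans ?_
        rw [← mul_add]; exact Nat.mul_le_mul_left _ h3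
      have h5 : 2 * (2 ^ L * (2 * l * (2 ^ L * t))) ≤ s0 := by
        refine le_trans (le_of_eq ?_) hbig
        ring
      have h6 : R ≤ 2 ^ L * R := Nat.le_mul_of_pos_left _ (by positivity)
      have h7 : 16 * (2 ^ L * R) ≤ S.card := by
        refine le_trans (le_of_eq ?_) hS'
        ring
      omega
    obtain ⟨K', hK', I', hI', hKh', hIh', hKI'⟩ := ih B3 hB3c
    have hA2S : A2 ⊆ S := (hA2.trans hA'A).trans hAS
    have hB3S : B3 ⊆ S := ((filter_subset _ _).trans hB2).trans sdiff_subset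
    have hB3d : Disjoint A2 B3 := by
      refine disjoint_of_subset_left (hA2.trans hA'A) ?_
      exact disjoint_of_subset_right ((filter_subset _ _).trans hB2) hdis
    have hcross : ∀ x ∈ K ∪ I, ∀ y ∈ B3, M x y = e := by
      intro x hx y hy
      exact (mem_filter.mp hy).2 x hx
    rcases he with rfl | rfl
    · -- independent sets join
      have hcI : (I ∪ I').card = I.card + I'.card :=
        card_union_of_disjoint (disjoint_of_subset_left hI (disjoint_of_subset_right hI' hB3d))
      have hIu : Hom M 0 (I ∪ I') := hom_union hs hIh hIh'
        (fun x hx y hy => hcross x (mem_union_right _ hx) y (hI' hy))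
      have hsub : I ∪ I' ⊆ S := union_subset (hI.trans hA2S) (hI'.trans hB3S)
      by_cases hk : K.card ≤ K'.card
      · refine ⟨K', hK'.trans hB3S, I ∪ I', hsub, hKh', hIu, ?_⟩
        rw [hcI]; rw [pow_succ]
        nlinarith [Nat.mul_le_mul_right I.card hk]
      · refine ⟨K, hK.trans hA2S, I ∪ I', hsub, hKh, hIu, ?_⟩
        rw [hcI]; rw [pow_succ]
        nlinarith [Nat.mul_le_mul_right I'.card (le_of_not_ge hk)]
    · have hcI : (K ∪ K').card = K.card + K'.card :=
        card_union_of_disjoint (disjoint_of_subset_left hK (disjoint_of_subset_right hK' hB3d))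
      have hIu : Hom M 1 (K ∪ K') := hom_union hs hKh hKh'
        (fun x hx y hy => hcross x (mem_union_left _ hx) y (hK' hy))
      have hsub : K ∪ K' ⊆ S := union_subset (hK.trans hA2S) (hK'.trans hB3S)
      by_cases hk : I.card ≤ I'.card
      · refine ⟨K ∪ K', hsub, I', hI'.trans hB3S, hIu, hIh', ?_⟩
        rw [hcI]; rw [pow_succ]
        nlinarith [Nat.mul_le_mul_left K.card hk]
      · refine ⟨K ∪ K', hsub, I, hI.trans hA2S, hIu, hIh, ?_⟩
        rw [hcI]; rw [pow_succ]
        nlinarith [Nat.mul_le_mul_left K'.card (le_of_not_ge hk)]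

lemma exists_rich {M : V → V → ℤ} (hM : ∀ a b, M a b = 0 ∨ M a b = 1) (hs : ∀ a b, M a b = M b a)
    (l L t s0 D : ℕ) (hs0 : 1 ≤ s0) (hl : ∀ K : Finset V, (Hom M 0 K ∨ Hom M 1 K) → K.card ≤ l)
    (hbig : 2 ^ (L + 1) * (2 * l * (2 ^ L * t)) ≤ s0)
    (hD : l * l < 2 ^ D) (hV : (2 ^ (L + 4)) ^ D * s0 ≤ Fintype.card V) :
    ∃ A B : Finset V, Disjoint A B ∧ s0 ≤ A.card ∧
      ∀ A' ⊆ A, A.card ≤ 2 * A'.card → ∃ a : Fin L → V, (∀ i, a i ∈ A') ∧ GoodT M B t a := by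
  by_contra hcon
  push Not at hcon
  obtain ⟨K, _, I, _, hK, hI, hKI⟩ := hom_rec hM hs l L t s0 hs0 hl hbig (by
    intro A B hAB hA hB
    obtain ⟨A', h1, h2, h3⟩ := hcon A B hAB hA
    refine ⟨A', h1, h2, ?_⟩
    rintro ⟨a, ha, hg⟩
    exact h3 a ha hg) D univ (by simpa using hV)
  have h1 := hl K (Or.inr hK)
  have h2 := hl I (Or.inl hI)
  have := Nat.mul_le_mul h1 h2
  omega

lemma exists_family {M : V → V → ℤ} {A B : Finset V} {L t : ℕ}
    (h : ∀ A' ⊆ A, A.card ≤ 2 * A'.card → ∃ a : Fin L → V, (∀ i, a i ∈ A') ∧ GoodT M B t a)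
    (m : ℕ) (hm : 2 * (m * L) ≤ A.card) :
    ∃ τ : Fin m → Fin L → V, (∀ s i, τ s i ∈ A) ∧ (∀ s, GoodT M B t (τ s)) ∧
      ∀ s s' i i', τ s i = τ s' i' → s = s' := by
  induction m with
  | zero => exact ⟨Fin.elim0, fun s => s.elim0, fun s => s.elim0, fun s => s.elim0⟩
  | succ m ih =>
    obtain ⟨τ, h1, h2, h3⟩ := ih (by nlinarith)
    set W := (univ : Finset (Fin m × Fin L)).image (fun q => τ q.1 q.2) with hW
    have hWc : W.card ≤ m * L := by
      refine card_image_le.trans ?_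
      simp
    have hsd := le_card_sdiff W A
    obtain ⟨a, ha, hg⟩ := h (A \ W) sdiff_subset (by
      have : (m+1) * L = m * L + L := by ring
      omega)
    refine ⟨Fin.cons a τ, ?_, ?_, ?_⟩
    · intro s i
      refine Fin.cases ?_ ?_ s
      · simpa using (mem_sdiff.mp (ha i)).1
      · intro s; simpa using h1 s i
    · intro s
      refine Fin.cases ?_ ?_ s
      · simpa using hg
      · intro s; simpa using h2 s
    · have hne : ∀ i s i', a i ≠ τ s i' := by
        intro i s i' heq
        apply (mem_sdiff.mp (ha i)).2
        rw [heq, hW]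
        exact mem_image.mpr ⟨(s, i'), mem_univ _, rfl⟩
      intro s s' i i'
      refine Fin.cases ?_ ?_ s
      · refine Fin.cases ?_ ?_ s'
        · simp
        · intro s'; simp only [Fin.cons_zero, Fin.cons_succ]
          intro heq; exact absurd heq (hne _ _ _)
      · intro s
        refine Fin.cases ?_ ?_ s'
        · simp only [Fin.cons_zero, Fin.cons_succ]
          intro heq; exact absurd heq.symm (hne _ _ _)
        · intro s'; simp only [Fin.cons_succ]
          intro heq; rw [h3 _ _ _ _ heq]

end GraphPart

section ProbPart
open Finset Classical

set_option linter.unusedSectionVars false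

variable {V : Type*}

/-- expectation of `f` over a `p`-random subset of `S` -/
noncomputable def EE {E : Type*} [AddCommGroup E] [Module ℝ E] (p : ℝ) (S : Finset V)
    (f : Finset V → E) : E :=
  ∑ U ∈ S.powerset, (p ^ U.card * (1 - p) ^ (S.card - U.card)) • f U

section basic
variable {E : Type*} [AddCommGroup E] [Module ℝ E]

lemma EE_congr {p : ℝ} {S : Finset V} {f g : Finset V → E} (h : ∀ U ⊆ S, f U = g U) :
    EE p S f = EE p S g :=
  sum_congr rfl fun U hU => by rw [h U (mem_powerset.mp hU)]

lemma EE_empty (p : ℝ) (f : Finset V → E) : EE p ∅ f = f ∅ := by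
  simp [EE]

lemma EE_insert (p : ℝ) {S : Finset V} {a : V} (ha : a ∉ S) (f : Finset V → E) :
    EE p (insert a S) f = p • EE p S (fun U => f (insert a U)) + (1 - p) • EE p S f := by
  unfold EE
  rw [sum_powerset_insert ha, add_comm, smul_sum, smul_sum]
  congr 1
  · refine sum_congr rfl fun U hU => ?_
    have hU := mem_powerset.mp hU
    have haU : a ∉ U := fun h => ha (hU h)
    rw [card_insert_of_notMem haU, card_insert_of_notMem ha, Nat.add_sub_add_right, smul_smul,
      pow_succ]
    congr 1; ring
  · refine sum_congr rfl fun U hU => ?_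
    have hU := card_le_card (mem_powerset.mp hU)
    rw [card_insert_of_notMem ha, Nat.succ_sub hU, smul_smul, pow_succ]
    congr 1; ring

lemma EE_add (p : ℝ) (S : Finset V) (f g : Finset V → E) :
    EE p S (fun U => f U + g U) = EE p S f + EE p S g := by
  simp [EE, smul_add, sum_add_distrib]

lemma EE_smul (p : ℝ) (S : Finset V) (r : ℝ) (f : Finset V → E) :
    EE p S (fun U => r • f U) = r • EE p S f := by
  unfold EE
  rw [smul_sum]
  exact sum_congr rfl fun U _ => by rw [smul_comm]

lemma EE_sum {ι : Type*} (p : ℝ) (S : Finset V) (J : Finset ι) (f : ι → Finset V → E) :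
    EE p S (fun U => ∑ j ∈ J, f j U) = ∑ j ∈ J, EE p S (f j) := by
  unfold EE
  rw [sum_comm]
  exact sum_congr rfl fun U _ => by rw [smul_sum]

lemma EE_union (p : ℝ) {S T : Finset V} (h : Disjoint S T) (f : Finset V → E) :
    EE p (S ∪ T) f = EE p S (fun U => EE p T (fun W => f (U ∪ W))) := by
  induction S using Finset.induction_on generalizing f with
  | empty => simp [EE_empty]
  | insert a S ha ih =>
    rw [disjoint_insert_left] at h
    rw [insert_union, EE_insert p (by simp [ha, h.1]), EE_insert p ha, ih h.2, ih h.2]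
    simp only [insert_union]

lemma EE_comm (p : ℝ) (S T : Finset V) (f : Finset V → Finset V → E) :
    EE p S (fun U => EE p T (fun W => f U W)) = EE p T (fun W => EE p S (fun U => f U W)) := by
  unfold EE
  simp only [smul_sum]
  rw [sum_comm]
  exact sum_congr rfl fun U _ => sum_congr rfl fun W _ => by rw [smul_comm]

end basic

lemma EE_prod {E : Type*} [CommRing E] [Algebra ℝ E] (p : ℝ) (S : Finset V) (g : V → E) :
    EE p S (fun U => ∏ u ∈ U, g u) = ∏ s ∈ S, (p • g s + algebraMap ℝ E (1 - p)) := by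
  induction S using Finset.induction_on with
  | empty => simp [EE_empty]
  | insert a S ha ih =>
    rw [EE_insert p ha, prod_insert ha, ← ih, add_mul]
    congr 1
    · rw [smul_mul_assoc]
      congr 1
      unfold EE
      rw [mul_sum]
      refine sum_congr rfl fun U hU => ?_
      have haU : a ∉ U := fun h => ha (mem_powerset.mp hU h)
      beta_reduce
      rw [prod_insert haU, mul_smul_comm]
    · rw [Algebra.smul_def]

lemma EE_mul_left {E : Type*} [CommRing E] [Algebra ℝ E] (p : ℝ) (S : Finset V) (c : E)
    (g : Finset V → E) : EE p S (fun U => c * g U) = c * EE p S g := by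
  unfold EE
  rw [mul_sum]
  exact sum_congr rfl fun U _ => by rw [mul_smul_comm]

lemma EE_const (p : ℝ) (S : Finset V) (c : ℝ) : EE p S (fun _ => c) = c := by
  have := EE_prod (E := ℝ) p S (fun _ => 1)
  simp only [prod_const_one, smul_eq_mul, mul_one, Algebra.algebraMap_self, RingHom.id_apply,
    add_sub_cancel] at this
  have h2 := EE_mul_left p S c (fun _ => (1:ℝ))
  simpa [this] using h2

lemma EE_mono {p : ℝ} (h0 : 0 ≤ p) (h1 : p ≤ 1) {S : Finset V} {f g : Finset V → ℝ}
    (h : ∀ U ⊆ S, f U ≤ g U) : EE p S f ≤ EE p S g := by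
  unfold EE
  refine sum_le_sum fun U hU => ?_
  simp only [smul_eq_mul]
  have : 0 ≤ 1 - p := by linarith
  exact mul_le_mul_of_nonneg_left (h U (mem_powerset.mp hU)) (by positivity)

lemma EE_le_const {p : ℝ} (h0 : 0 ≤ p) (h1 : p ≤ 1) {S : Finset V} {f : Finset V → ℝ} {c : ℝ}
    (h : ∀ U ⊆ S, f U ≤ c) : EE p S f ≤ c := by
  rw [← EE_const p S c]; exact EE_mono h0 h1 h

lemma EE_nonneg {p : ℝ} (h0 : 0 ≤ p) (h1 : p ≤ 1) {S : Finset V} {f : Finset V → ℝ}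
    (h : ∀ U ⊆ S, 0 ≤ f U) : 0 ≤ EE p S f := by
  rw [← EE_const p S 0]; exact EE_mono h0 h1 h

lemma norm_EE_le {p : ℝ} (h0 : 0 ≤ p) (h1 : p ≤ 1) (S : Finset V) (f : Finset V → ℂ) :
    ‖EE p S f‖ ≤ EE p S (fun U => ‖f U‖) := by
  unfold EE
  refine (norm_sum_le _ _).trans (le_of_eq (sum_congr rfl fun U _ => ?_))
  have : 0 ≤ 1 - p := by linarith
  rw [norm_smul, Real.norm_of_nonneg (by positivity), smul_eq_mul]

lemma EE_sq_le {p : ℝ} (h0 : 0 ≤ p) (h1 : p ≤ 1) (S : Finset V) (f : Finset V → ℝ) :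
    (EE p S f) ^ 2 ≤ EE p S (fun U => f U ^ 2) := by
  have h := EE_nonneg (S := S) h0 h1 (f := fun U => (f U - EE p S f) ^ 2) (fun U _ => sq_nonneg _)
  set m := EE p S f with hm
  have : EE p S (fun U => (f U - m) ^ 2) = EE p S (fun U => f U ^ 2) - m ^ 2 := by
    have e1 : (fun U => (f U - m) ^ 2) = fun U => (f U ^ 2 + ((-2 * m) * f U + m ^ 2)) := by
      ext U; ring
    rw [e1, EE_add, EE_add, EE_mul_left, EE_const, ← hm]; ring
  linarith

/-- the additive character -/
noncomputable def ee (x : ℝ) : ℂ := Complex.exp (((2 * Real.pi * x : ℝ) : ℂ) * Complex.I)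

lemma norm_ee (x : ℝ) : ‖ee x‖ = 1 := Complex.norm_exp_ofReal_mul_I _

lemma ee_add (x y : ℝ) : ee (x + y) = ee x * ee y := by
  unfold ee; rw [← Complex.exp_add]; congr 1; push_cast; ring

lemma ee_zero : ee 0 = 1 := by simp [ee]

lemma conj_ee (x : ℝ) : (starRingEnd ℂ) (ee x) = ee (-x) := by
  unfold ee; rw [← Complex.exp_conj]; congr 1
  rw [map_mul, Complex.conj_ofReal, Complex.conj_I]; push_cast; ring

lemma ee_sub (x y : ℝ) : ee (x - y) = ee x * (starRingEnd ℂ) (ee y) := by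
  rw [sub_eq_add_neg, ee_add, conj_ee]

lemma ee_sum {ι : Type*} (s : Finset ι) (f : ι → ℝ) : ee (∑ i ∈ s, f i) = ∏ i ∈ s, ee (f i) := by
  induction s using Finset.induction_on with
  | empty => simp [ee_zero]
  | insert a s ha ih => rw [sum_insert ha, prod_insert ha, ee_add, ih]

lemma ee_nat_mul (k : ℕ) (x : ℝ) : ee (k * x) = ee x ^ k := by
  unfold ee; rw [← Complex.exp_nat_mul]; congr 1; push_cast; ring

lemma ee_int (m : ℤ) : ee m = 1 := by
  unfold ee
  rw [← Complex.exp_int_mul_two_pi_mul_I m]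
  congr 1; push_cast; ring

lemma ee_eq_one_iff {x : ℝ} : ee x = 1 ↔ ∃ m : ℤ, x = m := by
  constructor
  · intro h
    unfold ee at h
    rw [Complex.exp_eq_one_iff] at h
    obtain ⟨m, hm⟩ := h
    refine ⟨m, ?_⟩
    have h2 : (2 * (Real.pi : ℂ) * Complex.I) ≠ 0 := Complex.two_pi_I_ne_zero
    have : (x : ℂ) = m := by
      apply mul_right_cancel₀ h2
      rw [← hm]; push_cast; ring
    exact_mod_cast this
  · rintro ⟨m, rfl⟩; exact ee_int m

/-- discrete orthogonality -/
lemma ee_orth (N : ℕ) (hN : 0 < N) (k : ℤ) :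
    ∑ t ∈ range N, ee (t * (k / N : ℝ)) = if (N : ℤ) ∣ k then (N : ℂ) else 0 := by
  simp only [ee_nat_mul]
  have hNR : (N : ℝ) ≠ 0 := by positivity
  split_ifs with h
  · obtain ⟨m, rfl⟩ := h
    have : ee ((((N : ℤ) * m : ℤ) : ℝ) / N) = 1 := by
      rw [ee_eq_one_iff]; refine ⟨m, ?_⟩; push_cast; field_simp
    rw [this]; simp
  · have hne : ee ((k : ℝ) / N) ≠ 1 := by
      intro h1
      obtain ⟨m, hm⟩ := ee_eq_one_iff.mp h1
      apply h
      refine ⟨m, ?_⟩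
      rw [div_eq_iff hNR] at hm
      have : (k : ℝ) = ((N * m : ℤ) : ℝ) := by push_cast; linarith
      exact_mod_cast this
    rw [geom_sum_eq hne, ← ee_nat_mul]
    have : ee ((N : ℕ) * ((k : ℝ) / N)) = 1 := by
      rw [ee_eq_one_iff]; refine ⟨k, ?_⟩; field_simp
    rw [this]; simp

/-- decoupling -/
lemma decouple {p : ℝ} (h0 : 0 ≤ p) (h1 : p ≤ 1) (A B : Finset V) (g h : Finset V → ℂ)
    (hg : ∀ U, ‖g U‖ ≤ 1) (hh : ∀ U, ‖h U‖ ≤ 1) (T : V → V → ℝ) :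
    ‖EE p A (fun a => EE p B (fun b => g a * (h b * ee (∑ x ∈ a, ∑ y ∈ b, T x y))))‖ ^ 2 ≤
      EE p B (fun b => EE p B (fun b' =>
        ∏ x ∈ A, ‖(p : ℂ) * ee (∑ y ∈ b, T x y - ∑ y ∈ b', T x y) + (1 - p)‖)) := by
  have s1 : ‖EE p A (fun a => EE p B (fun b => g a * (h b * ee (∑ x ∈ a, ∑ y ∈ b, T x y))))‖ ≤
      EE p A (fun a => ‖EE p B (fun b => h b * ee (∑ x ∈ a, ∑ y ∈ b, T x y))‖) := by
    refine (norm_EE_le h0 h1 _ _).trans (EE_mono h0 h1 fun a _ => ?_)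
    rw [EE_mul_left, norm_mul]
    exact mul_le_of_le_one_left (norm_nonneg _) (hg a)
  have s2 := pow_le_pow_left₀ (norm_nonneg _) s1 2
  refine s2.trans ((EE_sq_le h0 h1 _ _).trans ?_)
  have s3 : ∀ a : Finset V, ((‖EE p B (fun b => h b * ee (∑ x ∈ a, ∑ y ∈ b, T x y))‖ ^ 2 : ℝ) : ℂ) =
      EE p B (fun b => EE p B (fun b' => (h b * (starRingEnd ℂ) (h b')) *
        ∏ x ∈ a, ee (∑ y ∈ b, T x y - ∑ y ∈ b', T x y))) := by
    intro a
    rw [← Complex.normSq_eq_norm_sq, ← Complex.mul_conj]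
    unfold EE
    rw [map_sum, sum_mul_sum]
    refine sum_congr rfl fun b _ => ?_
    rw [smul_sum]
    refine sum_congr rfl fun b' _ => ?_
    beta_reduce
    rw [← ee_sum, sum_sub_distrib, ee_sub]
    simp only [Complex.real_smul, map_mul, Complex.conj_ofReal]
    ring
  have s4 : ((EE p A (fun a => ‖EE p B (fun b => h b * ee (∑ x ∈ a, ∑ y ∈ b, T x y))‖ ^ 2) : ℝ) : ℂ)
      = EE p B (fun b => EE p B (fun b' => (h b * (starRingEnd ℂ) (h b')) *
        ∏ x ∈ A, ((p : ℂ) * ee (∑ y ∈ b, T x y - ∑ y ∈ b', T x y) + (1 - p)))) := by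
    have : ((EE p A (fun a => ‖EE p B (fun b => h b * ee (∑ x ∈ a, ∑ y ∈ b, T x y))‖ ^ 2) : ℝ) : ℂ)
       = EE p A (fun a => ((‖EE p B (fun b => h b * ee (∑ x ∈ a, ∑ y ∈ b, T x y))‖ ^ 2 : ℝ) : ℂ)) := by
      unfold EE
      rw [Complex.ofReal_sum]
      refine sum_congr rfl fun a _ => ?_
      rw [smul_eq_mul, Complex.ofReal_mul, Complex.real_smul]
    rw [this]
    simp only [s3]
    rw [EE_comm]
    refine EE_congr fun b _ => ?_
    rw [EE_comm]
    refine EE_congr fun b' _ => ?_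
    rw [EE_mul_left, EE_prod]
    simp
  have s5 : EE p A (fun a => ‖EE p B (fun b => h b * ee (∑ x ∈ a, ∑ y ∈ b, T x y))‖ ^ 2) ≤
    ‖((EE p A (fun a => ‖EE p B (fun b => h b * ee (∑ x ∈ a, ∑ y ∈ b, T x y))‖ ^ 2) : ℝ) : ℂ)‖ := by
    rw [Complex.norm_real]; exact le_abs_self _
  refine s5.trans ?_
  rw [s4]
  refine (norm_EE_le h0 h1 _ _).trans (EE_mono h0 h1 fun b _ => ?_)
  refine (norm_EE_le h0 h1 _ _).trans (EE_mono h0 h1 fun b' _ => ?_)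
  rw [norm_mul, norm_mul, norm_prod, RCLike.norm_conj]
  refine mul_le_of_le_one_left (prod_nonneg fun _ _ => norm_nonneg _) ?_
  exact mul_le_one₀ (hh b) (norm_nonneg _) (hh b')

lemma norm_bern_le_one {p : ℝ} (h0 : 0 ≤ p) (h1 : p ≤ 1) (x : ℝ) :
    ‖(p : ℂ) * ee x + (1 - p)‖ ≤ 1 := by
  have h3 : ‖(1 - p : ℂ)‖ = 1 - p := by
    rw [← Complex.ofReal_one, ← Complex.ofReal_sub, Complex.norm_real]
    exact abs_of_nonneg (by linarith)
  calc _ ≤ ‖(p : ℂ) * ee x‖ + ‖(1 - p : ℂ)‖ := norm_add_le _ _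
    _ = 1 := by
      rw [norm_mul, norm_ee, h3, Complex.norm_real, Real.norm_of_nonneg h0]; ring

lemma norm_bern_sq (p x : ℝ) :
    ‖(p : ℂ) * ee x + (1 - p)‖ ^ 2 = 1 - 4 * (p * (1 - p)) * Real.sin (Real.pi * x) ^ 2 := by
  have h : (p : ℂ) * ee x + (1 - p) =
      ((p * Real.cos (2 * Real.pi * x) + (1 - p) : ℝ) : ℂ)
        + ((p * Real.sin (2 * Real.pi * x) : ℝ) : ℂ) * Complex.I := by
    unfold ee; rw [Complex.exp_mul_I]
    push_cast; ring
  rw [h, ← Complex.normSq_eq_norm_sq, Complex.normSq_add_mul_I]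
  have e : 2 * Real.pi * x = 2 * (Real.pi * x) := by ring
  rw [e, Real.sin_two_mul, Real.cos_two_mul]
  have := Real.sin_sq_add_cos_sq (Real.pi * x)
  have h2 : Real.cos (Real.pi * x) ^ 2 = 1 - Real.sin (Real.pi * x) ^ 2 := by linarith
  ring_nf
  have h4 : Real.cos (Real.pi * x) ^ 4 = (1 - Real.sin (Real.pi * x) ^ 2) ^ 2 := by
    rw [← h2]; ring
  simp only [h4, h2]
  ring

lemma norm_bern_le {p : ℝ} (h0 : 0 ≤ p) (h1 : p ≤ 1) {x ε : ℝ} (hε : 0 ≤ ε)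
    (hx : ¬ ∃ m : ℤ, |x - m| ≤ ε) :
    ‖(p : ℂ) * ee x + (1 - p)‖ ≤ Real.exp (-(8 * (p * (1 - p)) * ε ^ 2)) := by
  push Not at hx
  have hr := hx (round x)
  have hr2 := abs_sub_round x
  set d := x - round x with hd
  have hsin : Real.sin (Real.pi * x) ^ 2 = Real.sin (Real.pi * |d|) ^ 2 := by
    have e : Real.pi * x = Real.pi * d + (round x) * Real.pi := by rw [hd]; ring
    rw [e, Real.sin_add_int_mul_pi, mul_pow]
    have : ((-1 : ℝ) ^ (round x)) ^ 2 = 1 := by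
      rw [← zpow_natCast, ← zpow_mul, mul_comm, zpow_mul]; norm_num
    rw [this, one_mul]
    rcases abs_cases d with ⟨h, _⟩ | ⟨h, _⟩ <;> rw [h]
    rw [mul_neg, Real.sin_neg]; ring
  have hj : 2 * |d| ≤ Real.sin (Real.pi * |d|) := by
    have := Real.mul_le_sin (x := Real.pi * |d|) (by positivity)
      (by nlinarith [Real.pi_pos])
    have e : 2 / Real.pi * (Real.pi * |d|) = 2 * |d| := by field_simp
    linarith
  have hs : 4 * ε ^ 2 ≤ Real.sin (Real.pi * x) ^ 2 := by
    rw [hsin]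
    nlinarith [abs_nonneg d]
  have hpq : 0 ≤ p * (1 - p) := mul_nonneg h0 (by linarith)
  have h2 : ‖(p : ℂ) * ee x + (1 - p)‖ ^ 2 ≤ Real.exp (-(8 * (p * (1 - p)) * ε ^ 2)) ^ 2 := by
    rw [norm_bern_sq, ← Real.exp_nat_mul]
    have := Real.add_one_le_exp ((2 : ℕ) * -(8 * (p * (1 - p)) * ε ^ 2))
    refine le_trans ?_ this
    push_cast
    nlinarith
  exact le_of_sq_le_sq h2 (Real.exp_pos _).le

end ProbPart

section AntiPart
open Finset Classical

set_option linter.unusedSectionVars false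

variable {V : Type*} [Fintype V]

lemma card_near_le (N : ℕ) (hN : 0 < N) (r κ : ℝ) (hκ : 0 ≤ κ) :
    (((range N).filter (fun t : ℕ => |(t : ℝ) / N - r| ≤ κ)).card : ℝ) ≤ 2 * κ * N + 1 := by
  have hNR : (0 : ℝ) < N := by exact_mod_cast hN
  have h1 : ((range N).filter (fun t : ℕ => |(t : ℝ) / N - r| ≤ κ)).card ≤
      (Icc ⌈N * (r - κ)⌉ ⌊N * (r + κ)⌋).card := by
    apply card_le_card_of_injOn (fun t : ℕ => (t : ℤ))
    · intro t ht
      simp only [coe_filter, mem_range, Set.mem_ofPred_eq] at ht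
      have h := abs_le.mp ht.2
      have e : (t : ℝ) = N * (t / N) := by field_simp
      simp only [coe_Icc, Set.mem_Icc]
      constructor
      · rw [Int.ceil_le]; push_cast; rw [e]; apply mul_le_mul_of_nonneg_left _ hNR.le; linarith
      · rw [Int.le_floor]; push_cast; rw [e]; apply mul_le_mul_of_nonneg_left _ hNR.le; linarith
    · intro a _ b _ h; simpa using h
  refine (Nat.cast_le.mpr h1).trans ?_
  rw [Int.card_Icc]
  have h2 := Int.floor_le ((N : ℝ) * (r + κ))
  have h3 := Int.le_ceil ((N : ℝ) * (r - κ))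
  have h4 : (((⌊(N : ℝ) * (r + κ)⌋ + 1 - ⌈(N : ℝ) * (r - κ)⌉).toNat : ℤ) : ℝ) =
     max ((⌊(N : ℝ) * (r + κ)⌋ : ℝ) + 1 - ⌈(N : ℝ) * (r - κ)⌉) 0 := by
    rw [Int.toNat_eq_max]; push_cast; rfl
  rw [Int.cast_natCast] at h4
  rw [h4]
  apply max_le
  · nlinarith
  · positivity

lemma binom_point {p : ℝ} (h0 : 0 ≤ p) (h1 : p ≤ 1) (P : Finset V) (s : ℕ) {ε : ℝ} (hε : 0 < ε) :
    EE p P (fun U => if U.card = s then (1:ℝ) else 0) ≤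
      5 * ε + Real.exp (-(8 * (p * (1 - p)) * ε ^ 2 * P.card)) := by
  by_cases hε1 : 1 ≤ ε
  · have : EE p P (fun U => if U.card = s then (1:ℝ) else 0) ≤ 1 :=
      EE_le_const h0 h1 fun U _ => by split_ifs <;> norm_num
    have := Real.exp_pos (-(8 * (p * (1 - p)) * ε ^ 2 * P.card))
    linarith
  push Not at hε1
  obtain ⟨N, hN⟩ := exists_nat_gt (2 / ε)
  have hNR : (0 : ℝ) < N := lt_trans (by positivity) hN
  have hN0 : 0 < N := by exact_mod_cast hNR
  have hNε : 2 ≤ ε * N := by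
    rw [div_lt_iff₀ hε] at hN; linarith
  set X := EE p P (fun U => if (N : ℤ) ∣ ((U.card : ℤ) - s) then (1:ℝ) else 0) with hX
  have hle : EE p P (fun U => if U.card = s then (1:ℝ) else 0) ≤ X := by
    apply EE_mono h0 h1
    intro U _
    split_ifs with h h' h'
    · exact le_rfl
    · exfalso; apply h'; rw [h]; simp
    · norm_num
    · exact le_rfl
  have hXc : (N : ℂ) * (X : ℂ) = ∑ t ∈ range N, EE p P (fun U => ee (t * ((((U.card : ℤ) - s : ℤ) : ℝ) / N))) := by
    rw [← EE_sum]
    simp only [ee_orth N hN0]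
    rw [hX]
    unfold EE
    rw [Complex.ofReal_sum, mul_sum]
    refine sum_congr rfl fun U _ => ?_
    beta_reduce
    split_ifs
    · simp [mul_comm]
    · simp
  have hterm : ∀ t : ℕ, ‖EE p P (fun U => ee (t * ((((U.card : ℤ) - s : ℤ) : ℝ) / N)))‖ =
      ‖(p : ℂ) * ee ((t : ℝ) / N) + (1 - p)‖ ^ P.card := by
    intro t
    have : (fun U : Finset V => ee (t * ((((U.card : ℤ) - s : ℤ) : ℝ) / N))) =
        fun U => ee (-(t * s / N)) * ∏ u ∈ U, ee ((t : ℝ) / N) := by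
      ext U
      rw [← ee_sum, ← ee_add, sum_const, nsmul_eq_mul]
      congr 1; push_cast; ring
    rw [this, EE_mul_left, EE_prod, norm_mul, norm_ee, one_mul]
    simp [norm_pow]
  set bad := (range N).filter (fun t : ℕ => ∃ m : ℤ, |(t : ℝ) / N - m| ≤ ε) with hbad
  have hbadc : (bad.card : ℝ) ≤ 4 * ε * N + 2 := by
    have hsub : bad ⊆ (range N).filter (fun t : ℕ => |(t : ℝ) / N - 0| ≤ ε) ∪
        (range N).filter (fun t : ℕ => |(t : ℝ) / N - 1| ≤ ε) := by
      intro t ht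
      simp only [hbad, mem_filter, mem_range, mem_union] at ht ⊢
      obtain ⟨htN, m, hm⟩ := ht
      have ht1 : (t : ℝ) / N < 1 := by
        rw [div_lt_one hNR]; exact_mod_cast htN
      have ht0 : 0 ≤ (t : ℝ) / N := by positivity
      have hm' := abs_le.mp hm
      have m1 : m < 2 := by
        have : (m : ℝ) < 2 := by linarith
        exact_mod_cast this
      have m0 : -1 < m := by
        have : (-1 : ℝ) < m := by linarith
        exact_mod_cast this
      have : m = 0 ∨ m = 1 := by omega
      rcases this with rfl | rfl
      · left; exact ⟨htN, by simpa using hm⟩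
      · right; exact ⟨htN, by simpa using hm⟩
    have h1 := card_near_le N hN0 0 ε hε.le
    have h2 := card_near_le N hN0 1 ε hε.le
    have h3 : (bad.card : ℝ) ≤ _ := Nat.cast_le.mpr ((card_le_card hsub).trans (card_union_le _ _))
    push_cast at h3
    linarith
  set E := Real.exp (-(8 * (p * (1 - p)) * ε ^ 2 * P.card)) with hE
  have hbound : ∀ t ∈ range N, ‖EE p P (fun U => ee (t * ((((U.card : ℤ) - s : ℤ) : ℝ) / N)))‖ ≤
      (if t ∈ bad then 1 else 0) + E := by
    intro t ht
    rw [hterm]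
    split_ifs with hb
    · have := pow_le_one₀ (n := P.card) (norm_nonneg _) (norm_bern_le_one h0 h1 ((t : ℝ) / N))
      have := Real.exp_pos (-(8 * (p * (1 - p)) * ε ^ 2 * P.card))
      linarith
    · have hn : ¬ ∃ m : ℤ, |(t : ℝ) / N - m| ≤ ε := by
        intro h; apply hb; rw [hbad, mem_filter]; exact ⟨ht, h⟩
      have := pow_le_pow_left₀ (norm_nonneg _) (norm_bern_le h0 h1 hε.le hn) P.card
      refine this.trans (le_of_eq ?_)
      rw [← Real.exp_nat_mul, hE, zero_add]; congr 1; ring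
  have hfin : (N : ℝ) * X ≤ 4 * ε * N + 2 + N * E := by
    have hXn : 0 ≤ X := EE_nonneg h0 h1 fun U _ => by split_ifs <;> norm_num
    have : (N : ℝ) * X = ‖(N : ℂ) * (X : ℂ)‖ := by
      rw [norm_mul, Complex.norm_real, Complex.norm_natCast, Real.norm_of_nonneg hXn]
    rw [this, hXc]
    refine (norm_sum_le _ _).trans ((sum_le_sum hbound).trans ?_)
    rw [sum_add_distrib, sum_const, card_range, nsmul_eq_mul, sum_ite_mem]
    have hb2 : range N ∩ bad = bad := inter_eq_right.mpr (filter_subset _ _)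
    rw [hb2]
    simp only [sum_const, nsmul_eq_mul, mul_one]
    linarith
  have : (N : ℝ) * X ≤ N * (5 * ε + E) := by nlinarith
  exact hle.trans (le_of_mul_le_mul_left this hNR)

lemma prod_point {ι : Type*} {p : ℝ} (h0 : 0 ≤ p) (h1 : p ≤ 1) {ρ : ℝ} (hρ : 0 ≤ ρ)
    (P : ι → Finset V) (hd : ∀ i j, i ≠ j → Disjoint (P i) (P j))
    (hP : ∀ j s, EE p (P j) (fun U => if U.card = s then (1:ℝ) else 0) ≤ ρ)
    (s : ι → ℕ) (J : Finset ι) :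
    EE p (J.biUnion P) (fun U => if ∀ j ∈ J, (U ∩ P j).card = s j then (1:ℝ) else 0) ≤ ρ ^ J.card := by
  induction J using Finset.induction_on with
  | empty => simp [EE_empty]
  | insert j J hj ih =>
    have hdis : Disjoint (P j) (J.biUnion P) := by
      rw [disjoint_biUnion_right]
      intro i hi; apply hd; rintro rfl; exact hj hi
    rw [biUnion_insert, EE_union p hdis, card_insert_of_notMem hj, pow_succ]
    have step : EE p (P j) (fun U => EE p (J.biUnion P) (fun W =>
        if ∀ i ∈ insert j J, ((U ∪ W) ∩ P i).card = s i then (1:ℝ) else 0)) ≤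
        EE p (P j) (fun U => ρ ^ J.card * (if U.card = s j then (1:ℝ) else 0)) := by
      apply EE_mono h0 h1
      intro U hU
      have : EE p (J.biUnion P) (fun W =>
        if ∀ i ∈ insert j J, ((U ∪ W) ∩ P i).card = s i then (1:ℝ) else 0) ≤
        EE p (J.biUnion P) (fun W => (if U.card = s j then (1:ℝ) else 0) *
          (if ∀ i ∈ J, (W ∩ P i).card = s i then (1:ℝ) else 0)) := by
        apply EE_mono h0 h1
        intro W hW
        by_cases h : ∀ i ∈ insert j J, ((U ∪ W) ∩ P i).card = s i
        · have a1 : (U ∪ W) ∩ P j = U := by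
            rw [union_inter_distrib_right, inter_eq_left.mpr hU]
            have : W ∩ P j = ∅ := by
              rw [← disjoint_iff_inter_eq_empty]
              exact disjoint_of_subset_left hW hdis.symm
            rw [this, union_empty]
          have a2 : ∀ i ∈ J, (U ∪ W) ∩ P i = W ∩ P i := by
            intro i hi
            rw [union_inter_distrib_right]
            have : U ∩ P i = ∅ := by
              rw [← disjoint_iff_inter_eq_empty]
              refine disjoint_of_subset_left hU (hd j i ?_)
              rintro rfl; exact hj hi
            rw [this, empty_union]
          have b1 : U.card = s j := by rw [← h j (mem_insert_self _ _), a1]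
          have b2 : ∀ i ∈ J, (W ∩ P i).card = s i := by
            intro i hi
            rw [← h i (mem_insert_of_mem hi), a2 i hi]
          rw [if_pos h, if_pos b1, if_pos b2]; norm_num
        · rw [if_neg h]
          split_ifs <;> norm_num
      refine this.trans ?_
      rw [EE_mul_left, mul_comm]
      apply mul_le_mul_of_nonneg_right ih
      split_ifs <;> norm_num
    refine step.trans ?_
    rw [EE_mul_left]
    exact mul_le_mul_of_nonneg_left (hP j _) (by positivity)

lemma good_point {M : V → V → ℤ} {B : Finset V} {t L : ℕ} {a : Fin L → V} (ha : GoodT M B t a)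
    {p : ℝ} (h0 : 0 ≤ p) (h1 : p ≤ 1) {ρ : ℝ} (hρ : 0 ≤ ρ)
    (hP : ∀ P : Finset V, t ≤ P.card → ∀ s,
      EE p P (fun U => if U.card = s then (1:ℝ) else 0) ≤ ρ) (c : Fin L → ℤ) :
    EE p B (fun U => if ∀ i, ∑ y ∈ U, M (a i) y = c i then (1:ℝ) else 0) ≤ ρ ^ L := by
  obtain ⟨v, hv, hp⟩ := ha
  set P : Fin L → Finset V := fun j => B.filter (fun b => ∀ i, M (a i) b = v j i) with hPdef
  have hd : ∀ i j, i ≠ j → Disjoint (P i) (P j) := by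
    intro i j hij
    rw [disjoint_left]
    intro b hbi hbj
    simp only [hPdef, mem_filter] at hbi hbj
    have hz := hv (Pi.single i 1 - Pi.single j 1) (by
      intro k
      simp only [Pi.sub_apply, sub_mul, sum_sub_distrib, Pi.single_apply, ite_mul, one_mul,
        zero_mul, sum_ite_eq', mem_univ, if_true]
      rw [← hbi.2 k, ← hbj.2 k, sub_self])
    have := congrFun hz i
    simp [Pi.single_apply, hij] at this
  set D := (univ : Finset (Fin L)).biUnion P with hD
  have hDB : D ⊆ B := by
    rw [hD, biUnion_subset]
    intro j _; exact filter_subset _ _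
  have hBD : B = (B \ D) ∪ D := (sdiff_union_of_subset hDB).symm
  rw [hBD, EE_union p sdiff_disjoint]
  apply EE_le_const h0 h1
  intro W hW
  have hdW : ∀ U ⊆ D, Disjoint W U := fun U hU =>
    disjoint_of_subset_left hW (disjoint_of_subset_right hU sdiff_disjoint)
  have hsum : ∀ U ⊆ D, ∀ i, ∑ y ∈ U, M (a i) y = ∑ j, ((U ∩ P j).card : ℤ) * v j i := by
    intro U hU i
    have hUu : U = (univ : Finset (Fin L)).biUnion (fun j => U ∩ P j) := by
      rw [← inter_biUnion, ← hD, inter_eq_left.mpr hU]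
    conv_lhs => rw [hUu]
    rw [sum_biUnion]
    · refine sum_congr rfl fun j _ => ?_
      rw [← nsmul_eq_mul, ← sum_const]
      refine sum_congr rfl fun y hy => ?_
      exact (mem_filter.mp (mem_inter.mp hy).2).2 i
    · intro x _ y _ hxy
      exact disjoint_of_subset_left inter_subset_right (disjoint_of_subset_right inter_subset_right (hd x y hxy))
  by_cases hex : ∃ U0 ⊆ D, ∀ i, ∑ y ∈ W ∪ U0, M (a i) y = c i
  · obtain ⟨U0, hU0, hU0c⟩ := hex
    have hpp := prod_point h0 h1 hρ P hd (fun j => hP (P j) (hp j)) (fun j => (U0 ∩ P j).card) univ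
    rw [card_univ, Fintype.card_fin] at hpp
    refine le_trans (EE_mono h0 h1 ?_) hpp
    intro U hU
    by_cases h : ∀ i, ∑ y ∈ W ∪ U, M (a i) y = c i
    · have heq : ∀ j ∈ (univ : Finset (Fin L)), (U ∩ P j).card = (U0 ∩ P j).card := by
        have hz := hv (fun j => ((U ∩ P j).card : ℤ) - ((U0 ∩ P j).card : ℤ)) (by
          intro i
          have e1 := h i
          have e2 := hU0c i
          rw [sum_union (hdW U hU), hsum U hU] at e1
          rw [sum_union (hdW U0 hU0), hsum U0 hU0] at e2
          simp only [sub_mul, sum_sub_distrib]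
          linarith)
        intro j _
        have := congrFun hz j
        simp only [Pi.zero_apply] at this
        omega
      rw [if_pos h, if_pos heq]
    · rw [if_neg h]; split_ifs <;> norm_num
  · push Not at hex
    have : EE p D (fun U => if ∀ i, ∑ y ∈ W ∪ U, M (a i) y = c i then (1:ℝ) else 0) ≤ 0 := by
      apply EE_le_const h0 h1
      intro U hU
      rw [if_neg]
      push Not
      exact hex U hU
    exact this.trans (by positivity)

lemma tail_one {p : ℝ} (h0 : 0 ≤ p) (h1 : p ≤ 1) (B : Finset V) (m : V → ℤ)
    (hm : ∀ y, m y = 0 ∨ m y = 1) (Z : ℝ) (hZ : 0 ≤ Z) (n : ℝ) (hn : 0 < n) (hB : (B.card : ℝ) ≤ n) :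
    EE p B (fun b => EE p B (fun b' =>
      if Z < ((∑ y ∈ b, m y - ∑ y ∈ b', m y : ℤ) : ℝ) then (1:ℝ) else 0)) ≤
      Real.exp (-(Z ^ 2 / (2 * n))) := by
  set l := Z / n with hl
  have hl0 : 0 ≤ l := by positivity
  have step : EE p B (fun b => EE p B (fun b' =>
      if Z < ((∑ y ∈ b, m y - ∑ y ∈ b', m y : ℤ) : ℝ) then (1:ℝ) else 0)) ≤
      EE p B (fun b => EE p B (fun b' => Real.exp (-(l * Z)) * ((∏ y ∈ b, Real.exp (l * m y)) *
        ∏ y ∈ b', Real.exp (-(l * m y))))) := by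
    refine EE_mono h0 h1 fun b _ => EE_mono h0 h1 fun b' _ => ?_
    rw [← Real.exp_sum, ← Real.exp_sum, ← Real.exp_add, ← Real.exp_add]
    split_ifs with h
    · rw [← Real.exp_zero]
      apply Real.exp_le_exp.mpr
      push_cast at h
      rw [sum_neg_distrib, ← mul_sum, ← mul_sum]
      nlinarith
    · exact (Real.exp_pos _).le
  refine step.trans ?_
  have e1 : EE p B (fun b => EE p B (fun b' => Real.exp (-(l * Z)) * ((∏ y ∈ b, Real.exp (l * m y)) *
        ∏ y ∈ b', Real.exp (-(l * m y))))) = Real.exp (-(l * Z)) *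
        ∏ y ∈ B, ((p * Real.exp (l * m y) + (1 - p)) * (p * Real.exp (-(l * m y)) + (1 - p))) := by
    simp only [EE_mul_left]
    congr 1
    simp only [mul_comm _ (EE p B _)]
    rw [EE_mul_left, EE_prod, EE_prod, prod_mul_distrib, mul_comm]
    simp
  rw [e1]
  have e2 : ∏ y ∈ B, ((p * Real.exp (l * m y) + (1 - p)) * (p * Real.exp (-(l * m y)) + (1 - p)))
      ≤ ∏ y ∈ B, Real.exp (l ^ 2 / 2) := by
    have hq : 0 ≤ 1 - p := by linarith
    refine prod_le_prod (fun y _ => by positivity) fun y _ => ?_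
    set x := l * (m y : ℝ) with hx
    have hxe : x ^ 2 ≤ l ^ 2 := by
      rcases hm y with h | h
      · rw [hx, h]; simp; positivity
      · rw [hx, h]; simp
    have hc := Real.cosh_le_exp_half_sq x
    have hc1 := Real.one_le_cosh x
    rw [Real.cosh_eq] at hc hc1
    have hexp : Real.exp x * Real.exp (-x) = 1 := by rw [← Real.exp_add]; simp
    have h3 : Real.exp (x ^ 2 / 2) ≤ Real.exp (l ^ 2 / 2) := Real.exp_le_exp.mpr (by linarith)
    have h4 : p * (1 - p) ≤ 1 / 4 := by nlinarith [sq_nonneg (p - 1/2)]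
    have h5 : 0 ≤ p * (1 - p) := mul_nonneg h0 hq
    have h6 : (p * Real.exp x + (1 - p)) * (p * Real.exp (-x) + (1 - p)) =
      1 + p * (1 - p) * (Real.exp x + Real.exp (-x) - 2) := by
      linear_combination p ^ 2 * hexp
    rw [h6]
    nlinarith
  rw [prod_const, ← Real.exp_nat_mul] at e2
  refine (mul_le_mul_of_nonneg_left e2 (Real.exp_pos _).le).trans ?_
  rw [← Real.exp_add]
  apply Real.exp_le_exp.mpr
  have : (B.card : ℝ) * (l ^ 2 / 2) ≤ n * (l ^ 2 / 2) := mul_le_mul_of_nonneg_right hB (by positivity)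
  have e3 : l * Z = Z ^ 2 / n := by rw [hl]; field_simp
  have e4 : n * (l ^ 2 / 2) = Z ^ 2 / n / 2 := by rw [hl]; field_simp
  have e5 : Z ^ 2 / (2 * n) = Z ^ 2 / n / 2 := by field_simp
  linarith

/-- integers in a window that `θ` maps near integers -/
noncomputable def nearSet (θ ε : ℝ) (Z : ℕ) : Finset ℤ :=
  (Icc (-(Z : ℤ)) Z).filter (fun z => ∃ m : ℤ, |θ * z - m| ≤ ε)

lemma tuple_near {M : V → V → ℤ} (hM : ∀ a b, M a b = 0 ∨ M a b = 1)
    {B : Finset V} {t L : ℕ} {a : Fin L → V} (ha : GoodT M B t a)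
    {p : ℝ} (h0 : 0 ≤ p) (h1 : p ≤ 1) {ρ : ℝ} (hρ : 0 ≤ ρ)
    (hP : ∀ P : Finset V, t ≤ P.card → ∀ s,
      EE p P (fun U => if U.card = s then (1:ℝ) else 0) ≤ ρ)
    (Z : ℕ) (n : ℝ) (hn : 0 < n) (hB : (B.card : ℝ) ≤ n) (θ ε : ℝ) :
    EE p B (fun b => EE p B (fun b' =>
      if ∀ i, ∃ m : ℤ, |θ * ((∑ y ∈ b, M (a i) y - ∑ y ∈ b', M (a i) y : ℤ) : ℝ) - m| ≤ ε
        then (1:ℝ) else 0)) ≤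
      L * (2 * Real.exp (-((Z:ℝ) ^ 2 / (2 * n)))) + (((nearSet θ ε Z).card : ℝ) * ρ) ^ L := by
  set z : Fin L → Finset V → ℤ := fun i b => ∑ y ∈ b, M (a i) y with hz
  have step : EE p B (fun b => EE p B (fun b' =>
      if ∀ i, ∃ m : ℤ, |θ * ((z i b - z i b' : ℤ) : ℝ) - m| ≤ ε then (1:ℝ) else 0)) ≤
      EE p B (fun b => EE p B (fun b' =>
        (∑ i, ((if (Z:ℝ) < ((z i b - z i b' : ℤ) : ℝ) then (1:ℝ) else 0) +
          (if (Z:ℝ) < ((z i b' - z i b : ℤ) : ℝ) then (1:ℝ) else 0))) +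
        ∑ u ∈ Fintype.piFinset (fun _ : Fin L => nearSet θ ε Z),
          (if ∀ i, z i b = u i + z i b' then (1:ℝ) else 0))) := by
    refine EE_mono h0 h1 fun b _ => EE_mono h0 h1 fun b' _ => ?_
    have n1 : ∀ i, (0:ℝ) ≤ ((if (Z:ℝ) < ((z i b - z i b' : ℤ) : ℝ) then (1:ℝ) else 0) +
          (if (Z:ℝ) < ((z i b' - z i b : ℤ) : ℝ) then (1:ℝ) else 0)) := by
      intro i; split_ifs <;> norm_num
    have n2 : ∀ u : Fin L → ℤ, (0:ℝ) ≤ (if ∀ i, z i b = u i + z i b' then (1:ℝ) else 0) := by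
      intro i; split_ifs <;> norm_num
    have n3 := sum_nonneg (s := univ) (fun i _ => n1 i)
    have n4 := sum_nonneg (s := Fintype.piFinset (fun _ : Fin L => nearSet θ ε Z)) (fun i _ => n2 i)
    split_ifs with h
    · by_cases hin : ∀ i, (z i b - z i b') ∈ Icc (-(Z:ℤ)) Z
      · have hmem : (fun i => z i b - z i b') ∈ Fintype.piFinset (fun _ : Fin L => nearSet θ ε Z) := by
          rw [Fintype.mem_piFinset]
          intro i
          rw [nearSet, mem_filter]
          exact ⟨hin i, h i⟩
        have := single_le_sum (fun i _ => n2 i) hmem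
        rw [if_pos (by intro i; ring)] at this
        linarith
      · push Not at hin
        obtain ⟨i, hi⟩ := hin
        have := single_le_sum (fun i _ => n1 i) (mem_univ i)
        have h1 : (1:ℝ) ≤ ((if (Z:ℝ) < ((z i b - z i b' : ℤ) : ℝ) then (1:ℝ) else 0) +
          (if (Z:ℝ) < ((z i b' - z i b : ℤ) : ℝ) then (1:ℝ) else 0)) := by
          rw [mem_Icc, not_and_or] at hi
          rcases hi with hi | hi
          · have : (Z:ℝ) < ((z i b' - z i b : ℤ) : ℝ) := by
              have : (Z:ℤ) < z i b' - z i b := by omega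
              exact_mod_cast this
            rw [if_pos this]; split_ifs <;> norm_num
          · have : (Z:ℝ) < ((z i b - z i b' : ℤ) : ℝ) := by
              have : (Z:ℤ) < z i b - z i b' := by omega
              exact_mod_cast this
            rw [if_pos this]; split_ifs <;> norm_num
        linarith
    · linarith
  refine step.trans ?_
  simp only [EE_add, EE_sum]
  apply add_le_add
  · have : ∀ i ∈ (univ : Finset (Fin L)),
        (EE p B fun b => EE p B fun b' => if (Z:ℝ) < ((z i b - z i b' : ℤ) : ℝ) then (1:ℝ) else 0) +
        (EE p B fun b => EE p B fun b' => if (Z:ℝ) < ((z i b' - z i b : ℤ) : ℝ) then (1:ℝ) else 0) ≤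
        2 * Real.exp (-((Z:ℝ) ^ 2 / (2 * n))) := by
      intro i _
      have t1 := tail_one h0 h1 B (M (a i)) (hM (a i)) Z (by positivity) n hn hB
      have t2 := t1
      rw [EE_comm] at t2
      linarith
    refine (sum_le_sum this).trans ?_
    simp
  · have : ∀ u ∈ Fintype.piFinset (fun _ : Fin L => nearSet θ ε Z),
        (EE p B fun b => EE p B fun b' => if ∀ i, z i b = u i + z i b' then (1:ℝ) else 0) ≤ ρ ^ L := by
      intro u _
      rw [EE_comm]
      apply EE_le_const h0 h1
      intro b' _
      exact good_point ha h0 h1 hρ hP (fun i => u i + z i b')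
    refine (sum_le_sum this).trans ?_
    rw [sum_const, Fintype.card_piFinset, nsmul_eq_mul, mul_pow]
    simp

/-- the characteristic function bound, after decoupling -/
lemma family_bound {M : V → V → ℤ} (hM : ∀ a b, M a b = 0 ∨ M a b = 1)
    {A B : Finset V} {t L m : ℕ} (τ : Fin m → Fin L → V) (hτA : ∀ s i, τ s i ∈ A)
    (hτ : ∀ s, GoodT M B t (τ s)) (hτd : ∀ s s' i i', τ s i = τ s' i' → s = s')
    {p : ℝ} (h0 : 0 ≤ p) (h1 : p ≤ 1) {ρ : ℝ} (hρ : 0 ≤ ρ)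
    (hP : ∀ P : Finset V, t ≤ P.card → ∀ s,
      EE p P (fun U => if U.card = s then (1:ℝ) else 0) ≤ ρ)
    (Z : ℕ) (n : ℝ) (hn : 0 < n) (hB : (B.card : ℝ) ≤ n) (θ ε : ℝ) (hε : 0 ≤ ε) :
    EE p B (fun b => EE p B (fun b' =>
        ∏ x ∈ A, ‖(p : ℂ) * ee (∑ y ∈ b, θ * (M x y : ℝ) - ∑ y ∈ b', θ * (M x y : ℝ)) + (1 - p)‖)) ≤
      Real.exp (-(8 * (p * (1 - p)) * ε ^ 2 * m)) +
      m * (L * (2 * Real.exp (-((Z:ℝ) ^ 2 / (2 * n)))) + (((nearSet θ ε Z).card : ℝ) * ρ) ^ L) := by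
  have step : EE p B (fun b => EE p B (fun b' =>
        ∏ x ∈ A, ‖(p : ℂ) * ee (∑ y ∈ b, θ * (M x y : ℝ) - ∑ y ∈ b', θ * (M x y : ℝ)) + (1 - p)‖)) ≤
      EE p B (fun b => EE p B (fun b' => Real.exp (-(8 * (p * (1 - p)) * ε ^ 2 * m)) +
        ∑ s : Fin m, (if ∀ i, ∃ k : ℤ,
          |θ * ((∑ y ∈ b, M (τ s i) y - ∑ y ∈ b', M (τ s i) y : ℤ) : ℝ) - k| ≤ ε
        then (1:ℝ) else 0))) := by
    refine EE_mono h0 h1 fun b _ => EE_mono h0 h1 fun b' _ => ?_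
    set α : V → ℝ := fun x => θ * ((∑ y ∈ b, M x y - ∑ y ∈ b', M x y : ℤ) : ℝ) with hα
    have e1 : ∀ x, ∑ y ∈ b, θ * (M x y : ℝ) - ∑ y ∈ b', θ * (M x y : ℝ) = α x := by
      intro x; rw [hα]; push_cast; rw [← mul_sum, ← mul_sum]; ring
    simp only [e1]
    have n1 : ∀ s : Fin m, (0:ℝ) ≤ (if ∀ i, ∃ k : ℤ, |α (τ s i) - k| ≤ ε then (1:ℝ) else 0) := by
      intro s; split_ifs <;> norm_num
    have n2 := sum_nonneg (s := univ) (fun i _ => n1 i)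
    have hexp := Real.exp_pos (-(8 * (p * (1 - p)) * ε ^ 2 * m))
    by_cases hex : ∃ s : Fin m, ∀ i, ∃ k : ℤ, |α (τ s i) - k| ≤ ε
    · obtain ⟨s, hs⟩ := hex
      have h2 := single_le_sum (fun i _ => n1 i) (mem_univ s)
      rw [if_pos hs] at h2
      have h3 : ∏ x ∈ A, ‖(p : ℂ) * ee (α x) + (1 - p)‖ ≤ 1 :=
        prod_le_one (fun _ _ => norm_nonneg _) (fun x _ => norm_bern_le_one h0 h1 _)
      linarith
    · push Not at hex
      choose i hi using hex
      set W := (univ : Finset (Fin m)).image (fun s => τ s (i s)) with hW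
      have hWA : W ⊆ A := by
        intro x hx
        obtain ⟨s, _, rfl⟩ := mem_image.mp hx
        exact hτA _ _
      have hWc : W.card = m := by
        rw [hW, card_image_of_injective, card_univ, Fintype.card_fin]
        intro s s' h
        exact hτd _ _ _ _ h
      have h3 : ∏ x ∈ A, ‖(p : ℂ) * ee (α x) + (1 - p)‖ ≤ ∏ x ∈ W, ‖(p : ℂ) * ee (α x) + (1 - p)‖ :=
        prod_le_prod_of_subset_of_le_one hWA (fun _ _ => norm_nonneg _)
          (fun x _ _ => norm_bern_le_one h0 h1 _)
      have h4 : ∏ x ∈ W, ‖(p : ℂ) * ee (α x) + (1 - p)‖ ≤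
          ∏ x ∈ W, Real.exp (-(8 * (p * (1 - p)) * ε ^ 2)) := by
        refine prod_le_prod (fun _ _ => norm_nonneg _) fun x hx => ?_
        obtain ⟨s, _, rfl⟩ := mem_image.mp hx
        apply norm_bern_le h0 h1 hε
        push Not
        exact hi s
      rw [prod_const, hWc, ← Real.exp_nat_mul] at h4
      have e5 : (m : ℝ) * -(8 * (p * (1 - p)) * ε ^ 2) = -(8 * (p * (1 - p)) * ε ^ 2 * m) := by ring
      rw [e5] at h4
      linarith
  refine step.trans ?_
  simp only [EE_add, EE_const, EE_sum]
  apply add_le_add le_rfl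
  refine (sum_le_sum fun s _ => tuple_near hM (hτ s) h0 h1 hρ hP Z n hn hB θ ε).trans ?_
  rw [sum_const, card_univ, Fintype.card_fin, nsmul_eq_mul]

end AntiPart

section ArithPart
open Finset Classical

lemma near_structured (θ ε : ℝ) (Z H w : ℕ) (hH : 1 ≤ H) (hw : 1 ≤ w) (hε : 0 ≤ ε)
    (hεH : 16 * ε * H ≤ 1) (hbig : (2 * Z / H + 1) * w < (nearSet θ ε Z).card) :
    ∃ r : ℚ, r.den * w ≤ H ∧ |θ - r| ≤ 2 * ε / w := by
  have hmap : ∀ z ∈ nearSet θ ε Z, (z + Z).toNat / H ∈ range (2 * Z / H + 1) := by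
    intro z hz
    simp only [nearSet, mem_filter, mem_Icc] at hz
    rw [mem_range, Nat.lt_succ_iff]
    apply Nat.div_le_div_right
    omega
  obtain ⟨y, -, hy⟩ := exists_lt_card_fiber_of_mul_lt_card_of_maps_to hmap (by simpa using hbig)
  set F := (nearSet θ ε Z).filter (fun z : ℤ => (z + Z).toNat / H = y) with hF
  have hFne : F.Nonempty := card_pos.mp (by omega)
  set z0 := F.min' hFne with hz0
  set z1 := F.max' hFne with hz1
  have hz0F : z0 ∈ F := min'_mem _ _
  have hz1F : z1 ∈ F := max'_mem _ _
  have hmem : ∀ z ∈ F, (-(Z:ℤ) ≤ z) ∧ (z + Z).toNat / H = y ∧ ∃ m : ℤ, |θ * z - m| ≤ ε := by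
    intro z hz
    simp only [hF, nearSet, mem_filter, mem_Icc] at hz
    exact ⟨hz.1.1.1, hz.2, hz.1.2⟩
  have hlt : ∀ z ∈ F, 0 ≤ z - z0 ∧ z - z0 < H := by
    intro z hz
    have h1 := hmem z hz
    have h2 := hmem z0 hz0F
    refine ⟨by have := min'_le F z hz; omega, ?_⟩
    have e1 := Nat.div_add_mod (z + Z).toNat H
    have e2 := Nat.div_add_mod (z0 + Z).toNat H
    have e3 := Nat.mod_lt (z + Z).toNat hH
    rw [h1.2.1] at e1
    rw [h2.2.1] at e2
    omega
  obtain ⟨r, hr, hrd⟩ := Real.exists_rat_abs_sub_le_and_den_le θ (n := 4 * H) (by omega)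
  have hq : 0 < r.den := r.den_pos
  have hqR : (0:ℝ) < r.den := by exact_mod_cast hq
  have hHR : (1:ℝ) ≤ H := by exact_mod_cast hH
  have hwR : (1:ℝ) ≤ w := by exact_mod_cast hw
  have hrR : (r : ℝ) * r.den = r.num := by
    have := Rat.mul_den_eq_num r
    exact_mod_cast this
  have key : ∀ z ∈ F, (r.den : ℤ) ∣ (z - z0) ∧ |(θ - r) * ((z - z0 : ℤ) : ℝ)| ≤ 2 * ε := by
    intro z hz
    obtain ⟨m1, hm1⟩ := (hmem z hz).2.2
    obtain ⟨m0, hm0⟩ := (hmem z0 hz0F).2.2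
    obtain ⟨d0, dH⟩ := hlt z hz
    set d := z - z0 with hd
    have hdR : (0:ℝ) ≤ (d:ℝ) := by exact_mod_cast d0
    have dHR : (d:ℝ) < H := by exact_mod_cast dH
    have hde : (d:ℝ) = z - z0 := by rw [hd]; push_cast; ring
    have h2 : |θ * d - ((m1 - m0 : ℤ) : ℝ)| ≤ 2 * ε := by
      have : θ * d - ((m1 - m0 : ℤ) : ℝ) = (θ * z - m1) - (θ * z0 - m0) := by
        rw [hde]; push_cast; ring
      rw [this]
      exact (abs_sub _ _).trans (by linarith)
    set m := m1 - m0 with hm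
    have h3 : |θ - r| * r.den ≤ 1 / (4 * H + 1) := by
      push_cast at hr
      calc |θ - r| * r.den ≤ 1 / ((4 * H + 1) * r.den) * r.den := by gcongr
        _ = _ := by field_simp
    have h4 : |((d * r.num - m * r.den : ℤ) : ℝ)| < 1 := by
      have e : ((d * r.num - m * r.den : ℤ) : ℝ) = -(d * ((θ - r) * r.den)) + (θ * d - m) * r.den := by
        push_cast; rw [← hrR]; ring
      rw [e]
      have a1 : |(-(d * ((θ - r) * r.den)) : ℝ)| ≤ H * (1 / (4 * H + 1)) := by
        rw [abs_neg, abs_mul, abs_mul, abs_of_nonneg hdR, abs_of_pos hqR]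
        gcongr
      have a2 : |(θ * d - m) * r.den| ≤ 2 * ε * (4 * H) := by
        rw [abs_mul, abs_of_pos hqR]
        have : (r.den : ℝ) ≤ 4 * H := by exact_mod_cast hrd
        gcongr
      have a3 : (H:ℝ) * (1 / (4 * H + 1)) ≤ 1 / 4 := by
        rw [mul_one_div, div_le_div_iff₀ (by positivity) (by positivity)]; linarith
      have := abs_add_le (-(d * ((θ - r) * r.den)) : ℝ) ((θ * d - m) * r.den)
      linarith
    have h5 : d * r.num = m * r.den := by
      have : |d * r.num - m * r.den| < 1 := by exact_mod_cast h4
      have := Int.abs_lt_one_iff.mp this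
      omega
    have h6 : (r.den : ℤ) ∣ d := by
      have hcop : IsCoprime (r.den : ℤ) r.num := by
        rw [Int.isCoprime_iff_gcd_eq_one]
        have := r.reduced
        rw [Nat.coprime_comm] at this
        simpa [Int.gcd] using this
      exact hcop.dvd_of_dvd_mul_right ⟨m, by rw [h5]; ring⟩
    refine ⟨h6, ?_⟩
    have h7 : (m : ℝ) = r * d := by
      have h5R : (d:ℝ) * r.num = m * r.den := by exact_mod_cast h5
      rw [← hrR] at h5R
      have : (m:ℝ) * r.den = (r * d) * r.den := by linarith
      exact mul_right_cancel₀ hqR.ne' this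
    rw [h7] at h2
    convert h2 using 2; ring
  have hcard : F.card ≤ (Icc (0:ℤ) ((z1 - z0) / r.den)).card := by
    apply card_le_card_of_injOn (fun z : ℤ => (z - z0) / r.den)
    · intro z hz
      simp only [coe_Icc, Set.mem_Icc]
      refine ⟨Int.ediv_nonneg (hlt z hz).1 (by positivity), ?_⟩
      apply Int.ediv_le_ediv (by positivity)
      have := le_max' F z hz
      omega
    · intro a ha b hb h
      simp only at h
      have e1 := Int.ediv_mul_cancel (key a ha).1
      have e2 := Int.ediv_mul_cancel (key b hb).1
      rw [h] at e1
      omega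
  rw [Int.card_Icc] at hcard
  have hwq : (w : ℤ) ≤ (z1 - z0) / r.den := by
    have : 0 ≤ (z1 - z0) / (r.den : ℤ) := Int.ediv_nonneg (hlt z1 hz1F).1 (by positivity)
    omega
  have hwq' : (w : ℤ) * r.den ≤ z1 - z0 := by
    rw [Int.le_ediv_iff_mul_le (by positivity)] at hwq
    exact hwq
  refine ⟨r, ?_, ?_⟩
  · have := (hlt z1 hz1F).2
    have : ((r.den * w : ℕ) : ℤ) ≤ H := by push_cast; linarith
    exact_mod_cast this
  · have h := (key z1 hz1F).2
    have hd : (w:ℝ) ≤ ((z1 - z0 : ℤ) : ℝ) := by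
      have : (w:ℤ) ≤ z1 - z0 := by
        have : (1:ℤ) ≤ r.den := by exact_mod_cast hq
        nlinarith
      exact_mod_cast this
    rw [abs_mul, abs_of_nonneg (by linarith : (0:ℝ) ≤ ((z1 - z0 : ℤ) : ℝ))] at h
    rw [le_div_iff₀ (by linarith)]
    calc |θ - r| * w ≤ |θ - r| * ((z1 - z0 : ℤ) : ℝ) := by gcongr
      _ ≤ _ := h

lemma card_bad_le (N : ℕ) (hN : 0 < N) (ε : ℝ) (Z H w : ℕ) (hH : 1 ≤ H) (hw : 1 ≤ w) (hε : 0 ≤ ε)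
    (hεH : 16 * ε * H ≤ 1) :
    (((range N).filter (fun t : ℕ => (2 * Z / H + 1) * w < (nearSet ((t : ℝ) / N) ε Z).card)).card : ℝ)
      ≤ ((H / w : ℕ) * (3 * (H / w : ℕ) + 1)) * (2 * (2 * ε / w) * N + 1) := by
  set Q := H / w with hQ
  have hwR : (1:ℝ) ≤ w := by exact_mod_cast hw
  have hHR : (1:ℝ) ≤ H := by exact_mod_cast hH
  have hκ : 0 ≤ 2 * ε / w := by positivity
  have hκ1 : 2 * ε / w ≤ 1 := by
    rw [div_le_one (by linarith)]
    nlinarith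
  have hsub : (range N).filter (fun t : ℕ => (2 * Z / H + 1) * w < (nearSet ((t : ℝ) / N) ε Z).card) ⊆
      (Icc 1 Q ×ˢ Icc (-(Q:ℤ)) (2 * Q)).biUnion (fun qa =>
        (range N).filter (fun t : ℕ => |(t : ℝ) / N - (qa.2 : ℝ) / (qa.1 : ℝ)| ≤ 2 * ε / w)) := by
    intro t ht
    rw [mem_filter] at ht
    obtain ⟨r, h1, h2⟩ := near_structured _ ε Z H w hH hw hε hεH ht.2
    rw [mem_biUnion]
    have hqQ : r.den ≤ Q := by rw [hQ, Nat.le_div_iff_mul_le (by omega)]; exact h1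
    have hqR : (0:ℝ) < r.den := by exact_mod_cast r.den_pos
    have hr : (r : ℝ) = (r.num : ℝ) / r.den := by
      have := Rat.num_div_den r
      exact_mod_cast this.symm
    have htN : (t : ℝ) / N ≤ 1 := by
      rw [div_le_one (by exact_mod_cast hN)]
      exact_mod_cast (mem_range.mp ht.1).le
    have htN0 : 0 ≤ (t : ℝ) / N := by positivity
    have hab := abs_le.mp h2
    have hrl : -1 ≤ (r:ℝ) := by linarith
    have hru : (r:ℝ) ≤ 2 := by linarith
    rw [hr] at hrl hru
    rw [le_div_iff₀ hqR] at hrl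
    rw [div_le_iff₀ hqR] at hru
    have b1 : (-1 : ℤ) * r.den ≤ r.num := by exact_mod_cast hrl
    have b2 : r.num ≤ (2 : ℤ) * r.den := by exact_mod_cast hru
    refine ⟨(r.den, r.num), ?_, ?_⟩
    · rw [mem_product, mem_Icc, mem_Icc]
      have := r.den_pos
      dsimp only
      omega
    · rw [mem_filter]
      refine ⟨ht.1, ?_⟩
      rw [← hr]; exact h2
  have h1 := (card_le_card hsub).trans card_biUnion_le
  refine (Nat.cast_le.mpr h1).trans ?_
  push_cast
  refine (sum_le_sum (fun qa _ => card_near_le N hN _ _ hκ)).trans ?_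
  rw [sum_const, card_product, Nat.card_Icc, Int.card_Icc, nsmul_eq_mul]
  have : (2 * (Q:ℤ) + 1 - -(Q:ℤ)).toNat = 3 * Q + 1 := by omega
  rw [this]
  push_cast
  simp

end ArithPart

section SlicePart
open Finset Classical

set_option linter.unusedSectionVars false

variable {V : Type*} [Fintype V]

lemma EE_ofReal (p : ℝ) (S : Finset V) (f : Finset V → ℝ) :
    ((EE p S f : ℝ) : ℂ) = EE p S (fun U => (f U : ℂ)) := by
  unfold EE
  rw [Complex.ofReal_sum]
  refine sum_congr rfl fun U _ => ?_
  simp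

/-- bound for the joint characteristic function -/
lemma char_bound {M : V → V → ℤ} {X : Finset V → ℤ}
    (hX : ∀ U W, Disjoint U W → X (U ∪ W) = X U + X W + ∑ x ∈ U, ∑ y ∈ W, M x y)
    {A B : Finset V} (hAB : Disjoint A B) {p : ℝ} (h0 : 0 ≤ p) (h1 : p ≤ 1) (θ ψ β : ℝ) (hβ : 0 ≤ β)
    (hb : EE p B (fun b => EE p B (fun b' =>
        ∏ x ∈ A, ‖(p : ℂ) * ee (∑ y ∈ b, θ * (M x y : ℝ) - ∑ y ∈ b', θ * (M x y : ℝ)) + (1 - p)‖)) ≤ β ^ 2) :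
    ‖EE p univ (fun U => ee (θ * (X U : ℝ) + ψ * (U.card : ℝ)))‖ ≤ β := by
  have hu : (univ : Finset V) = (univ \ (A ∪ B)) ∪ (A ∪ B) := by
    rw [sdiff_union_of_subset (subset_univ _)]
  rw [hu, EE_union p sdiff_disjoint]
  refine (norm_EE_le h0 h1 _ _).trans (EE_le_const h0 h1 fun R hR => ?_)
  rw [EE_union p hAB]
  have hR' : Disjoint R (A ∪ B) := disjoint_of_subset_left hR sdiff_disjoint
  have hRA : Disjoint R A := disjoint_of_subset_right subset_union_left hR'
  have hRB : Disjoint R B := disjoint_of_subset_right subset_union_right hR'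
  set g : Finset V → ℂ := fun a => ee (θ * (X R + X a + ∑ x ∈ R, ∑ y ∈ a, M x y : ℤ) +
    ψ * (R.card + a.card : ℝ)) with hg
  set h : Finset V → ℂ := fun b => ee (θ * (X b + ∑ x ∈ R, ∑ y ∈ b, M x y : ℤ) +
    ψ * (b.card : ℝ)) with hh
  have key : EE p A (fun a => EE p B (fun b => ee (θ * (X (R ∪ (a ∪ b)) : ℝ) + ψ * ((R ∪ (a ∪ b)).card : ℝ)))) =
      EE p A (fun a => EE p B (fun b => g a * (h b * ee (∑ x ∈ a, ∑ y ∈ b, θ * (M x y : ℝ))))) := by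
    refine EE_congr fun a ha => EE_congr fun b hb => ?_
    have d1 : Disjoint a b := disjoint_of_subset_left ha (disjoint_of_subset_right hb hAB)
    have d2 : Disjoint R (a ∪ b) := disjoint_of_subset_right (union_subset_union ha hb) hR'
    rw [hg, hh]
    simp only [← ee_add]
    congr 1
    rw [hX _ _ d2, hX _ _ d1, card_union_of_disjoint d2, card_union_of_disjoint d1]
    simp only [sum_union d1, sum_add_distrib, ← mul_sum]
    push_cast
    ring
  rw [key]
  have := decouple h0 h1 A B g h (fun U => (norm_ee _).le) (fun U => (norm_ee _).le)
    (fun x y => θ * (M x y : ℝ))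
  exact le_of_sq_le_sq (this.trans hb) hβ

lemma slice_bound (X : Finset V → ℤ) {p : ℝ} (h0 : 0 ≤ p) (h1 : p ≤ 1) (k : ℕ)
    (hk : k ≤ Fintype.card V) (x : ℤ) (N : ℕ) (hN : 0 < N) (bad : Finset ℕ) (β : ℝ)
    (hgood : ∀ t ∈ range N, t ∉ bad → ∀ ψ : ℝ,
      ‖EE p univ (fun U : Finset V => ee ((t : ℝ) / N * (X U : ℝ) + ψ * (U.card : ℝ)))‖ ≤ β) (hβ : 0 ≤ β) :
    EE p univ (fun U : Finset V => if U.card = k ∧ X U = x then (1:ℝ) else 0) ≤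
      (bad.card : ℝ) / N * EE p univ (fun U : Finset V => if U.card = k then (1:ℝ) else 0) + β := by
  set μ := EE p univ (fun U : Finset V => if U.card = k then (1:ℝ) else 0) with hμ
  have hμ0 : 0 ≤ μ := EE_nonneg h0 h1 fun U _ => by split_ifs <;> norm_num
  have hNR : (0:ℝ) < N := by exact_mod_cast hN
  set n := Fintype.card V with hn
  set Y := EE p univ (fun U : Finset V => if U.card = k ∧ (N:ℤ) ∣ (X U - x) then (1:ℝ) else 0) with hY
  have hle : EE p univ (fun U : Finset V => if U.card = k ∧ X U = x then (1:ℝ) else 0) ≤ Y := by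
    apply EE_mono h0 h1
    intro U _
    split_ifs with h h' h'
    · exact le_rfl
    · exfalso; apply h'; refine ⟨h.1, ?_⟩; rw [h.2]; simp
    · norm_num
    · exact le_rfl
  have hYc : (N : ℂ) * (Y : ℂ) = ∑ t ∈ range N, EE p univ (fun U : Finset V =>
      ee (t * (((X U - x : ℤ) : ℝ) / N)) * (if U.card = k then (1:ℂ) else 0)) := by
    rw [← EE_sum, hY, EE_ofReal, ← EE_mul_left]
    refine EE_congr fun U _ => ?_
    rw [← sum_mul, ee_orth N hN]
    by_cases h1 : U.card = k <;> by_cases h2 : (N:ℤ) ∣ (X U - x) <;> simp [h1, h2]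
  have hbad : ∀ t : ℕ, ‖EE p univ (fun U : Finset V =>
      ee (t * (((X U - x : ℤ) : ℝ) / N)) * (if U.card = k then (1:ℂ) else 0))‖ ≤ μ := by
    intro t
    refine (norm_EE_le h0 h1 _ _).trans (EE_mono h0 h1 fun U _ => ?_)
    rw [norm_mul, norm_ee]
    split_ifs <;> simp
  have hgd : ∀ t ∈ range N, t ∉ bad → ‖EE p univ (fun U : Finset V =>
      ee (t * (((X U - x : ℤ) : ℝ) / N)) * (if U.card = k then (1:ℂ) else 0))‖ ≤ β := by
    intro t ht htb
    have e : ((n + 1 : ℕ) : ℂ) * EE p univ (fun U : Finset V =>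
      ee (t * (((X U - x : ℤ) : ℝ) / N)) * (if U.card = k then (1:ℂ) else 0)) =
      ∑ s ∈ range (n + 1), ee (-((t:ℝ) / N * x) - (s:ℝ) * (k / (n + 1 : ℕ))) *
        EE p univ (fun U : Finset V => ee ((t : ℝ) / N * (X U : ℝ) + ((s:ℝ) / (n + 1 : ℕ)) * (U.card : ℝ))) := by
      simp only [← EE_mul_left]
      rw [← EE_sum]
      refine EE_congr fun U _ => ?_
      have hc : U.card ≤ n := card_le_univ U
      have e1 : ∀ s ∈ range (n + 1), ee (-((t:ℝ) / N * x) - (s:ℝ) * (k / (n + 1 : ℕ))) *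
          ee ((t : ℝ) / N * (X U : ℝ) + ((s:ℝ) / (n + 1 : ℕ)) * (U.card : ℝ)) =
          ee (t * (((X U - x : ℤ) : ℝ) / N)) * ee (s * ((((U.card : ℤ) - k : ℤ) : ℝ) / (n + 1 : ℕ))) := by
        intro s _
        rw [← ee_add, ← ee_add]
        congr 1
        push_cast
        ring
      rw [sum_congr rfl e1, ← mul_sum, ee_orth (n + 1) (by omega)]
      have : ((n + 1 : ℕ) : ℤ) ∣ (U.card : ℤ) - k ↔ U.card = k := by
        constructor
        · intro h
          have := Int.eq_zero_of_abs_lt_dvd h (by rw [abs_lt]; push_cast; omega)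
          omega
        · intro h; rw [h]; simp
      simp only [this]
      by_cases h : U.card = k <;> simp [h]
      ring
    have e2 := congrArg norm e
    rw [norm_mul, Complex.norm_natCast] at e2
    have e3 : ‖∑ s ∈ range (n + 1), ee (-((t:ℝ) / N * x) - (s:ℝ) * (k / (n + 1 : ℕ))) *
        EE p univ (fun U : Finset V => ee ((t : ℝ) / N * (X U : ℝ) + ((s:ℝ) / (n + 1 : ℕ)) * (U.card : ℝ)))‖
        ≤ ((n + 1 : ℕ) : ℝ) * β := by
      refine (norm_sum_le _ _).trans ?_
      refine (sum_le_card_nsmul _ _ β fun s _ => ?_).trans ?_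
      · rw [norm_mul, norm_ee, one_mul]
        exact hgood t ht htb _
      · rw [card_range, nsmul_eq_mul]
    rw [← e2] at e3
    exact le_of_mul_le_mul_left e3 (by positivity)
  have hY0 : 0 ≤ Y := EE_nonneg h0 h1 fun U _ => by split_ifs <;> norm_num
  have hfin : (N:ℝ) * Y ≤ bad.card * μ + N * β := by
    have e2 := congrArg norm hYc
    rw [norm_mul, Complex.norm_natCast, Complex.norm_real, Real.norm_of_nonneg hY0] at e2
    rw [e2]
    refine (norm_sum_le _ _).trans ?_
    have e3 : ∀ t ∈ range N, ‖EE p univ (fun U : Finset V =>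
      ee (t * (((X U - x : ℤ) : ℝ) / N)) * (if U.card = k then (1:ℂ) else 0))‖ ≤
        (if t ∈ bad then μ else 0) + β := by
      intro t ht
      split_ifs with h
      · linarith [hbad t]
      · linarith [hgd t ht h]
    refine (sum_le_sum e3).trans ?_
    rw [sum_add_distrib, sum_const, card_range, nsmul_eq_mul, ← sum_filter, sum_const, nsmul_eq_mul]
    have : ((range N).filter (fun t => t ∈ bad)).card ≤ bad.card :=
      card_le_card fun t ht => (mem_filter.mp ht).2
    have : (((range N).filter (fun t => t ∈ bad)).card : ℝ) ≤ bad.card := by exact_mod_cast this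
    gcongr
  refine hle.trans ?_
  rw [← mul_le_mul_iff_right₀ hNR]
  refine hfin.trans (le_of_eq ?_)
  field_simp

lemma EE_slice (p : ℝ) (k : ℕ) (P : Finset V → Prop) [DecidablePred P] :
    EE p univ (fun U : Finset V => if U.card = k ∧ P U then (1:ℝ) else 0) =
      (p ^ k * (1 - p) ^ (Fintype.card V - k)) *
        ((univ.filter (fun U : Finset V => U.card = k ∧ P U)).card : ℝ) := by
  unfold EE
  rw [card_filter]
  push_cast
  rw [mul_sum, powerset_univ]
  refine sum_congr rfl fun U _ => ?_
  by_cases h : U.card = k ∧ P U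
  · simp only [h]; simp
  · simp only [h]; simp

lemma binom_mode (n k : ℕ) (hk0 : 0 < k) (hkn : k < n) :
    1 / ((n : ℝ) + 1) ≤ (n.choose k : ℝ) * (((k:ℝ) / n) ^ k * (1 - (k:ℝ) / n) ^ (n - k)) := by
  set c : ℕ → ℝ := fun j => (n.choose j : ℝ) * (((k:ℝ) / n) ^ j * (1 - (k:ℝ) / n) ^ (n - j)) with hc
  have hnR : (0:ℝ) < n := by exact_mod_cast (by omega : 0 < n)
  have hkR : (0:ℝ) < k := by exact_mod_cast hk0
  have hknR : (k:ℝ) + 1 ≤ n := by exact_mod_cast hkn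
  set p := (k:ℝ) / n with hp
  have hp0 : 0 < p := by positivity
  have hpn : p * n = k := by rw [hp]; field_simp
  have hp1 : 0 < 1 - p := by
    rw [hp, sub_pos, div_lt_one hnR]; linarith
  have hc0 : ∀ j, 0 ≤ c j := fun j => by rw [hc]; positivity
  have hrec : ∀ j, j < n → c (j + 1) * ((j + 1) * (1 - p)) = c j * ((n - j) * p) := by
    intro j hj
    have e1 := Nat.choose_succ_right_eq n j
    have e1R : (n.choose (j + 1) : ℝ) * (j + 1) = n.choose j * (n - j) := by
      rw [← Nat.cast_sub hj.le]; exact_mod_cast e1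
    have e2 : n - j = (n - (j + 1)) + 1 := by omega
    rw [hc]
    simp only
    rw [e2, pow_succ, pow_succ]
    linear_combination (p ^ j * p * (1 - p) ^ (n - (j + 1)) * (1 - p)) * e1R
  have hup : ∀ j, j < k → c j ≤ c (j + 1) := by
    intro j hj
    have hjR : (j:ℝ) + 1 ≤ k := by exact_mod_cast hj
    have h := hrec j (by omega)
    have hpos : 0 < ((j:ℝ) + 1) * (1 - p) := by positivity
    have hle : ((j:ℝ) + 1) * (1 - p) ≤ (n - j) * p := by
      have : (n:ℝ) * (1 - p) = n - k := by linarith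
      nlinarith
    by_contra hcon
    push Not at hcon
    have := hc0 j
    have := hc0 (j + 1)
    nlinarith
  have hdown : ∀ j, k ≤ j → j < n → c (j + 1) ≤ c j := by
    intro j hj hjn
    have hjR : (k:ℝ) ≤ j := by exact_mod_cast hj
    have h := hrec j (by omega)
    have hpos : 0 < ((j:ℝ) + 1) * (1 - p) := by positivity
    have hle : (n - j) * p ≤ ((j:ℝ) + 1) * (1 - p) := by
      have : (n:ℝ) * (1 - p) = n - k := by linarith
      nlinarith
    by_contra hcon
    push Not at hcon
    have := hc0 j
    have := hc0 (j + 1)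
    nlinarith
  have h1 : ∀ d, d ≤ k → c (k - d) ≤ c k := by
    intro d
    induction d with
    | zero => intro _; simp
    | succ d ih =>
      intro hd
      have e : k - (d + 1) + 1 = k - d := by omega
      have := hup (k - (d + 1)) (by omega)
      rw [e] at this
      exact this.trans (ih (by omega))
  have h2 : ∀ d, k + d ≤ n → c (k + d) ≤ c k := by
    intro d
    induction d with
    | zero => intro _; simp
    | succ d ih =>
      intro hd
      exact (hdown (k + d) (by omega) (by omega)).trans (ih (by omega))
  have h3 : ∀ j ∈ range (n + 1), c j ≤ c k := by
    intro j hj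
    rw [mem_range] at hj
    rcases le_total j k with h | h
    · have := h1 (k - j) (by omega)
      rwa [show k - (k - j) = j by omega] at this
    · have := h2 (j - k) (by omega)
      rwa [show k + (j - k) = j by omega] at this
  have hsum : ∑ j ∈ range (n + 1), c j = 1 := by
    have := add_pow p (1 - p) n
    rw [add_sub_cancel, one_pow] at this
    rw [this]
    exact sum_congr rfl fun j _ => by rw [hc]; ring
  have := sum_le_card_nsmul _ _ _ h3
  rw [hsum, card_range, nsmul_eq_mul] at this
  push_cast at this
  rw [div_le_iff₀ (by positivity)]
  change 1 ≤ c k * _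
  linarith

/-- Combination of all the non-asymptotic parts. -/
lemma main_finite {M : V → V → ℤ} (hM : ∀ a b, M a b = 0 ∨ M a b = 1) (hs : ∀ a b, M a b = M b a)
    {X : Finset V → ℤ}
    (hX : ∀ U W, Disjoint U W → X (U ∪ W) = X U + X W + ∑ x ∈ U, ∑ y ∈ W, M x y)
    (n : ℕ) (hn : Fintype.card V = n)
    (l L t s0 D m Z H w : ℕ) (hs0 : 1 ≤ s0)
    (hl : ∀ K : Finset V, (Hom M 0 K ∨ Hom M 1 K) → K.card ≤ l)
    (hbig : 2 ^ (L + 1) * (2 * l * (2 ^ L * t)) ≤ s0)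
    (hD : l * l < 2 ^ D) (hV : (2 ^ (L + 4)) ^ D * s0 ≤ n) (hm : 2 * (m * L) ≤ s0)
    (hH : 1 ≤ H) (hw : 1 ≤ w) (ε β σ : ℝ) (hε : 0 < ε) (hεH : 16 * ε * H ≤ 1) (hβ : 0 ≤ β)
    (k : ℕ) (hk0 : 0 < k) (hkn : k < n) (hσ0 : 0 ≤ σ) (hσ : σ ≤ (k:ℝ) / n * (1 - (k:ℝ) / n))
    (hβ2 : Real.exp (-(8 * σ * ε ^ 2 * m)) +
      m * (L * (2 * Real.exp (-((Z:ℝ) ^ 2 / (2 * n)))) +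
        ((((2 * Z / H + 1) * w : ℕ) : ℝ) * (5 * ε + Real.exp (-(8 * σ * ε ^ 2 * t)))) ^ L) ≤ β ^ 2)
    (x : ℤ) :
    ((univ.filter (fun U : Finset V => U.card = k ∧ X U = x)).card : ℝ) / (n.choose k) ≤
      (((H / w : ℕ) * (3 * (H / w : ℕ) + 1)) * (2 * (2 * ε / w) * n + 1)) / n + (n + 1) * β := by
  have hn0 : 0 < n := by omega
  have hnR : (0:ℝ) < n := by exact_mod_cast hn0
  have hknR : (k:ℝ) < n := by exact_mod_cast hkn
  have hkR : (0:ℝ) < k := by exact_mod_cast hk0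
  set p := (k:ℝ) / n with hp
  have h0 : 0 < p := by positivity
  have h1 : p < 1 := by rw [hp, div_lt_one hnR]; exact hknR
  obtain ⟨A, B, hAB, hA, hrich⟩ := exists_rich hM hs l L t s0 D hs0 hl hbig hD (by rw [hn]; exact hV)
  obtain ⟨τ, hτA, hτ, hτd⟩ := exists_family hrich m (hm.trans hA)
  set ρ := 5 * ε + Real.exp (-(8 * σ * ε ^ 2 * t)) with hρ
  have hρ0 : 0 ≤ ρ := by positivity
  have hP : ∀ P : Finset V, t ≤ P.card → ∀ s,
      EE p P (fun U => if U.card = s then (1:ℝ) else 0) ≤ ρ := by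
    intro P hPt s
    refine (binom_point h0.le h1.le P s hε).trans ?_
    rw [hρ]
    have : (t:ℝ) ≤ P.card := by exact_mod_cast hPt
    gcongr
  set bad := (range n).filter (fun t : ℕ => (2 * Z / H + 1) * w < (nearSet ((t : ℝ) / n) ε Z).card) with hbad
  have hbc := card_bad_le n hn0 ε Z H w hH hw hε.le hεH
  rw [← hbad] at hbc
  have hgood : ∀ t ∈ range n, t ∉ bad → ∀ ψ : ℝ,
      ‖EE p univ (fun U : Finset V => ee ((t : ℝ) / n * (X U : ℝ) + ψ * (U.card : ℝ)))‖ ≤ β := by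
    intro t ht htb ψ
    have hnear : (nearSet ((t : ℝ) / n) ε Z).card ≤ (2 * Z / H + 1) * w := by
      by_contra hcon
      exact htb (mem_filter.mpr ⟨ht, by omega⟩)
    refine char_bound hX hAB h0.le h1.le _ ψ β hβ ?_
    refine (family_bound hM τ hτA hτ hτd h0.le h1.le hρ0 hP Z n hnR ?_ _ ε hε.le).trans ?_
    · rw [← hn]; exact_mod_cast card_le_univ B
    · refine le_trans ?_ hβ2
      have hnR : ((nearSet ((t : ℝ) / n) ε Z).card : ℝ) ≤ (((2 * Z / H + 1) * w : ℕ) : ℝ) := by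
        exact_mod_cast hnear
      gcongr
  have hsl := slice_bound X h0.le h1.le k (by rw [hn]; exact hkn.le) x n hn0 bad β hgood hβ
  have eμ : EE p univ (fun U : Finset V => if U.card = k then (1:ℝ) else 0) =
      (p ^ k * (1 - p) ^ (n - k)) * (n.choose k : ℝ) := by
    have := EE_slice (V := V) p k (fun _ => True)
    simp only [and_true] at this
    rw [this, hn]
    congr 2
    rw [univ_filter_card_eq, card_powersetCard, card_univ, hn]
  rw [eμ, EE_slice p k (fun U => X U = x), hn] at hsl
  have hmode := binom_mode n k hk0 hkn
  rw [← hp] at hmode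
  have h1p : 0 < 1 - p := by linarith
  set κ := p ^ k * (1 - p) ^ (n - k) with hκ
  have hκ0 : 0 < κ := by positivity
  have hch : (0:ℝ) < n.choose k := by exact_mod_cast Nat.choose_pos hkn.le
  set cnt := ((univ.filter (fun U : Finset V => U.card = k ∧ X U = x)).card : ℝ) with hcnt
  rw [div_le_iff₀ hch]
  have h5 : 1 ≤ (n + 1) * ((n.choose k : ℝ) * κ) := by
    rw [div_le_iff₀ (by positivity)] at hmode; linarith
  have h6 : κ * cnt ≤ κ * ((bad.card : ℝ) / n + (n + 1) * β) * n.choose k := by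
    refine hsl.trans ?_
    nlinarith
  have h7 : cnt ≤ ((bad.card : ℝ) / n + (n + 1) * β) * n.choose k := by
    refine le_of_mul_le_mul_left (h6.trans (le_of_eq ?_)) hκ0
    ring
  refine h7.trans ?_
  gcongr

end SlicePart

section MidPart
open Finset Classical

set_option linter.unusedSectionVars false

variable {V : Type*} [Fintype V]

set_option maxHeartbeats 1000000 in
lemma main_mid {M : V → V → ℤ} (hM : ∀ a b, M a b = 0 ∨ M a b = 1) (hs : ∀ a b, M a b = M b a)
    {X : Finset V → ℤ}
    (hX : ∀ U W, Disjoint U W → X (U ∪ W) = X U + X W + ∑ x ∈ U, ∑ y ∈ W, M x y)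
    (n : ℕ) (hn : Fintype.card V = n)
    (l L : ℕ) (hl1 : 1 ≤ l) (hL1 : 1 ≤ L)
    (hl : ∀ K : Finset V, (Hom M 0 K ∨ Hom M 1 K) → K.card ≤ l)
    (u h σ : ℝ) (hnh : (n:ℝ) = h ^ 2) (hu : 1000 * ((L:ℝ) + 1) ≤ u) (huh : u ^ 10 ≤ h)
    (hpl1 : 2 ^ (2 * L + 3) * (l:ℝ) ≤ u) (hpl2 : 2 * (4 * (l:ℝ) ^ 2) ^ (L + 4) ≤ u)
    (hσ0 : 0 ≤ σ)
    (he1 : Real.exp (-(8 * σ * u ^ 2)) ≤ ((n:ℝ) ^ 8)⁻¹)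
    (he2 : Real.exp (-(u ^ 2 / 2)) ≤ ((n:ℝ) ^ 8)⁻¹) (huL : (n:ℝ) ^ 8 ≤ u ^ L)
    (k : ℕ) (hk0 : 0 < k) (hkn : k < n) (hσ : σ ≤ (k:ℝ) / n * (1 - (k:ℝ) / n))
    (x : ℤ) :
    ((univ.filter (fun U : Finset V => U.card = k ∧ X U = x)).card : ℝ) / (n.choose k) ≤
      u ^ 24 / n := by
  have hLR : (1:ℝ) ≤ L := by exact_mod_cast hL1
  have hu2 : (2000:ℝ) ≤ u := by linarith
  have hu0 : (0:ℝ) < u := by linarith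
  have hu1 : (1:ℝ) ≤ u := by linarith
  have hh0 : (0:ℝ) < h := lt_of_lt_of_le (by positivity) huh
  have huh1 : u ≤ h := le_trans (le_self_pow₀ hu1 (by norm_num)) huh
  have hh1 : (1:ℝ) ≤ h := by linarith
  have hnR : (0:ℝ) < n := by rw [hnh]; positivity
  have hn1 : (1:ℝ) ≤ n := by rw [hnh]; nlinarith only [hh1]
  have hun : u ≤ n := by rw [hnh]; nlinarith only [hh1, huh1]
  -- parameters
  set s0 := ⌈h ^ 2 / u⌉₊ with hs0d
  set t := ⌈h ^ 2 / u ^ 2⌉₊ with htd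
  set Z := ⌈h * u⌉₊ with hZd
  set H := ⌊h / (16 * u ^ 2)⌋₊ with hHd
  set w := ⌊h / u ^ 8⌋₊ with hwd
  set m := s0 / (2 * L) with hmd
  set ε := u ^ 2 / h with hεd
  set D := 2 * (Nat.log 2 l + 1) with hDd
  have huu : u ^ 2 ≤ h ^ 2 := by gcongr
  have hs0l : h ^ 2 / u ≤ s0 := Nat.le_ceil _
  have hs0u : (s0:ℝ) ≤ 2 * (h ^ 2 / u) := by
    have := Nat.ceil_lt_add_one (by positivity : 0 ≤ h ^ 2 / u)
    have h1 : 1 ≤ h ^ 2 / u := by rw [le_div_iff₀ hu0]; nlinarith only [hh1, huh1]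
    linarith
  have htl : h ^ 2 / u ^ 2 ≤ t := Nat.le_ceil _
  have htu : (t:ℝ) ≤ 2 * (h ^ 2 / u ^ 2) := by
    have := Nat.ceil_lt_add_one (by positivity : 0 ≤ h ^ 2 / u ^ 2)
    have h1 : 1 ≤ h ^ 2 / u ^ 2 := by rw [le_div_iff₀ (by positivity)]; linarith
    linarith
  have hZl : h * u ≤ Z := Nat.le_ceil _
  have hZu : (Z:ℝ) ≤ 2 * (h * u) := by
    have := Nat.ceil_lt_add_one (by positivity : 0 ≤ h * u)
    have h1 : 1 ≤ h * u := by nlinarith only [hh1, hu1]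
    linarith
  have hHu : (H:ℝ) ≤ h / (16 * u ^ 2) := Nat.floor_le (by positivity)
  have h16 : 1 ≤ h / (32 * u ^ 2) := by
    rw [le_div_iff₀ (by positivity)]
    have : 32 * u ^ 2 ≤ u ^ 10 := by
      have e : u ^ 10 = u ^ 8 * u ^ 2 := by ring
      have : u ≤ u ^ 8 := le_self_pow₀ hu1 (by norm_num)
      rw [e]; nlinarith only [sq_nonneg u, this, hu2]
    linarith
  have hHl : h / (32 * u ^ 2) ≤ H := by
    have := Nat.sub_one_lt_floor (h / (16 * u ^ 2))
    have e : h / (16 * u ^ 2) = 2 * (h / (32 * u ^ 2)) := by field_simp; norm_num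
    rw [← hHd] at this
    linarith
  have hHR : (1:ℝ) ≤ H := h16.trans hHl
  have hwu : (w:ℝ) ≤ h / u ^ 8 := Nat.floor_le (by positivity)
  have h17 : 1 ≤ h / (2 * u ^ 8) := by
    rw [le_div_iff₀ (by positivity)]
    have : 2 * u ^ 8 ≤ u ^ 10 := by
      have e : u ^ 10 = u ^ 2 * u ^ 8 := by ring
      rw [e]; gcongr; nlinarith only [hu2]
    linarith
  have hwl : h / (2 * u ^ 8) ≤ w := by
    have := Nat.sub_one_lt_floor (h / u ^ 8)
    have e : h / u ^ 8 = 2 * (h / (2 * u ^ 8)) := by field_simp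
    rw [← hwd] at this
    linarith
  have hwR : (1:ℝ) ≤ w := h17.trans hwl
  have hs0n : (s0:ℝ) ≤ n := by
    refine hs0u.trans ?_
    rw [hnh, mul_div_assoc', div_le_iff₀ hu0]
    nlinarith only [hu2, sq_nonneg h]
  have hmn : (m:ℝ) ≤ n := by
    have : m ≤ s0 := Nat.div_le_self _ _
    exact le_trans (by exact_mod_cast this) hs0n
  have hml : h ^ 2 / u ^ 2 ≤ m := by
    have h1 : s0 < 2 * L * (m + 1) := by
      rw [hmd]; exact Nat.lt_mul_div_succ _ (by omega)
    have h1R : (s0:ℝ) < 2 * L * (m + 1) := by exact_mod_cast h1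
    have h2 : u * (h ^ 2 / u ^ 2) = h ^ 2 / u := by field_simp
    have h3 : 1 ≤ h ^ 2 / u ^ 2 := by rw [le_div_iff₀ (by positivity)]; linarith
    by_contra hcon
    push Not at hcon
    have h4 : (2:ℝ) * L * (m + 1) ≤ 2 * L * (2 * (h ^ 2 / u ^ 2)) := by gcongr; linarith
    nlinarith only [h1R, h2, h3, h4, hu, hLR, hs0l]
  have hε : 0 < ε := by positivity
  have hεt : ∀ y : ℝ, h ^ 2 / u ^ 2 ≤ y → u ^ 2 ≤ ε ^ 2 * y := by
    intro y hy
    calc u ^ 2 = ε ^ 2 * (h ^ 2 / u ^ 2) := by rw [hεd]; field_simp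
      _ ≤ _ := by gcongr
  have hβ : (0:ℝ) ≤ ((n:ℝ) ^ 3)⁻¹ := by positivity
  have hexp : ∀ y : ℝ, h ^ 2 / u ^ 2 ≤ y → Real.exp (-(8 * σ * ε ^ 2 * y)) ≤ ((n:ℝ) ^ 8)⁻¹ := by
    intro y hy
    refine le_trans ?_ he1
    rw [Real.exp_le_exp]
    have := hεt y hy
    nlinarith only [this, hσ0]
  clear_value s0 t Z H w ε
  have hpow2 : 2 ^ D ≤ 4 * l ^ 2 := by
    have := Nat.pow_log_le_self 2 (by omega : l ≠ 0)
    calc 2 ^ D = (2 ^ Nat.log 2 l) ^ 2 * 4 := by rw [hDd, ← pow_mul]; ring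
      _ ≤ l ^ 2 * 4 := by gcongr
      _ = _ := by ring
  have hsum : Real.exp (-(8 * σ * ε ^ 2 * m)) +
      m * (L * (2 * Real.exp (-((Z:ℝ) ^ 2 / (2 * n)))) +
        ((((2 * Z / H + 1) * w : ℕ) : ℝ) * (5 * ε + Real.exp (-(8 * σ * ε ^ 2 * t)))) ^ L) ≤
        (((n:ℝ) ^ 3)⁻¹) ^ 2 := by
    have a1 := hexp m hml
    have a2 := hexp t htl
    have a3 : Real.exp (-((Z:ℝ) ^ 2 / (2 * n))) ≤ ((n:ℝ) ^ 8)⁻¹ := by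
      refine le_trans ?_ he2
      rw [Real.exp_le_exp, neg_le_neg_iff]
      calc u ^ 2 / 2 = (h * u) ^ 2 / (2 * n) := by rw [hnh]; field_simp
        _ ≤ _ := by gcongr
    have a4 : 5 * ε + Real.exp (-(8 * σ * ε ^ 2 * t)) ≤ 6 * ε := by
      have : ((n:ℝ) ^ 8)⁻¹ ≤ ε := by
        rw [hεd, hnh, inv_le_comm₀ (by positivity) (by positivity), inv_div]
        calc h / u ^ 2 ≤ h := div_le_self hh0.le (by nlinarith only [hu2])
          _ ≤ (h ^ 2) ^ 8 := by rw [← pow_mul]; exact le_self_pow₀ hh1 (by norm_num)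
      linarith
    have a5 : (((2 * Z / H + 1) * w : ℕ) : ℝ) ≤ u ^ 4 * (h / u ^ 8) := by
      have b1 : ((2 * Z / H : ℕ) : ℝ) ≤ (2 * (Z:ℝ)) / H := by
        refine Nat.cast_div_le.trans (le_of_eq ?_); push_cast; ring
      have b2 : (2 * (Z:ℝ)) / H ≤ 128 * u ^ 3 := by
        rw [div_le_iff₀ (by linarith)]
        calc 2 * (Z:ℝ) ≤ 2 * (2 * (h * u)) := by gcongr
          _ = 128 * u ^ 3 * (h / (32 * u ^ 2)) := by field_simp; norm_num
          _ ≤ _ := by gcongr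
      have b3 : 128 * u ^ 3 + 1 ≤ u ^ 4 := by
        have : 1 ≤ u ^ 3 := one_le_pow₀ hu1
        have e : u ^ 4 = u * u ^ 3 := by ring
        rw [e]; nlinarith only [this, hu2]
      push_cast
      gcongr
      linarith
    have a6 : (((2 * Z / H + 1) * w : ℕ) : ℝ) * (5 * ε + Real.exp (-(8 * σ * ε ^ 2 * t))) ≤ u⁻¹ := by
      calc (((2 * Z / H + 1) * w : ℕ) : ℝ) * (5 * ε + Real.exp (-(8 * σ * ε ^ 2 * t)))
          ≤ (u ^ 4 * (h / u ^ 8)) * (6 * ε) := by gcongr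
        _ = 6 / u ^ 2 := by rw [hεd]; field_simp
        _ ≤ u⁻¹ := by
          rw [inv_eq_one_div, div_le_div_iff₀ (by positivity) hu0]; nlinarith only [hu2]
    have a7 : ((((2 * Z / H + 1) * w : ℕ) : ℝ) * (5 * ε + Real.exp (-(8 * σ * ε ^ 2 * t)))) ^ L
        ≤ ((n:ℝ) ^ 8)⁻¹ := by
      calc _ ≤ (u⁻¹) ^ L := by gcongr
        _ = (u ^ L)⁻¹ := by rw [inv_pow]
        _ ≤ _ := by gcongr
    calc _ ≤ ((n:ℝ) ^ 8)⁻¹ + n * (L * (2 * ((n:ℝ) ^ 8)⁻¹) + ((n:ℝ) ^ 8)⁻¹) := by gcongr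
      _ = (1 + n * (2 * L + 1)) * ((n:ℝ) ^ 8)⁻¹ := by ring
      _ ≤ (n * n) * ((n:ℝ) ^ 8)⁻¹ := by
        refine mul_le_mul_of_nonneg_right ?_ (by positivity)
        have h5 : 2 * (L:ℝ) + 2 ≤ n := by linarith only [hu, hun, hLR]
        nlinarith only [h5, hn1]
      _ = _ := by field_simp
  have hmain := main_finite hM hs hX n hn l L t s0 D m Z H w ?_ hl ?_ ?_ ?_ ?_ ?_ ?_ ε
    (((n:ℝ) ^ 3)⁻¹) σ hε ?_ hβ k hk0 hkn hσ0 hσ hsum x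
  · refine hmain.trans ?_
    have hQ : ((H / w : ℕ) : ℝ) ≤ u ^ 6 := by
      refine Nat.cast_div_le.trans ?_
      rw [div_le_iff₀ (by linarith)]
      calc (H:ℝ) ≤ h / (16 * u ^ 2) := hHu
        _ ≤ h / (2 * u ^ 2) := by gcongr; norm_num
        _ = u ^ 6 * (h / (2 * u ^ 8)) := by field_simp
        _ ≤ _ := by gcongr
    have hκ : 2 * (2 * ε / w) * n + 1 ≤ 9 * u ^ 10 := by
      have : 2 * ε / w ≤ 2 * ε / (h / (2 * u ^ 8)) := by gcongr
      have h2 : 2 * (2 * ε / w) * n ≤ 2 * (2 * ε / (h / (2 * u ^ 8))) * n := by gcongr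
      have h3 : 2 * (2 * ε / (h / (2 * u ^ 8))) * n = 8 * u ^ 10 := by
        rw [hεd, hnh]; field_simp; norm_num
      have h4 : 1 ≤ u ^ 10 := one_le_pow₀ hu1
      linarith
    have h6 : 1 ≤ u ^ 6 := one_le_pow₀ hu1
    calc _ ≤ (u ^ 6 * (3 * u ^ 6 + u ^ 6)) * (9 * u ^ 10) / n + (n + n) * ((n:ℝ) ^ 3)⁻¹ := by gcongr
      _ = (36 * u ^ 22 + 2 / n) / n := by field_simp; ring
      _ ≤ u ^ 24 / n := by
        refine div_le_div_of_nonneg_right ?_ hnR.le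
        have h8 : 2 / (n:ℝ) ≤ 2 := div_le_self (by norm_num) hn1
        have h7 : 1 ≤ u ^ 22 := one_le_pow₀ hu1
        have e : u ^ 24 = u ^ 2 * u ^ 22 := by ring
        have h9 : 38 ≤ u ^ 2 := by nlinarith only [hu2]
        rw [e]; nlinarith only [h7, h8, h9]
  · have : (0:ℝ) < s0 := lt_of_lt_of_le (by positivity) hs0l
    exact_mod_cast this
  · have : ((2 ^ (L + 1) * (2 * l * (2 ^ L * t)) : ℕ) : ℝ) ≤ s0 := by
      push_cast
      calc (2:ℝ) ^ (L + 1) * (2 * l * (2 ^ L * t)) = (2 ^ (2 * L + 3) * l) * (t / 2) := by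
            rw [two_mul L, pow_add, pow_add, pow_add]; ring
        _ ≤ u * (h ^ 2 / u ^ 2) :=
            mul_le_mul hpl1 (by linarith only [htu]) (by positivity) hu0.le
        _ = h ^ 2 / u := by field_simp
        _ ≤ _ := hs0l
    exact_mod_cast this
  · have h1 := Nat.lt_pow_succ_log_self (by norm_num : 1 < 2) l
    calc l * l < 2 ^ (Nat.log 2 l + 1) * 2 ^ (Nat.log 2 l + 1) := by gcongr
      _ = 2 ^ D := by rw [hDd, two_mul, pow_add 2 (Nat.log 2 l + 1)]
  · have : (((2 ^ (L + 4)) ^ D * s0 : ℕ) : ℝ) ≤ n := by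
      have e : (2 ^ (L + 4)) ^ D = (2 ^ D) ^ (L + 4) := by rw [← pow_mul, ← pow_mul, mul_comm]
      rw [e]
      have : (((2 ^ D) ^ (L + 4) : ℕ) : ℝ) ≤ (4 * (l:ℝ) ^ 2) ^ (L + 4) := by
        exact_mod_cast Nat.pow_le_pow_left hpow2 (L + 4)
      rw [Nat.cast_mul]
      calc _ ≤ (4 * (l:ℝ) ^ 2) ^ (L + 4) * (2 * (h ^ 2 / u)) := by gcongr
        _ = (2 * (4 * (l:ℝ) ^ 2) ^ (L + 4)) * (h ^ 2 / u) := by ring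
        _ ≤ u * (h ^ 2 / u) := by gcongr
        _ = n := by rw [hnh]; field_simp
    exact_mod_cast this
  · have := Nat.div_mul_le_self s0 (2 * L)
    rw [← hmd] at this
    linarith
  · exact_mod_cast hHR
  · exact_mod_cast hwR
  · calc 16 * ε * H ≤ 16 * ε * (h / (16 * u ^ 2)) := by gcongr
      _ = 1 := by rw [hεd]; field_simp

end MidPart

section FinalPart
open Finset Classical

/-- adjacency matrix with integer entries -/
noncomputable def adjM {n : ℕ} (G : SimpleGraph (Fin n)) (x y : Fin n) : ℤ :=
  if G.Adj x y then 1 else 0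

lemma iec_eq {n : ℕ} (G : SimpleGraph (Fin n)) (s : Finset (Fin n)) :
    inducedEdgeCount G s =
      ((univ : Finset (Sym2 (Fin n))).filter (fun e => e ∈ G.edgeSet ∧ ∀ v ∈ e, v ∈ s)).card := by
  unfold inducedEdgeCount
  rw [Nat.card_eq_card_toFinset]
  congr 1
  ext e
  simp

lemma iec_insert {n : ℕ} (G : SimpleGraph (Fin n)) (s : Finset (Fin n)) (a : Fin n) (ha : a ∉ s) :
    (inducedEdgeCount G (insert a s) : ℤ) = inducedEdgeCount G s + ∑ y ∈ s, adjM G a y := by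
  have h1 : ∑ y ∈ s, adjM G a y = ((s.filter (fun y => G.Adj a y)).card : ℤ) := by
    rw [card_filter]; push_cast; rfl
  rw [h1, iec_eq, iec_eq]
  have h2 : (univ : Finset (Sym2 (Fin n))).filter (fun e => e ∈ G.edgeSet ∧ ∀ v ∈ e, v ∈ insert a s) =
      (univ : Finset (Sym2 (Fin n))).filter (fun e => e ∈ G.edgeSet ∧ ∀ v ∈ e, v ∈ s) ∪
        (s.filter (fun y => G.Adj a y)).image (fun y => s(a, y)) := by
    ext e
    induction e with | _ x y =>
    simp only [mem_filter, mem_univ, true_and, SimpleGraph.mem_edgeSet, Sym2.mem_iff, mem_union,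
      mem_image, mem_insert, forall_eq_or_imp, forall_eq, Sym2.eq_iff]
    constructor
    · rintro ⟨hxy, hx, hy⟩
      rcases hx with rfl | hx
      · rcases hy with rfl | hy
        · exact absurd hxy (G.irrefl)
        · exact Or.inr ⟨y, ⟨hy, hxy⟩, Or.inl ⟨rfl, rfl⟩⟩
      · rcases hy with rfl | hy
        · exact Or.inr ⟨x, ⟨hx, hxy.symm⟩, Or.inr ⟨rfl, rfl⟩⟩
        · exact Or.inl ⟨hxy, hx, hy⟩
    · rintro (⟨hxy, hx, hy⟩ | ⟨z, ⟨hz, haz⟩, (⟨rfl, rfl⟩ | ⟨rfl, rfl⟩)⟩)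
      · exact ⟨hxy, Or.inr hx, Or.inr hy⟩
      · exact ⟨haz, Or.inl rfl, Or.inr hz⟩
      · exact ⟨haz.symm, Or.inr hz, Or.inl rfl⟩
  rw [h2, card_union_of_disjoint, card_image_of_injective]
  · push_cast; rfl
  · intro y z hyz
    simp only [Sym2.eq_iff, true_and] at hyz
    rcases hyz with h | ⟨h, h'⟩
    · exact h
    · exact h'.trans h
  · rw [disjoint_left]
    intro e he he'
    rw [mem_image] at he'
    obtain ⟨y, -, rfl⟩ := he'
    exact ha ((mem_filter.mp he).2.2 a (by simp))

lemma adjM_symm {n : ℕ} (G : SimpleGraph (Fin n)) (x y : Fin n) : adjM G x y = adjM G y x := by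
  unfold adjM; simp only [G.adj_comm]

lemma iec_union {n : ℕ} (G : SimpleGraph (Fin n)) (U W : Finset (Fin n)) (h : Disjoint U W) :
    (inducedEdgeCount G (U ∪ W) : ℤ) =
      inducedEdgeCount G U + inducedEdgeCount G W + ∑ x ∈ U, ∑ y ∈ W, adjM G x y := by
  induction U using Finset.induction_on with
  | empty =>
    have : inducedEdgeCount G ∅ = 0 := by
      rw [iec_eq, card_eq_zero, filter_eq_empty_iff]
      rintro e - ⟨-, h⟩
      induction e with | _ x y =>
      exact absurd (h x (by simp)) (by simp)
    simp [this]
  | insert a U ha ih =>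
    rw [disjoint_insert_left] at h
    rw [insert_union, iec_insert _ _ _ (by simp [ha, h.1]), iec_insert _ _ _ ha, ih h.2,
      sum_union h.2, sum_insert ha]
    ring

lemma ev_log (a r : ℝ) (ha : 0 < a) (hr : 0 < r) :
    ∀ᶠ n : ℕ in Filter.atTop, Real.log n ≤ a * (n:ℝ) ^ r := by
  have h := (isLittleO_log_rpow_atTop hr).def ha
  have h2 := tendsto_natCast_atTop_atTop (R := ℝ) |>.eventually h
  filter_upwards [h2] with n hn
  rw [Real.norm_of_nonneg (by positivity : 0 ≤ (n:ℝ) ^ r)] at hn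
  exact (le_abs_self _).trans hn

lemma ev_pow (K r : ℝ) (hr : 0 < r) : ∀ᶠ n : ℕ in Filter.atTop, K ≤ (n:ℝ) ^ r :=
  ((tendsto_rpow_atTop hr).comp (tendsto_natCast_atTop_atTop (R := ℝ))).eventually
    (Filter.eventually_ge_atTop K)

lemma exp_le_of (a u : ℝ) (n : ℕ) (hn : 1 ≤ n) (h : Real.log n ≤ a / 8 * u) :
    Real.exp (-(a * u)) ≤ ((n:ℝ) ^ 8)⁻¹ := by
  have hn0 : (0:ℝ) < n := by exact_mod_cast hn
  have : ((n:ℝ) ^ 8)⁻¹ = Real.exp (-(8 * Real.log n)) := by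
    rw [Real.exp_neg]
    congr 1
    rw [show 8 * Real.log n = ((8:ℕ):ℝ) * Real.log n by norm_num, Real.exp_nat_mul, Real.exp_log hn0]
  rw [this, Real.exp_le_exp]
  linarith

theorem main_thm (C c η : ℝ) (hC : 0 < C) (hc : 0 < c) (hη : 0 < η) :
    ∃ n₀ : ℕ, ∀ n : ℕ, n₀ ≤ n → ∀ G : SimpleGraph (Fin n), IsCRamsey C G →
      ∀ k : ℕ, c * n ≤ (k : ℝ) → (k : ℝ) ≤ (1 - c) * n → ∀ x : ℤ,
        ((univ.filter (fun U : Finset (Fin n) => U.card = k ∧ (inducedEdgeCount G U : ℤ) = x)).card : ℝ)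
            / (n.choose k) ≤ (n : ℝ) ^ (η - 1) := by
  obtain ⟨δ, hδ0, hδη, hδ1⟩ : ∃ δ : ℝ, 0 < δ ∧ 24 * δ ≤ η ∧ 20 * δ ≤ 1 :=
    ⟨min η 1 / 24, by positivity, by linarith [min_le_left η 1], by linarith [min_le_right η 1]⟩
  obtain ⟨L0, hL0⟩ := exists_nat_ge (8 / δ)
  set L := L0 + 1 with hL
  have hLδ : 8 ≤ δ * L := by
    rw [div_le_iff₀ hδ0] at hL0
    rw [hL]; push_cast; nlinarith
  set γ := δ / (4 * (L + 4)) with hγ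
  have hγ0 : 0 < γ := by positivity
  have hlog2 : 0 < Real.log 2 := Real.log_pos (by norm_num)
  have ev : ∀ᶠ n : ℕ in Filter.atTop,
      1 ≤ n ∧ Real.log n ≤ (Real.log 2 / (2 * C)) * (n:ℝ) ^ γ ∧ 4 ≤ (n:ℝ) ^ γ ∧
      2 * 4 ^ (L + 4) ≤ (n:ℝ) ^ (δ / 2) ∧
      1000 * ((L:ℝ) + 1) ≤ (n:ℝ) ^ δ ∧
      Real.log n ≤ (8 * c ^ 2) / 8 * (n:ℝ) ^ (δ * 2) ∧
      Real.log n ≤ (1 / 2) / 8 * (n:ℝ) ^ (δ * 2) := by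
    filter_upwards [Filter.eventually_ge_atTop 1,
      ev_log (Real.log 2 / (2 * C)) γ (by positivity) hγ0, ev_pow 4 γ hγ0,
      ev_pow (2 * 4 ^ (L + 4)) (δ / 2) (by positivity),
      ev_pow (1000 * ((L:ℝ) + 1)) δ hδ0,
      ev_log ((8 * c ^ 2) / 8) (δ * 2) (by positivity) (by positivity),
      ev_log ((1 / 2) / 8) (δ * 2) (by positivity) (by positivity)] with n a b c d e f g
    exact ⟨a, b, c, d, e, f, g⟩
  obtain ⟨n₀, hn₀⟩ := Filter.eventually_atTop.mp ev
  refine ⟨n₀, fun n hn G hG k hk1 hk2 x => ?_⟩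
  obtain ⟨hn1, hla, hlb, hpoly, hu, he1, he2⟩ := hn₀ n hn
  have hnR : (1:ℝ) ≤ n := by exact_mod_cast hn1
  have hn0 : (0:ℝ) < n := by linarith
  set u := (n:ℝ) ^ δ with hud
  set h := (n:ℝ) ^ (1 / 2 : ℝ) with hhd
  have hpw : ∀ j : ℕ, u ^ j = (n:ℝ) ^ (δ * j) := by
    intro j; rw [hud, Real.rpow_mul hn0.le, Real.rpow_natCast]
  set l := ⌈C * Real.logb 2 n⌉₊ + 1 with hld
  have hlog0 : 0 ≤ Real.logb 2 n := Real.logb_nonneg (by norm_num) hnR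
  have hlu : (l:ℝ) ≤ (n:ℝ) ^ γ := by
    have h1 := Nat.ceil_lt_add_one (by positivity : 0 ≤ C * Real.logb 2 n)
    have h2 : C * Real.logb 2 n ≤ (n:ℝ) ^ γ / 2 := by
      rw [Real.logb, mul_div_assoc', div_le_iff₀ hlog2]
      calc C * Real.log n ≤ C * ((Real.log 2 / (2 * C)) * (n:ℝ) ^ γ) := by gcongr
        _ = _ := by field_simp
    rw [hld]; push_cast
    linarith
  have hl1 : 1 ≤ l := by omega
  have hl1R : (1:ℝ) ≤ l := by exact_mod_cast hl1
  have hpl2 : 2 * (4 * (l:ℝ) ^ 2) ^ (L + 4) ≤ u := by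
    calc 2 * (4 * (l:ℝ) ^ 2) ^ (L + 4) ≤ 2 * (4 * ((n:ℝ) ^ γ) ^ 2) ^ (L + 4) := by gcongr
      _ = (2 * 4 ^ (L + 4)) * (n:ℝ) ^ (δ / 2) := by
        rw [mul_pow, ← mul_assoc, ← pow_mul, ← Real.rpow_natCast ((n:ℝ) ^ γ), ← Real.rpow_mul hn0.le]
        congr 2
        rw [hγ]; push_cast; field_simp; norm_num
      _ ≤ (n:ℝ) ^ (δ / 2) * (n:ℝ) ^ (δ / 2) := by gcongr
      _ = u := by rw [← Real.rpow_add hn0, hud]; congr 1; ring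
  have hpl1 : 2 ^ (2 * L + 3) * (l:ℝ) ≤ u := by
    refine le_trans ?_ hpl2
    rw [mul_pow]
    have e1 : (2:ℝ) ^ (2 * L + 3) ≤ 4 ^ (L + 4) := by
      rw [show (4:ℝ) = 2 ^ 2 by norm_num, ← pow_mul]
      exact pow_le_pow_right₀ (by norm_num) (by omega)
    have e2 : (l:ℝ) ≤ (l ^ 2) ^ (L + 4) := by
      rw [← pow_mul]; exact le_self_pow₀ hl1R (by omega)
    calc 2 ^ (2 * L + 3) * (l:ℝ) ≤ 4 ^ (L + 4) * (l ^ 2) ^ (L + 4) := by gcongr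
      _ ≤ _ := by
        have : (0:ℝ) ≤ 4 ^ (L + 4) * (l ^ 2) ^ (L + 4) := by positivity
        linarith
  have hHom : ∀ K : Finset (Fin n), (Hom (adjM G) 0 K ∨ Hom (adjM G) 1 K) → K.card ≤ l := by
    intro K hK
    by_contra hcon
    push Not at hcon
    have h1 : C * Real.logb 2 n ≤ K.card := by
      have := Nat.le_ceil (C * Real.logb 2 n)
      have h2 : (⌈C * Real.logb 2 n⌉₊ : ℝ) ≤ K.card := by exact_mod_cast (by omega)
      linarith
    obtain ⟨g1, g2⟩ := hG K h1
    rcases hK with hK | hK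
    · apply g2
      intro a ha b hb hab
      have := hK a ha b hb hab
      rw [SimpleGraph.compl_adj]
      refine ⟨hab, fun hadj => ?_⟩
      simp [adjM, hadj] at this
    · apply g1
      intro a ha b hb hab
      have := hK a ha b hb hab
      by_contra hadj
      simp [adjM, hadj] at this
  have hk0 : 0 < k := by
    have : (0:ℝ) < k := lt_of_lt_of_le (by positivity) hk1
    exact_mod_cast this
  have hkn : k < n := by
    have : (k:ℝ) < n := by nlinarith
    exact_mod_cast this
  have hσ : c ^ 2 ≤ (k:ℝ) / n * (1 - (k:ℝ) / n) := by
    have a1 : c ≤ (k:ℝ) / n := by rw [le_div_iff₀ hn0]; exact hk1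
    have a2 : (k:ℝ) / n ≤ 1 - c := by rw [div_le_iff₀ hn0]; exact hk2
    rw [sq]
    exact mul_le_mul a1 (by linarith) hc.le (by positivity)
  have hmain := main_mid (M := adjM G) (X := fun U => (inducedEdgeCount G U : ℤ))
    (fun a b => by unfold adjM; split_ifs <;> simp) (adjM_symm G) (fun U W hd => by convert iec_union G U W hd) n (by simp) l L hl1
    (by omega) hHom u h (c ^ 2) ?_ hu ?_ hpl1 hpl2 (by positivity) ?_ ?_ ?_ k hk0 hkn hσ x
  · refine hmain.trans ?_
    rw [hpw, Real.rpow_sub_one hn0.ne']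
    refine div_le_div_of_nonneg_right ?_ hn0.le
    exact Real.rpow_le_rpow_of_exponent_le hnR (by push_cast; linarith)
  · rw [hhd, ← Real.rpow_natCast, ← Real.rpow_mul hn0.le]
    norm_num
  · rw [hpw, hhd]
    exact Real.rpow_le_rpow_of_exponent_le hnR (by push_cast; linarith)
  · refine exp_le_of _ _ n hn1 ?_
    rw [hpw]; exact he1
  · rw [show u ^ 2 / 2 = (1 / 2) * u ^ 2 by ring]
    refine exp_le_of _ _ n hn1 ?_
    rw [hpw]; exact he2
  · rw [hpw, ← Real.rpow_natCast]
    exact Real.rpow_le_rpow_of_exponent_le hnR (by push_cast; linarith)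

end FinalPart

theorem statement2 (C c η : ℝ) (hC : 0 < C) (hc : 0 < c) (hη : 0 < η) :
    ∃ n₀ : ℕ, ∀ n : ℕ, n₀ ≤ n → ∀ G : SimpleGraph (Fin n), IsCRamsey C G →
      ∀ k : ℕ, c * n ≤ (k : ℝ) → (k : ℝ) ≤ (1 - c) * n → ∀ x : ℤ,
        -- Pr(X = x) for the edge count X of a uniformly random k-subset of vertices
        (Nat.card {s : Finset (Fin n) | s.card = k ∧ (inducedEdgeCount G s : ℤ) = x} : ℝ)
            / (n.choose k) ≤ (n : ℝ) ^ (η - 1) := by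
  obtain ⟨n₀, h⟩ := main_thm C c η hC hc hη
  refine ⟨n₀, fun n hn G hG k hk1 hk2 x => ?_⟩
  refine le_trans (le_of_eq ?_) (h n hn G hG k hk1 hk2 x)
  congr 2
  rw [Nat.card_eq_card_toFinset]
  congr 1
  ext e
  simp
end

section
/- For any fixed integer h ≥ 1 and any fixed constant C > 0, there is δ = δ(h,C) > 0 such that the following holds for all sufficiently large n: every n-vertex C-Ramsey graph G contains at least δn^h induced copies of every graph H on h vertices (i.e., at least δn^h ordered h-tuples of distinct vertices of G on which the induced subgraph is isomorphic to H via the given ordering). -/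
open Classical in
/-- Clique number of `G` inside `W`. -/
noncomputable def cl {V : Type} (G : SimpleGraph V) (W : Finset V) : ℕ :=
  (W.powerset.filter (fun S : Finset V => G.IsClique (S : Set V))).sup Finset.card

open Classical in
/-- Neighbours of `x` in `Y`. -/
noncomputable def nb {V : Type} (G : SimpleGraph V) (x : V) (Y : Finset V) : Finset V :=
  Y.filter (fun y => G.Adj x y)

theorem mem_nb {V : Type} (G : SimpleGraph V) (x y : V) (Y : Finset V) :
    y ∈ nb G x Y ↔ y ∈ Y ∧ G.Adj x y := by
  classical
  simp [nb]

theorem nb_subset {V : Type} (G : SimpleGraph V) (x : V) (Y : Finset V) : nb G x Y ⊆ Y := by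
  intro y hy
  exact ((mem_nb G x y Y).1 hy).1

theorem le_cl {V : Type} (G : SimpleGraph V) {W S : Finset V} (h : S ⊆ W)
    (hS : G.IsClique (S : Set V)) : S.card ≤ cl G W := by
  classical
  unfold cl
  exact Finset.le_sup (f := Finset.card) (by simp [h, hS])

theorem exists_cl {V : Type} (G : SimpleGraph V) (W : Finset V) :
    ∃ S ⊆ W, G.IsClique (S : Set V) ∧ S.card = cl G W := by
  classical
  have hne : (W.powerset.filter (fun S : Finset V => G.IsClique (S : Set V))).Nonempty :=
    ⟨∅, by simp⟩
  obtain ⟨S, hS, h⟩ := Finset.exists_mem_eq_sup _ hne Finset.card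
  simp only [Finset.mem_filter, Finset.mem_powerset] at hS
  exact ⟨S, hS.1, hS.2, h.symm⟩

theorem cl_mono {V : Type} (G : SimpleGraph V) {W X : Finset V} (h : X ⊆ W) :
    cl G X ≤ cl G W := by
  obtain ⟨S, hS, hc, he⟩ := exists_cl G X
  rw [← he]
  exact le_cl G (hS.trans h) hc

theorem cl_nb {V : Type} (G : SimpleGraph V) {U : Finset V} {v : V} (hv : v ∈ U) :
    cl G (nb G v U) + 1 ≤ cl G U := by
  classical
  obtain ⟨S, hS, hc, he⟩ := exists_cl G (nb G v U)
  have hvS : v ∉ S := by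
    intro h
    have := (mem_nb G v v U).1 (hS h)
    exact G.loopless.irrefl v this.2
  rw [← he, ← Finset.card_insert_of_notMem hvS]
  apply le_cl
  · intro y hy
    rcases Finset.mem_insert.1 hy with rfl | hy
    · exact hv
    · exact nb_subset _ _ _ (hS hy)
  · rw [Finset.coe_insert]
    apply hc.insert
    intro b hb _
    exact ((mem_nb G v b U).1 (hS hb)).2

/-- Off-diagonal Ramsey bound in exponential form. -/
theorem ramsey_bound {V : Type} (G : SimpleGraph V) (p : ℝ) (hp : 0 < p) (hp1 : p < 1) :
    ∀ (k : ℕ) (U : Finset V) (s t : ℕ), U.card = k → cl Gᶜ U ≤ s → cl G U ≤ t →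
      (U.card : ℝ) + 1 ≤ (1 / p) ^ s * (1 / (1 - p)) ^ t := by
  classical
  intro k
  induction k using Nat.strong_induction_on with
  | _ k ih =>
  intro U s t hk hs ht
  have h1 : 1 ≤ 1 / p := by rw [le_div_iff₀ hp]; linarith
  have h2 : 1 ≤ 1 / (1 - p) := by rw [le_div_iff₀ (by linarith)]; linarith
  rcases U.eq_empty_or_nonempty with rfl | ⟨v, hv⟩
  · have := one_le_pow₀ h1 (n := s)
    have := one_le_pow₀ h2 (n := t)
    simp only [Finset.card_empty, Nat.cast_zero, zero_add]
    nlinarith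
  · have hN := cl_nb G hv
    have hM := cl_nb Gᶜ hv
    have hdecomp : U = insert v (nb G v U ∪ nb Gᶜ v U) := by
      ext y
      simp only [Finset.mem_insert, Finset.mem_union, mem_nb, SimpleGraph.compl_adj]
      by_cases hyv : y = v
      · subst hyv; simp [hv]
      · have : v ≠ y := fun h => hyv h.symm
        tauto
    have hdisj : Disjoint (nb G v U) (nb Gᶜ v U) := by
      rw [Finset.disjoint_left]
      intro y h1 h2
      rw [mem_nb] at h1 h2
      rw [SimpleGraph.compl_adj] at h2
      exact h2.2.2 h1.2
    have hvn : v ∉ nb G v U ∪ nb Gᶜ v U := by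
      simp [mem_nb]
    have hcard : U.card = (nb G v U).card + (nb Gᶜ v U).card + 1 := by
      conv_lhs => rw [hdecomp]
      rw [Finset.card_insert_of_notMem hvn, Finset.card_union_of_disjoint hdisj]
    obtain ⟨s', rfl⟩ : ∃ s', s = s' + 1 := ⟨s - 1, by omega⟩
    obtain ⟨t', rfl⟩ : ∃ t', t = t' + 1 := ⟨t - 1, by omega⟩
    have e1 := ih _ (by omega) (nb G v U) (s' + 1) t' rfl
      ((cl_mono _ (nb_subset _ _ _)).trans hs) (by omega)
    have e2 := ih _ (by omega) (nb Gᶜ v U) s' (t' + 1) rfl (by omega)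
      ((cl_mono _ (nb_subset _ _ _)).trans ht)
    have hid : (1 / p) ^ (s' + 1) * (1 / (1 - p)) ^ (t' + 1) =
        (1 / p) ^ (s' + 1) * (1 / (1 - p)) ^ t' + (1 / p) ^ s' * (1 / (1 - p)) ^ (t' + 1) := by
      have : (1 - p) ≠ 0 := by linarith
      have hpne := hp.ne'
      rw [pow_succ, pow_succ]
      have : (1 / p) * (1 / (1 - p)) = 1 / p + 1 / (1 - p) := by
        field_simp
        ring
      linear_combination (1 / p) ^ s' * (1 / (1 - p)) ^ t' * this
    rw [hid, hcard]
    push_cast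
    linarith

theorem esz {V : Type} (G : SimpleGraph V) (p ε L D : ℝ) (hp : 0 < p) (hp1 : p ≤ 1 / 2)
    (hε : 0 < ε) (hL : 0 < L) (W X Y : Finset V) (hX : X ⊆ W) (hY : Y ⊆ W)
    (hXY : ∀ x ∈ X, ((nb G x Y).card : ℝ) ≤ ε * Y.card)
    (hω : (cl G W : ℝ) ≤ L) (hα : (cl Gᶜ W : ℝ) ≤ L)
    (hD : (cl Gᶜ W : ℝ) ≤ cl Gᶜ X + D) :
    (Y.card : ℝ) / 2 - L ≤ Real.exp (3 * p * L + Real.log (1 / p) * (D + 4 * ε * L)) := by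
  classical
  obtain ⟨I, hIX, hIc, hIcard⟩ := exists_cl Gᶜ X
  set lam := Real.log (1 / p) with hlam
  have h1p : 1 ≤ 1 / p := by rw [le_div_iff₀ hp]; linarith
  have hlam0 : 0 ≤ lam := Real.log_nonneg h1p
  have hexplam : Real.exp lam = 1 / p := Real.exp_log (by positivity)
  have hIL : (I.card : ℝ) ≤ L := by
    rw [hIcard]
    exact le_trans (by exact_mod_cast cl_mono Gᶜ hX) hα
  set Sy : V → Finset V := fun y => I.filter (fun x => G.Adj x y) with hSy
  set Yb := Y.filter (fun y => 2 * ε * L < ((Sy y).card : ℝ)) with hYb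
  set Y' := (Y \ I).filter (fun y => ((Sy y).card : ℝ) ≤ 2 * ε * L) with hY'
  have hdc : (∑ y ∈ Y, ((Sy y).card : ℝ)) = ∑ x ∈ I, ((nb G x Y).card : ℝ) := by
    have := Finset.sum_card_bipartiteAbove_eq_sum_card_bipartiteBelow (s := I) (t := Y)
      (fun x y => G.Adj x y)
    have h2 : ∑ x ∈ I, (nb G x Y).card = ∑ y ∈ Y, (Sy y).card := by
      convert this using 1
      · refine Finset.sum_congr rfl fun x _ => congrArg Finset.card ?_
        ext y
        simp [mem_nb, Finset.bipartiteAbove]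
      · refine Finset.sum_congr rfl fun x _ => congrArg Finset.card ?_
        ext y
        simp [hSy, Finset.bipartiteBelow]
    exact_mod_cast h2.symm
  have hbad : (Yb.card : ℝ) ≤ Y.card / 2 := by
    have a1 : (Yb.card : ℝ) * (2 * ε * L) ≤ ∑ y ∈ Yb, ((Sy y).card : ℝ) := by
      rw [← nsmul_eq_mul]
      apply Finset.card_nsmul_le_sum
      intro y hy
      exact (Finset.mem_filter.1 hy).2.le
    have a2 : ∑ y ∈ Yb, ((Sy y).card : ℝ) ≤ ∑ y ∈ Y, ((Sy y).card : ℝ) :=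
      Finset.sum_le_sum_of_subset_of_nonneg (Finset.filter_subset _ _)
        (fun _ _ _ => Nat.cast_nonneg _)
    have a3 : ∑ x ∈ I, ((nb G x Y).card : ℝ) ≤ I.card * (ε * Y.card) := by
      rw [← nsmul_eq_mul]
      apply Finset.sum_le_card_nsmul
      intro x hx
      exact hXY x (hIX hx)
    have a4 : (I.card : ℝ) * (ε * Y.card) ≤ L * (ε * Y.card) :=
      mul_le_mul_of_nonneg_right hIL (by positivity)
    have a5 : (Yb.card : ℝ) * (2 * ε * L) ≤ (Y.card / 2) * (2 * ε * L) := by linarith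
    exact le_of_mul_le_mul_right a5 (by positivity)
  have hY'card : (Y.card : ℝ) / 2 - L ≤ Y'.card := by
    have hsub : Y ⊆ Yb ∪ I ∪ Y' := by
      intro y hy
      by_cases hyI : y ∈ I
      · simp [hyI]
      · rcases lt_or_ge (2 * ε * L) ((Sy y).card : ℝ) with h | h
        · have : y ∈ Yb := Finset.mem_filter.2 ⟨hy, h⟩
          simp [this]
        · have : y ∈ Y' := Finset.mem_filter.2 ⟨Finset.mem_sdiff.2 ⟨hy, hyI⟩, h⟩
          simp [this]
    have h1 : Y.card ≤ Yb.card + I.card + Y'.card :=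
      (Finset.card_le_card hsub).trans ((Finset.card_union_le _ _).trans
        (Nat.add_le_add_right (Finset.card_union_le _ _) _))
    have h2 : (Y.card : ℝ) ≤ Yb.card + I.card + Y'.card := by exact_mod_cast h1
    linarith
  set Small := I.powerset.filter (fun S => (S.card : ℝ) ≤ 2 * ε * L) with hSmall
  set B := Real.exp (lam * (D + 2 * ε * L) + 2 * p * L) with hB
  have hfib : ∀ S ∈ Small, ((Y'.filter (fun y => Sy y = S)).card : ℝ) ≤ B := by
    intro S hS
    obtain ⟨hSI, hSc⟩ := Finset.mem_filter.1 hS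
    rw [Finset.mem_powerset] at hSI
    set U := Y'.filter (fun y => Sy y = S) with hU
    have hUW : U ⊆ W := by
      intro y hy
      have := (Finset.mem_filter.1 ((Finset.mem_filter.1 hy).1)).1
      exact hY (Finset.mem_sdiff.1 this).1
    obtain ⟨J, hJU, hJc, hJcard⟩ := exists_cl Gᶜ U
    have hJI : Disjoint (I \ S) J := by
      rw [Finset.disjoint_left]
      intro y hy hyJ
      have := (Finset.mem_filter.1 ((Finset.mem_filter.1 (hJU hyJ)).1)).1
      exact (Finset.mem_sdiff.1 this).2 (Finset.mem_sdiff.1 hy).1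
    have hind : Gᶜ.IsClique (((I \ S) ∪ J : Finset V) : Set V) := by
      intro a ha b hb hab
      have key : ∀ x ∈ I \ S, ∀ y ∈ J, Gᶜ.Adj x y := by
        intro x hx y hy
        obtain ⟨hxI, hxS⟩ := Finset.mem_sdiff.1 hx
        have hSyy : Sy y = S := (Finset.mem_filter.1 (hJU hy)).2
        rw [SimpleGraph.compl_adj]
        refine ⟨?_, ?_⟩
        · rintro rfl
          exact Finset.disjoint_left.1 hJI hx hy
        · intro hadj
          apply hxS
          rw [← hSyy]
          exact Finset.mem_filter.2 ⟨hxI, hadj⟩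
      rw [Finset.mem_coe, Finset.mem_union] at ha hb
      rcases ha with ha | ha <;> rcases hb with hb | hb
      · exact hIc (Finset.mem_sdiff.1 ha).1 (Finset.mem_sdiff.1 hb).1 hab
      · exact key a ha b hb
      · exact (key b hb a ha).symm
      · exact hJc ha hb hab
    have hle := le_cl Gᶜ (W := W) (S := (I \ S) ∪ J) (by
      apply Finset.union_subset
      · exact Finset.sdiff_subset.trans (hIX.trans hX)
      · exact hJU.trans hUW) hind
    rw [Finset.card_union_of_disjoint hJI] at hle
    have hIS : (I \ S).card + S.card = I.card := Finset.card_sdiff_add_card_eq_card hSI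
    have hαU : (cl Gᶜ U : ℝ) ≤ D + 2 * ε * L := by
      have h1 : ((I \ S).card : ℝ) + J.card ≤ cl Gᶜ W := by exact_mod_cast hle
      have h2 : ((I \ S).card : ℝ) + S.card = I.card := by exact_mod_cast hIS
      have h3 : (I.card : ℝ) = cl Gᶜ X := by exact_mod_cast hIcard
      have h4 : (J.card : ℝ) = cl Gᶜ U := by exact_mod_cast hJcard
      linarith
    have hωU : (cl G U : ℝ) ≤ L := le_trans (by exact_mod_cast cl_mono G hUW) hω
    have hr := ramsey_bound G p hp (by linarith) _ U _ _ rfl le_rfl le_rfl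
    have e1 : (1 / p) ^ (cl Gᶜ U) ≤ Real.exp (lam * (D + 2 * ε * L)) := by
      rw [← hexplam, ← Real.exp_nat_mul]
      apply Real.exp_le_exp.2
      rw [mul_comm]
      exact mul_le_mul_of_nonneg_left hαU hlam0
    have e2 : (1 / (1 - p)) ^ (cl G U) ≤ Real.exp (2 * p * L) := by
      have h1 : 1 / (1 - p) ≤ Real.exp (2 * p) := by
        have := Real.add_one_le_exp (2 * p)
        refine le_trans ?_ this
        rw [div_le_iff₀ (by linarith)]
        nlinarith
      calc (1 / (1 - p)) ^ (cl G U) ≤ (Real.exp (2 * p)) ^ (cl G U) :=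
            pow_le_pow_left₀ (by apply div_nonneg <;> linarith) h1 _
        _ = Real.exp (cl G U * (2 * p)) := by rw [← Real.exp_nat_mul]
        _ ≤ _ := by
            apply Real.exp_le_exp.2
            rw [mul_comm]
            exact mul_le_mul_of_nonneg_left hωU (by positivity)
    have e3 : (1 / p) ^ (cl Gᶜ U) * (1 / (1 - p)) ^ (cl G U) ≤ B := by
      rw [hB, Real.exp_add]
      exact mul_le_mul e1 e2 (pow_nonneg (by apply div_nonneg <;> linarith) _)
        (Real.exp_pos _).le
    linarith
  have hsmallcard : (Small.card : ℝ) ≤ Real.exp (p * L + lam * (2 * ε * L)) := by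
    have h1 : ∀ S ∈ Small, (1 : ℝ) ≤ p ^ S.card * Real.exp (lam * (2 * ε * L)) := by
      intro S hS
      obtain ⟨_, hSc⟩ := Finset.mem_filter.1 hS
      have hpe : p = Real.exp (-lam) := by
        rw [Real.exp_neg, hexplam]; simp
      have : p ^ S.card = Real.exp (S.card * (-lam)) := by
        rw [Real.exp_nat_mul, ← hpe]
      rw [this, ← Real.exp_add]
      apply Real.one_le_exp
      nlinarith
    have h2 : ∑ S ∈ I.powerset, p ^ S.card = (1 + p) ^ I.card := by
      have := Finset.prod_one_add (R := ℝ) (f := fun _ : V => p) I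
      simpa using this.symm
    calc (Small.card : ℝ) = ∑ S ∈ Small, (1 : ℝ) := by simp
      _ ≤ ∑ S ∈ Small, p ^ S.card * Real.exp (lam * (2 * ε * L)) := Finset.sum_le_sum h1
      _ ≤ ∑ S ∈ I.powerset, p ^ S.card * Real.exp (lam * (2 * ε * L)) :=
          Finset.sum_le_sum_of_subset_of_nonneg (Finset.filter_subset _ _)
            (fun _ _ _ => by positivity)
      _ = (1 + p) ^ I.card * Real.exp (lam * (2 * ε * L)) := by rw [← Finset.sum_mul, h2]
      _ ≤ Real.exp (p * L) * Real.exp (lam * (2 * ε * L)) := by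
          apply mul_le_mul_of_nonneg_right _ (Real.exp_pos _).le
          calc (1 + p) ^ I.card ≤ (Real.exp p) ^ I.card := by
                apply pow_le_pow_left₀ (by linarith)
                have := Real.add_one_le_exp p
                linarith
            _ = Real.exp (I.card * p) := by rw [← Real.exp_nat_mul]
            _ ≤ _ := by
                apply Real.exp_le_exp.2
                rw [mul_comm]
                exact mul_le_mul_of_nonneg_left hIL hp.le
      _ = _ := by rw [← Real.exp_add]
  have hmaps : ∀ y ∈ Y', Sy y ∈ Small := by
    intro y hy
    exact Finset.mem_filter.2 ⟨Finset.mem_powerset.2 (Finset.filter_subset _ _),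
      (Finset.mem_filter.1 hy).2⟩
  have hY'sum : (Y'.card : ℝ) ≤ Small.card * B := by
    rw [Finset.card_eq_sum_card_fiberwise (f := Sy) (t := Small) hmaps]
    push_cast
    rw [← nsmul_eq_mul]
    exact Finset.sum_le_card_nsmul _ _ _ hfib
  calc (Y.card : ℝ) / 2 - L ≤ Y'.card := hY'card
    _ ≤ Small.card * B := hY'sum
    _ ≤ Real.exp (p * L + lam * (2 * ε * L)) * B :=
        mul_le_mul_of_nonneg_right hsmallcard (Real.exp_pos _).le
    _ = _ := by
        rw [hB, ← Real.exp_add]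
        congr 1
        ring

open Classical in
/-- Induced (ordered) copies of `H` in `G` with `i` mapped into `U i`. -/
noncomputable def copies {V : Type} [Fintype V] (G : SimpleGraph V) {h : ℕ}
    (H : SimpleGraph (Fin h)) (U : Fin h → Finset V) : Finset (Fin h → V) :=
  Finset.univ.filter (fun f => (∀ i, f i ∈ U i) ∧ ∀ i j, i < j →
    (H.Adj i j → G.Adj (f i) (f j)) ∧ (¬ H.Adj i j → Gᶜ.Adj (f i) (f j)))

theorem mem_copies {V : Type} [Fintype V] (G : SimpleGraph V) {h : ℕ}
    (H : SimpleGraph (Fin h)) (U : Fin h → Finset V) (f : Fin h → V) :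
    f ∈ copies G H U ↔ (∀ i, f i ∈ U i) ∧ ∀ i j, i < j →
    (H.Adj i j → G.Adj (f i) (f j)) ∧ (¬ H.Adj i j → Gᶜ.Adj (f i) (f j)) := by
  classical
  simp [copies]

theorem embed (h : ℕ) (ε : ℝ) (hε : 0 < ε) : ∀ u : ℝ, 0 < u →
    ∃ c κ : ℝ, 0 < c ∧ c ≤ 1 ∧ 0 < κ ∧ ∀ (V : Type) [Fintype V] (G : SimpleGraph V)
      (W : Finset V) (M : ℝ), 0 ≤ M →
      (∀ X Y : Finset V, X ⊆ W → Y ⊆ W → c * M ≤ X.card → c * M ≤ Y.card →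
        (∃ x ∈ X, ε * Y.card < (nb G x Y).card) ∧ (∃ x ∈ X, ε * Y.card < (nb Gᶜ x Y).card)) →
      ∀ (H : SimpleGraph (Fin h)) (U : Fin h → Finset V), (∀ i, U i ⊆ W) →
        (∀ i, u * M ≤ (U i).card) → κ * M ^ h ≤ (copies G H U).card := by
  classical
  induction h with
  | zero =>
    intro u hu
    refine ⟨1, 1, one_pos, le_rfl, one_pos, ?_⟩
    intro V _ G W M hM _ H U _ _
    have : (fun i : Fin 0 => i.elim0 : Fin 0 → V) ∈ copies G H U := by
      rw [mem_copies]
      exact ⟨fun i => i.elim0, fun i => i.elim0⟩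
    have : 0 < (copies G H U).card := Finset.card_pos.2 ⟨_, this⟩
    have : (1 : ℝ) ≤ (copies G H U).card := by exact_mod_cast this
    simpa using this
  | succ h ih =>
    intro u hu
    obtain ⟨c', κ', hc', hc'1, hκ', ih⟩ := ih (ε * u) (by positivity)
    have hh1 : (0 : ℝ) < h + 1 := by positivity
    refine ⟨min c' (u / (h + 1)), u / (h + 1) * κ', lt_min hc' (by positivity),
      (min_le_left _ _).trans hc'1, by positivity, ?_⟩
    intro V _ G W M hM hB H U hUW hU
    set c := min c' (u / (h + 1)) with hc
    have hcu : c * M ≤ u / (h + 1) * M := mul_le_mul_of_nonneg_right (min_le_right _ _) hM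
    have hcc' : c * M ≤ c' * M := mul_le_mul_of_nonneg_right (min_le_left _ _) hM
    have huu : u / (h + 1) * M ≤ u * M := by
      apply mul_le_mul_of_nonneg_right _ hM
      apply div_le_self hu.le
      have : (0 : ℝ) ≤ h := by positivity
      linarith
    set Gs : Fin h → SimpleGraph V := fun j => if H.Adj 0 j.succ then G else Gᶜ with hGs
    set bad : Fin h → Finset V := fun j => (U 0).filter
      (fun x => ((nb (Gs j) x (U j.succ)).card : ℝ) ≤ ε * (U j.succ).card) with hbad
    have hbadc : ∀ j, ((bad j).card : ℝ) ≤ u / (h + 1) * M := by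
      intro j
      by_contra hcon
      push Not at hcon
      have := hB (bad j) (U j.succ) ((Finset.filter_subset _ _).trans (hUW 0)) (hUW _)
        (by linarith) (by have := hU j.succ; linarith)
      have hx : ∃ x ∈ bad j, ε * (U j.succ).card < (nb (Gs j) x (U j.succ)).card := by
        by_cases hadj : H.Adj 0 j.succ
        · simpa [hGs, hadj] using this.1
        · simpa [hGs, hadj] using this.2
      obtain ⟨x, hx, hlt⟩ := hx
      have := (Finset.mem_filter.1 hx).2
      linarith
    set good := U 0 \ Finset.univ.biUnion bad with hgood
    have hgoodc : u / (h + 1) * M ≤ good.card := by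
      have h1 : (U 0).card ≤ good.card + (Finset.univ.biUnion bad).card := by
        have := Finset.le_card_sdiff (Finset.univ.biUnion bad) (U 0)
        rw [← hgood] at this
        omega
      have h2 : ((Finset.univ.biUnion bad).card : ℝ) ≤ h * (u / (h + 1) * M) := by
        have : (Finset.univ.biUnion bad).card ≤ ∑ j, (bad j).card := Finset.card_biUnion_le
        have h3 : ((Finset.univ.biUnion bad).card : ℝ) ≤ ∑ j, ((bad j).card : ℝ) := by
          exact_mod_cast this
        refine h3.trans ?_
        have := Finset.sum_le_card_nsmul (Finset.univ : Finset (Fin h))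
          (fun j => ((bad j).card : ℝ)) _ (fun j _ => hbadc j)
        simpa using this
      have h4 : ((U 0).card : ℝ) ≤ good.card + (Finset.univ.biUnion bad).card := by
        exact_mod_cast h1
      have h5 := hU 0
      have h6 : u * M = (h + 1) * (u / (h + 1) * M) := by field_simp
      linarith
    set H' : SimpleGraph (Fin h) := H.comap Fin.succ with hH'
    set U' : V → Fin h → Finset V := fun v j => nb (Gs j) v (U j.succ) with hU'
    have hstep : ∀ v ∈ good, κ' * M ^ h ≤ ((copies G H' (U' v)).card : ℝ) := by
      intro v hv
      apply ih V G W M hM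
      · intro X Y hX hY h1 h2
        exact hB X Y hX hY (hcc'.trans h1) (hcc'.trans h2)
      · intro i
        exact (nb_subset _ _ _).trans (hUW _)
      · intro i
        obtain ⟨hv0, hvb⟩ := Finset.mem_sdiff.1 hv
        have : v ∉ bad i := fun hb => hvb (Finset.mem_biUnion.2 ⟨i, Finset.mem_univ _, hb⟩)
        have h1 : ε * (U i.succ).card < (nb (Gs i) v (U i.succ)).card := by
          by_contra hcon
          push Not at hcon
          exact this (Finset.mem_filter.2 ⟨hv0, hcon⟩)
        have h2 := mul_le_mul_of_nonneg_left (hU i.succ) hε.le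
        have : ε * u * M = ε * (u * M) := by ring
        rw [this]
        exact h2.trans h1.le
    have hinj : (good.sigma (fun v => copies G H' (U' v))).card ≤ (copies G H U).card := by
      apply Finset.card_le_card_of_injOn
        (fun a => (Fin.cons a.1 a.2 : Fin (h + 1) → V))
      · rintro ⟨v, g⟩ ha
        obtain ⟨hv, hg⟩ := Finset.mem_sigma.1 ha
        simp only at hv hg
        rw [mem_copies] at hg
        obtain ⟨hg1, hg2⟩ := hg
        rw [Finset.mem_coe, mem_copies]
        refine ⟨?_, ?_⟩
        · intro i
          refine Fin.cases ?_ (fun j => ?_) i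
          · exact (Finset.mem_sdiff.1 hv).1
          · exact nb_subset _ _ _ (hg1 j)
        · intro i j hij
          induction i using Fin.cases with
          | zero =>
            induction j using Fin.cases with
            | zero => exact absurd hij (lt_irrefl _)
            | succ j =>
              have hj := ((mem_nb _ _ _ _).1 (hg1 j)).2
              simp only [Fin.cons_zero, Fin.cons_succ]
              refine ⟨fun ha => ?_, fun ha => ?_⟩
              · simpa only [hGs, if_pos ha] using hj
              · simpa only [hGs, if_neg ha] using hj
          | succ i =>
            induction j using Fin.cases with
            | zero => exact absurd hij (Fin.not_lt_zero _)
            | succ j =>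
              simp only [Fin.cons_succ]
              exact hg2 i j (Fin.succ_lt_succ_iff.1 hij)
      · rintro ⟨v, g⟩ _ ⟨v', g'⟩ _ heq
        simp only at heq
        obtain ⟨rfl, rfl⟩ := Fin.cons_inj.1 heq
        rfl
    rw [Finset.card_sigma] at hinj
    have hfin : (∑ v ∈ good, ((copies G H' (U' v)).card : ℝ)) ≤ (copies G H U).card := by
      exact_mod_cast hinj
    have hsum := Finset.card_nsmul_le_sum good
      (fun v => ((copies G H' (U' v)).card : ℝ)) _ hstep
    rw [nsmul_eq_mul] at hsum
    calc u / (h + 1) * κ' * M ^ (h + 1) = (u / (h + 1) * M) * (κ' * M ^ h) := by ring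
      _ ≤ good.card * (κ' * M ^ h) := mul_le_mul_of_nonneg_right hgoodc (by positivity)
      _ ≤ _ := hsum.trans hfin

theorem growth (C β : ℝ) (hβ : 0 < β) : ∃ n₀ : ℕ, ∀ n : ℕ, n₀ ≤ n →
    2 ≤ n ∧ C * Real.logb 2 n + Real.exp (Real.logb 2 n / 4) < β * n / 2 := by
  have h1 : (fun n : ℝ => C * Real.logb 2 n) =o[Filter.atTop] (fun n : ℝ => n) := by
    have := (Real.isLittleO_log_id_atTop).const_mul_left (C / Real.log 2)
    refine this.congr' ?_ ?_
    · filter_upwards with x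
      rw [Real.logb]; ring
    · rfl
  have h2 : (fun n : ℝ => n ^ (1 / 2 : ℝ)) =o[Filter.atTop] (fun n : ℝ => n) := by
    have h0 := tendsto_rpow_neg_atTop (y := (1 / 2 : ℝ)) (by norm_num)
    refine (Asymptotics.isLittleO_iff_tendsto' ?_).2 (h0.congr' ?_)
    · filter_upwards [Filter.eventually_gt_atTop (0 : ℝ)] with x hx h
      exact absurd h hx.ne'
    · filter_upwards [Filter.eventually_gt_atTop (0 : ℝ)] with x hx
      rw [eq_div_iff hx.ne']
      nth_rewrite 2 [← Real.rpow_one x]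
      rw [← Real.rpow_add hx]
      norm_num
  have h3 := ((h1.add h2).bound (show 0 < β / 4 by positivity))
  have h4 := (tendsto_natCast_atTop_atTop (R := ℝ)).eventually h3
  have h5 := h4.and (Filter.eventually_ge_atTop 2)
  obtain ⟨n₀, hn₀⟩ := Filter.eventually_atTop.1 h5
  refine ⟨n₀, fun n hn => ?_⟩
  obtain ⟨h6, h7⟩ := hn₀ n hn
  refine ⟨h7, ?_⟩
  have hnpos : (0 : ℝ) < n := by
    have : (2 : ℝ) ≤ n := by exact_mod_cast h7
    linarith
  have hexp : Real.exp (Real.logb 2 n / 4) ≤ (n : ℝ) ^ (1 / 2 : ℝ) := by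
    rw [Real.rpow_def_of_pos hnpos]
    apply Real.exp_le_exp.2
    have hl2 : 1 / 2 < Real.log 2 := by have := Real.log_two_gt_d9; linarith
    have hln : 0 ≤ Real.log n := Real.log_nonneg (by exact_mod_cast (by omega : 1 ≤ n))
    rw [Real.logb, div_div, div_le_iff₀ (by positivity)]
    nlinarith
  rw [Real.norm_eq_abs, Real.norm_eq_abs, abs_of_pos hnpos] at h6
  have h8 := le_trans (le_abs_self _) h6
  have : β * n > 0 := by positivity
  linarith

theorem main_step (h : ℕ) (C : ℝ) (hC : 0 < C) :
    ∃ η c κ : ℝ, 0 < η ∧ 0 < c ∧ c ≤ 1 ∧ 0 < κ ∧ ∀ β : ℝ, 0 < β → ∃ n₀ : ℕ, ∀ n : ℕ, n₀ ≤ n →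
      2 ≤ n ∧ ∀ G : SimpleGraph (Fin n), IsCRamsey C G → ∀ H : SimpleGraph (Fin h),
        ∀ W : Finset (Fin n), β * n ≤ c * W.card →
          ((copies G H (fun _ => W)).card : ℝ) < κ * (W.card : ℝ) ^ h →
          ∃ X ⊆ W, c * W.card ≤ X.card ∧
            (cl G X : ℝ) + cl Gᶜ X + η * Real.logb 2 n ≤ cl G W + cl Gᶜ W := by
  obtain ⟨p, hp, hp1, hpC⟩ : ∃ p : ℝ, 0 < p ∧ p ≤ 1 / 2 ∧ 3 * p * C ≤ 1 / 8 := by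
    refine ⟨min (1 / 2) (1 / (24 * C)), lt_min (by norm_num) (by positivity), min_le_left _ _, ?_⟩
    have := mul_le_mul_of_nonneg_right (min_le_right (1 / 2) (1 / (24 * C))) hC.le
    have h2 : 1 / (24 * C) * C = 1 / 24 := by field_simp
    linarith
  set lam := Real.log (1 / p) with hlam
  have hlam0 : 0 < lam := by
    apply Real.log_pos
    rw [lt_div_iff₀ hp]
    linarith
  set η := 1 / (16 * lam) with hη
  set ε := 1 / (64 * C * lam) with hε
  have hη0 : 0 < η := by positivity
  have hε0 : 0 < ε := by positivity
  have hsum : lam * (η + 4 * ε * C) = 1 / 8 := by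
    rw [hη, hε]
    field_simp
    norm_num
  obtain ⟨c, κ, hc, hc1, hκ, hemb⟩ := embed h ε hε0 1 one_pos
  refine ⟨η, c, κ, hη0, hc, hc1, hκ, ?_⟩
  intro β hβ
  obtain ⟨n₀, hn₀⟩ := growth C β hβ
  refine ⟨n₀, fun n hn => ?_⟩
  obtain ⟨hn2, hgr⟩ := hn₀ n hn
  refine ⟨hn2, ?_⟩
  intro G hG H W hW hcop
  set l := Real.logb 2 n with hl
  have hl0 : 0 < l := Real.logb_pos (by norm_num) (by exact_mod_cast (by omega : 1 < n))
  have hLG : ∀ Z, (cl G Z : ℝ) ≤ C * l := by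
    intro Z
    obtain ⟨S, _, hS, he⟩ := exists_cl G Z
    by_contra hcon
    push Not at hcon
    rw [← he] at hcon
    exact (hG S hcon.le).1 hS
  have hLGc : ∀ Z, (cl Gᶜ Z : ℝ) ≤ C * l := by
    intro Z
    obtain ⟨S, _, hS, he⟩ := exists_cl Gᶜ Z
    by_contra hcon
    push Not at hcon
    rw [← he] at hcon
    exact (hG S hcon.le).2 hS
  have key : ∀ K : SimpleGraph (Fin n), (∀ Z, (cl K Z : ℝ) ≤ C * l) →
      (∀ Z, (cl Kᶜ Z : ℝ) ≤ C * l) → ∀ X Y : Finset (Fin n), X ⊆ W → Y ⊆ W →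
      c * W.card ≤ Y.card → (∀ x ∈ X, ((nb K x Y).card : ℝ) ≤ ε * Y.card) →
      (cl K X : ℝ) + cl Kᶜ X + η * l ≤ cl K W + cl Kᶜ W := by
    intro K h1 h2 X Y hX hY hYc hXY
    have hm : (cl K X : ℝ) ≤ cl K W := by exact_mod_cast cl_mono K hX
    by_contra hcon
    push Not at hcon
    have hes := esz K p ε (C * l) (η * l) hp hp1 hε0 (by positivity) W X Y hX hY hXY
      (h1 W) (h2 W) (by linarith)
    have : 3 * p * (C * l) + Real.log (1 / p) * (η * l + 4 * ε * (C * l)) ≤ l / 4 := by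
      have e : 3 * p * (C * l) + Real.log (1 / p) * (η * l + 4 * ε * (C * l)) =
        (3 * p * C) * l + (lam * (η + 4 * ε * C)) * l := by rw [← hlam]; ring
      rw [e, hsum]
      nlinarith
    have := Real.exp_le_exp.2 this
    linarith
  have hex : ¬ (∀ X Y : Finset (Fin n), X ⊆ W → Y ⊆ W → c * (W.card : ℝ) ≤ X.card →
      c * (W.card : ℝ) ≤ Y.card →
        (∃ x ∈ X, ε * Y.card < (nb G x Y).card) ∧
        (∃ x ∈ X, ε * Y.card < (nb Gᶜ x Y).card)) := by
    intro hall
    have := hemb (Fin n) G W W.card (Nat.cast_nonneg _) hall H (fun _ => W)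
      (fun _ => subset_rfl) (fun _ => by simp)
    linarith
  push Not at hex
  obtain ⟨X, Y, hX, hY, hXc, hYc, hor⟩ := hex
  refine ⟨X, hX, hXc, ?_⟩
  by_cases hs : ∃ x ∈ X, ε * Y.card < (nb G x Y).card
  · have h1 := hor hs
    have := key Gᶜ hLGc (by rw [compl_compl]; exact hLG) X Y hX hY hYc h1
    rw [compl_compl] at this
    linarith
  · push Not at hs
    exact key G hLG hLGc X Y hX hY hYc hs

theorem statement5 (h : ℕ) (hh : 1 ≤ h) (C : ℝ) (hC : 0 < C) :
    ∃ δ : ℝ, 0 < δ ∧ ∃ n₀ : ℕ, ∀ n : ℕ, n₀ ≤ n → ∀ G : SimpleGraph (Fin n),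
      IsCRamsey C G → ∀ H : SimpleGraph (Fin h),
        δ * (n : ℝ) ^ h ≤
          (Nat.card {φ : Fin h → Fin n | Function.Injective φ ∧
            ∀ i j, G.Adj (φ i) (φ j) ↔ H.Adj i j} : ℝ) := by
  classical
  obtain ⟨η, c, κ, hη, hc, hc1, hκ, hstep⟩ := main_step h C hC
  obtain ⟨T, hT⟩ := exists_nat_gt (2 * C / η)
  rw [div_lt_iff₀ hη] at hT
  obtain ⟨n₀, hn₀⟩ := hstep (c ^ (T + 1)) (by positivity)
  refine ⟨κ * (c ^ T) ^ h, by positivity, n₀, ?_⟩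
  intro n hn G hG H
  obtain ⟨hn2, hst⟩ := hn₀ n hn
  by_contra hcon
  push Not at hcon
  have hcopies : ∀ W : Finset (Fin n), ((copies G H (fun _ => W)).card : ℝ) ≤
      (Nat.card {φ : Fin h → Fin n | Function.Injective φ ∧
            ∀ i j, G.Adj (φ i) (φ j) ↔ H.Adj i j} : ℝ) := by
    intro W
    have : (copies G H (fun _ => W)).card = Nat.card ((copies G H (fun _ => W) :
        Finset (Fin h → Fin n)) : Set (Fin h → Fin n)) := by simp
    rw [this]
    norm_cast
    apply Nat.card_mono (Set.toFinite _)
    intro f hf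
    rw [Finset.mem_coe, mem_copies] at hf
    have hf2 := hf.2
    have hne : ∀ i j, i < j → f i ≠ f j := by
      intro i j hij
      by_cases ha : H.Adj i j
      · exact ((hf2 i j hij).1 ha).ne
      · exact ((hf2 i j hij).2 ha).ne
    have hiff : ∀ i j, i < j → (G.Adj (f i) (f j) ↔ H.Adj i j) := by
      intro i j hij
      refine ⟨fun ha => ?_, (hf2 i j hij).1⟩
      by_contra hna
      have := (hf2 i j hij).2 hna
      rw [SimpleGraph.compl_adj] at this
      exact this.2 ha
    refine ⟨?_, ?_⟩
    · intro i j hij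
      rcases lt_trichotomy i j with h1 | h1 | h1
      · exact absurd hij (hne i j h1)
      · exact h1
      · exact absurd hij.symm (hne j i h1)
    · intro i j
      rcases lt_trichotomy i j with h1 | h1 | h1
      · exact hiff i j h1
      · subst h1; simp
      · rw [G.adj_comm, H.adj_comm]
        exact hiff j i h1
  set l := Real.logb 2 n with hl
  have hl0 : 0 < l := Real.logb_pos (by norm_num) (by exact_mod_cast (by omega : 1 < n))
  have hiter : ∀ t : ℕ, t ≤ T → ∃ W : Finset (Fin n), c ^ t * n ≤ W.card ∧
      (cl G W : ℝ) + cl Gᶜ W + t * (η * l) ≤ 2 * (C * l) := by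
    intro t
    induction t with
    | zero =>
      intro _
      refine ⟨Finset.univ, by simp, ?_⟩
      have h1 : (cl G Finset.univ : ℝ) ≤ C * l := by
        obtain ⟨S, _, hS, he⟩ := exists_cl G Finset.univ
        by_contra hcon
        push Not at hcon
        rw [← he] at hcon
        exact (hG S hcon.le).1 hS
      have h2 : (cl Gᶜ Finset.univ : ℝ) ≤ C * l := by
        obtain ⟨S, _, hS, he⟩ := exists_cl Gᶜ Finset.univ
        by_contra hcon
        push Not at hcon
        rw [← he] at hcon
        exact (hG S hcon.le).2 hS
      simp only [Nat.cast_zero, zero_mul, add_zero]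
      linarith
    | succ t ih =>
      intro ht
      obtain ⟨W, hW, hcl⟩ := ih (by omega)
      have hWT : c ^ T * n ≤ W.card := by
        refine le_trans ?_ hW
        exact mul_le_mul_of_nonneg_right (pow_le_pow_of_le_one hc.le hc1 (by omega))
          (Nat.cast_nonneg _)
      obtain ⟨X, _, hXc, hX⟩ := hst G hG H W (by
          rw [pow_succ]
          have := mul_le_mul_of_nonneg_left hWT hc.le
          linarith) (by
          refine lt_of_le_of_lt (hcopies W) (lt_of_lt_of_le hcon ?_)
          rw [mul_assoc, ← mul_pow]
          apply mul_le_mul_of_nonneg_left _ hκ.le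
          exact pow_le_pow_left₀ (by positivity) hWT _)
      refine ⟨X, ?_, ?_⟩
      · refine le_trans ?_ hXc
        have := mul_le_mul_of_nonneg_left hW hc.le
        rw [pow_succ]
        linarith
      · push_cast
        linarith
  obtain ⟨W, _, hW⟩ := hiter T le_rfl
  have h1 : (0 : ℝ) ≤ cl G W := Nat.cast_nonneg _
  have h2 : (0 : ℝ) ≤ cl Gᶜ W := Nat.cast_nonneg _
  nlinarith
end

section
/- For any integer r ≥ 1 and any 0 < ε ≤ 1, there is a constant c = c(r,ε) > 0 such that the following holds. Suppose v₁,…,v_r ∈ ℂⁿ are ε-independent vectors (over ℂ) with ‖v_i‖∞ ≤ 1 for each i, and let θ ∈ [−π, π] be a uniformly random phase. Then with probability at least c, the r×n real matrix with rows Re(e^{iθ}v₁),…,Re(e^{iθ}v_r) ∈ ℝⁿ is c-non-degenerate. -/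
/-- Vectors `v₁,…,v_q ∈ 𝔽ⁿ` are `ε`-independent if there do not exist linearly dependent
vectors `v₁',…,v_q'` with `‖v₁−v₁'‖₁ + … + ‖v_q−v_q'‖₁ ≤ εn`. -/
def EpsIndependent (𝔽 : Type*) [NormedField 𝔽] {q n : ℕ} (ε : ℝ)
    (v : Fin q → Fin n → 𝔽) : Prop :=
  ¬ ∃ v' : Fin q → Fin n → 𝔽, ¬ LinearIndependent 𝔽 v' ∧
      ∑ i, ∑ j, ‖v i j - v' i j‖ ≤ ε * n

/-- An `r × n` real matrix `M'` is `δ`-non-degenerate if for every Euclidean unit vector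
`e ∈ ℝ^r` there are at least `δn` columns `w` of `M'` with `|⟨w,e⟩| ≥ δ`. -/
def NonDeg {r n : ℕ} (δ : ℝ) (M' : Matrix (Fin r) (Fin n) ℝ) : Prop :=
  ∀ e : Fin r → ℝ, ∑ i, e i ^ 2 = 1 →
    δ * n ≤ (Nat.card {j : Fin n | δ ≤ |∑ i, M' i j * e i|} : ℝ)

namespace Aux12
open Finset Matrix
theorem det_mul_tuples {K : Type*} [CommRing K] {r n : ℕ} (A : Matrix (Fin r) (Fin n) K)
    (B : Matrix (Fin n) (Fin r) K) :
    (A * B).det = ∑ j : Fin r → Fin n, (∏ i, A i (j i)) * (B.submatrix j id).det := by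
  have h := (Matrix.detRowAlternating (R := K) (n := Fin r)).toMultilinearMap.map_sum
    (fun (i : Fin r) (k : Fin n) => A i k • B k)
  have e : (fun i => ∑ k, A i k • B k) = A * B := by
    ext i k; simp [Matrix.mul_apply]
  rw [e] at h
  refine h.trans (Finset.sum_congr rfl fun j _ => ?_)
  have := (Matrix.detRowAlternating (R := K) (n := Fin r)).toMultilinearMap.map_smul_univ
    (fun i => A i (j i)) (fun i => B (j i))
  exact this

theorem cauchy_binet {K : Type*} [CommRing K] {r n : ℕ} (A : Matrix (Fin r) (Fin n) K)
    (B : Matrix (Fin n) (Fin r) K) :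
    ∑ j : Fin r → Fin n, (A.submatrix id j).det * (B.submatrix j id).det
      = (r.factorial : K) * (A * B).det := by
  have h1 : ∀ j : Fin r → Fin n, (A.submatrix id j).det * (B.submatrix j id).det =
      ∑ σ : Equiv.Perm (Fin r), (∏ i, A (σ i) (j i)) *
        (B.submatrix (j ∘ σ.symm) id).det := by
    intro j
    rw [Matrix.det_apply', Finset.sum_mul]
    refine Finset.sum_congr rfl fun σ _ => ?_
    have := Matrix.det_permute σ.symm (B.submatrix j id)
    rw [Matrix.submatrix_submatrix] at this
    simp only [Function.comp_id] at this
    rw [this]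
    simp [Matrix.submatrix_apply]
    ring
  simp_rw [h1]
  rw [Finset.sum_comm]
  have h2 : ∀ σ : Equiv.Perm (Fin r), ∑ j : Fin r → Fin n, (∏ i, A (σ i) (j i)) *
        (B.submatrix (j ∘ σ.symm) id).det = (A * B).det := by
    intro σ
    rw [det_mul_tuples]
    refine Fintype.sum_equiv (Equiv.arrowCongr σ (Equiv.refl _)) _ _ fun j => ?_
    congr 1
    simp only [Equiv.arrowCongr_apply, Equiv.coe_refl, Function.id_comp]
    have := Equiv.prod_comp σ (fun x => A x (j (σ.symm x)))
    simp only [Equiv.symm_apply_apply] at this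
    exact this
  simp_rw [h2]
  simp [Fintype.card_perm]

theorem coeff_bound (r : ℕ) (p : Polynomial ℂ) (hp : p.natDegree ≤ r) (ζ z : ℂ)
    (hζ : IsPrimitiveRoot ζ (r+1)) (hz : ‖z‖ = 1) :
    ((r+1 : ℕ):ℝ) * ‖p.coeff r‖^2 ≤ ∑ k ∈ range (r+1), ‖p.eval (z * ζ^k)‖^2 := by
  have hζ1 : ‖ζ‖ = 1 := hζ.norm'_eq_one (by omega)
  have key : ∑ k ∈ range (r+1), p.eval (z * ζ^k) * ζ^k = ((r+1 : ℕ):ℂ) * (p.coeff r * z^r) := by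
    have h1 : ∀ k, p.eval (z * ζ^k) * ζ^k = ∑ m ∈ range (r+1), p.coeff m * z^m * (ζ^(m+1))^k := by
      intro k
      rw [Polynomial.eval_eq_sum_range' (n := r+1) (by omega), Finset.sum_mul]
      refine Finset.sum_congr rfl fun m _ => ?_
      rw [mul_pow, ← pow_mul, ← pow_mul]; ring
    simp_rw [h1]
    rw [Finset.sum_comm, Finset.sum_range_succ, Finset.sum_eq_zero, zero_add]
    · simp [hζ.pow_eq_one, mul_comm]
    · intro m hm
      rw [← Finset.mul_sum]
      have hne : ζ^(m+1) ≠ 1 := hζ.pow_ne_one_of_pos_of_lt (by omega) (by simp at hm; omega)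
      have hg := geom_sum_eq hne (r+1)
      rw [← pow_mul, mul_comm (m+1), pow_mul, hζ.pow_eq_one] at hg
      simp [hg]
  have h2 : ((r+1 : ℕ):ℝ) * ‖p.coeff r‖ ≤ ∑ k ∈ range (r+1), ‖p.eval (z * ζ^k)‖ := by
    have := congrArg norm key
    rw [norm_mul, norm_mul, norm_pow, hz, Complex.norm_natCast, one_pow, mul_one] at this
    rw [← this]
    refine (norm_sum_le _ _).trans (le_of_eq ?_)
    simp [hζ1]
  have h4 := sq_sum_le_card_mul_sum_sq (s := range (r+1)) (f := fun k => ‖p.eval (z * ζ^k)‖)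
  rw [card_range] at h4
  have h5 := (pow_le_pow_left₀ (by positivity) h2 2).trans h4
  rw [mul_pow, pow_two, mul_assoc] at h5
  exact le_of_mul_le_mul_left h5 (by positivity)

theorem eps_bound {r n : ℕ} {ε : ℝ} {v : Fin r → Fin n → ℂ} (hv : EpsIndependent ℂ ε v)
    (a : Fin r → ℂ) (i0 : Fin r) (h0 : a i0 ≠ 0) :
    ε * n * ‖a i0‖ ≤ ∑ j, ‖∑ i, a i * v i j‖ := by
  by_contra hcon
  push Not at hcon
  apply hv
  refine ⟨fun i j => v i j - if i = i0 then (∑ i, a i * v i j) / a i0 else 0, ?_, ?_⟩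
  · rw [Fintype.not_linearIndependent_iff]
    refine ⟨a, ?_, i0, h0⟩
    ext j
    simp [mul_sub, Finset.sum_sub_distrib]
    field_simp
    simp
  · rw [Finset.sum_eq_single i0]
    · simp only [if_true, sub_sub_cancel, norm_div]
      rw [← Finset.sum_div, div_le_iff₀ (norm_pos_iff.2 h0)]
      exact hcon.le
    · intro b _ hb
      simp [hb]
    · simp

theorem quad_bound {r n : ℕ} {ε : ℝ} (hε : 0 < ε) (hn : 0 < n) {v : Fin r → Fin n → ℂ}
    (hv : EpsIndependent ℂ ε v) (a : Fin r → ℂ) :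
    ε ^ 2 * n * ∑ i, ‖a i‖ ^ 2 ≤ r * ∑ j, ‖∑ i, a i * v i j‖ ^ 2 := by
  have h : ∀ i0, ε ^ 2 * n * ‖a i0‖ ^ 2 ≤ ∑ j, ‖∑ i, a i * v i j‖ ^ 2 := by
    intro i0
    by_cases h0 : a i0 = 0
    · simp only [h0]; simp; positivity
    have h1 := eps_bound hv a i0 h0
    have h2 := sq_sum_le_card_mul_sum_sq (s := univ) (f := fun j => ‖∑ i, a i * v i j‖)
    rw [Finset.card_univ, Fintype.card_fin] at h2
    have h3 := (pow_le_pow_left₀ (by positivity) h1 2).trans h2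
    have hn' : (0:ℝ) < n := by exact_mod_cast hn
    refine le_of_mul_le_mul_left (le_trans (le_of_eq ?_) h3) hn'
    ring
  rw [Finset.mul_sum]
  refine (Finset.sum_le_sum fun i _ => h i).trans ?_
  simp

theorem det_lower {r n : ℕ} {ε : ℝ} (hr : 1 ≤ r) (hε : 0 < ε) (hn : 0 < n)
    {v : Fin r → Fin n → ℂ} (hv : EpsIndependent ℂ ε v) :
    (ε ^ 2 * n / r) ^ r ≤ ‖(Matrix.of v * (Matrix.of v)ᴴ).det‖ := by
  have hA := Matrix.isHermitian_mul_conjTranspose_self (Matrix.of v)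
  have hr' : (0:ℝ) < r := by exact_mod_cast hr
  have key : ∀ i, ε ^ 2 * n / r ≤ hA.eigenvalues i := by
    intro i
    rw [hA.eigenvalues_eq, ← Matrix.mulVec_mulVec, Matrix.dotProduct_mulVec]
    set x := hA.eigenvectorBasis i with hx
    have hx1 : ∑ i, ‖star (x i)‖ ^ 2 = 1 := by
      have := hA.eigenvectorBasis.orthonormal.1 i
      rw [EuclideanSpace.norm_eq, Real.sqrt_eq_one] at this
      simpa using this
    have hq := quad_bound hε hn hv (fun i => star (x i))
    rw [hx1, mul_one] at hq
    rw [div_le_iff₀' hr']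
    refine hq.trans (le_of_eq ?_)
    congr 1
    rw [dotProduct, map_sum]
    refine Finset.sum_congr rfl fun j _ => ?_
    have e1 : (star x.ofLp ᵥ* Matrix.of v) j = ∑ i, star (x i) * v i j := by
      simp [Matrix.vecMul, dotProduct]
    have e2 : ((Matrix.of v)ᴴ *ᵥ x.ofLp) j = star (∑ i, star (x i) * v i j) := by
      simp [Matrix.mulVec, dotProduct, mul_comm]
    rw [e1, e2]
    simp only [Complex.star_def, Complex.mul_conj, Complex.normSq_eq_norm_sq]
    simp [← Complex.ofReal_pow]
  rw [hA.det_eq_prod_eigenvalues, norm_prod]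
  have : ∀ i, ‖((hA.eigenvalues i : ℝ) : ℂ)‖ = hA.eigenvalues i := by
    intro i
    rw [Complex.norm_real, Real.norm_of_nonneg]
    exact le_trans (by positivity) (key i)
  calc (ε ^ 2 * n / r) ^ r = ∏ i : Fin r, (ε ^ 2 * n / r) := by
        rw [Finset.prod_const, Finset.card_univ, Fintype.card_fin]
    _ ≤ _ := Finset.prod_le_prod (fun _ _ => by positivity) (fun i _ => by
      refine (key i).trans (le_of_eq (this i).symm))

theorem sum_det_sq {r n : ℕ} (V : Matrix (Fin r) (Fin n) ℂ) :
    ∑ j : Fin r → Fin n, ‖(V.submatrix id j).det‖ ^ 2 = r.factorial * ‖(V * Vᴴ).det‖ := by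
  have h := cauchy_binet V Vᴴ
  have e : ∀ j : Fin r → Fin n, (V.submatrix id j).det * (Vᴴ.submatrix j id).det =
      ((‖(V.submatrix id j).det‖ ^ 2 : ℝ) : ℂ) := by
    intro j
    rw [← Matrix.conjTranspose_submatrix, Matrix.det_conjTranspose, Complex.star_def,
      Complex.mul_conj, Complex.normSq_eq_norm_sq]
  simp_rw [e] at h
  rw [← Complex.ofReal_sum] at h
  have := congrArg norm h
  rw [norm_mul, Complex.norm_natCast, Complex.norm_real, Real.norm_of_nonneg (by positivity)] at this
  exact this

/-- the rotated real matrix -/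
noncomputable def rotM {r n : ℕ} (v : Fin r → Fin n → ℂ) (θ : ℝ) : Matrix (Fin r) (Fin n) ℝ :=
  Matrix.of fun i j => (Complex.exp ((θ : ℂ) * Complex.I) * v i j).re

theorem rot_det {r n : ℕ} (v : Fin r → Fin n → ℂ) (θ : ℝ) (j : Fin r → Fin n) :
    2 ^ r * |((rotM v θ).submatrix id j).det| =
      ‖(Matrix.det ((Polynomial.X : Polynomial ℂ) •
        (((Matrix.of v).submatrix id j).map Polynomial.C) +
        (((Matrix.of v).submatrix id j).map star).map Polynomial.C)).eval
        (Complex.exp (2 * θ * Complex.I))‖ := by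
  set w := Complex.exp (θ * Complex.I) with hw
  have hw2 : Complex.exp (2 * θ * Complex.I) = w * w := by
    rw [hw, ← Complex.exp_add]; ring_nf
  have hwn : ‖w‖ = 1 := Complex.norm_exp_ofReal_mul_I θ
  have hwc : w * star w = 1 := by
    rw [Complex.star_def, Complex.mul_conj, Complex.normSq_eq_norm_sq, hwn]; simp
  rw [hw2, ← Polynomial.coe_evalRingHom, RingHom.map_det]
  have e : (Polynomial.evalRingHom (w * w)).mapMatrix ((Polynomial.X : Polynomial ℂ) •
        (((Matrix.of v).submatrix id j).map Polynomial.C) +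
        (((Matrix.of v).submatrix id j).map star).map Polynomial.C) =
      (2 * w) • (Complex.ofRealHom.mapMatrix ((rotM v θ).submatrix id j)) := by
    ext a b
    simp only [rotM, RingHom.mapMatrix_apply, Matrix.map_apply, Matrix.add_apply,
      Matrix.smul_apply, Matrix.submatrix_apply, Matrix.of_apply, smul_eq_mul, id,
      Polynomial.coe_evalRingHom, Polynomial.eval_add, Polynomial.eval_mul, Polynomial.eval_X,
      Polynomial.eval_C, Complex.ofRealHom_eq_coe]
    rw [← hw, Complex.re_eq_add_conj, map_mul]
    simp only [Complex.star_def] at hwc ⊢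
    linear_combination (-(starRingEnd ℂ) (v a (j b))) * hwc
  rw [e, Matrix.det_smul, ← RingHom.map_det, norm_mul, norm_pow, norm_mul, hwn]
  simp

theorem exists_rot {r n : ℕ} (v : Fin r → Fin n → ℂ) (θ : ℝ) :
    ∃ k ∈ range (r + 1), ‖(Matrix.of v * (Matrix.of v)ᴴ).det‖ ≤ 4 ^ r *
      (rotM v (θ + k * (Real.pi / (r + 1))) * (rotM v (θ + k * (Real.pi / (r + 1))))ᵀ).det := by
  set φ : ℕ → ℝ := fun k => θ + k * (Real.pi / (r + 1)) with hφ
  have hζ := Complex.isPrimitiveRoot_exp (r + 1) (by omega)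
  set ζ := Complex.exp (2 * Real.pi * Complex.I / (r + 1 : ℕ)) with hζd
  set z := Complex.exp (2 * θ * Complex.I) with hz
  have hzn : ‖z‖ = 1 := by
    have := Complex.norm_exp_ofReal_mul_I (2 * θ)
    push_cast at this
    exact this
  have hzk : ∀ k : ℕ, Complex.exp (2 * (φ k : ℝ) * Complex.I) = z * ζ ^ k := by
    intro k
    rw [hz, hζd, ← Complex.exp_nat_mul, ← Complex.exp_add]
    congr 1
    simp only [hφ]
    push_cast
    ring
  have hD : ∀ k, (r.factorial : ℝ) * (rotM v (φ k) * (rotM v (φ k))ᵀ).det =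
      ∑ j : Fin r → Fin n, |((rotM v (φ k)).submatrix id j).det| ^ 2 := by
    intro k
    rw [← cauchy_binet]
    refine Finset.sum_congr rfl fun j _ => ?_
    rw [← Matrix.transpose_submatrix, Matrix.det_transpose, sq_abs, sq]
  have hj : ∀ j : Fin r → Fin n, ((r + 1 : ℕ) : ℝ) * ‖((Matrix.of v).submatrix id j).det‖ ^ 2 ≤
      ∑ k ∈ range (r + 1), 4 ^ r * |((rotM v (φ k)).submatrix id j).det| ^ 2 := by
    intro j
    have hdeg := Polynomial.natDegree_det_X_add_C_le ((Matrix.of v).submatrix id j)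
      (((Matrix.of v).submatrix id j).map star)
    have hco := Polynomial.coeff_det_X_add_C_card ((Matrix.of v).submatrix id j)
      (((Matrix.of v).submatrix id j).map star)
    rw [Fintype.card_fin] at hdeg hco
    have := coeff_bound r _ hdeg ζ z hζ hzn
    rw [hco] at this
    refine this.trans (le_of_eq (Finset.sum_congr rfl fun k _ => ?_))
    rw [← hzk, ← rot_det, mul_pow, ← pow_mul, mul_comm r 2, pow_mul]
    norm_num
  by_contra hcon
  push Not at hcon
  have h1 : ∑ k ∈ range (r + 1), 4 ^ r * (rotM v (φ k) * (rotM v (φ k))ᵀ).det <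
      ∑ k ∈ range (r + 1), ‖(Matrix.of v * (Matrix.of v)ᴴ).det‖ :=
    Finset.sum_lt_sum_of_nonempty ⟨0, by simp⟩ hcon
  have h2 := Finset.sum_le_sum (s := univ) fun j _ => hj j
  rw [← Finset.mul_sum, sum_det_sq, Finset.sum_comm] at h2
  simp_rw [← Finset.mul_sum, ← hD] at h2
  simp only [Finset.sum_const, Finset.card_range, nsmul_eq_mul] at h1
  have hf : (0:ℝ) < r.factorial := by exact_mod_cast r.factorial_pos
  rw [← Finset.mul_sum] at h1
  have h3 := mul_lt_mul_of_pos_left h1 hf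
  rw [← Finset.mul_sum] at h2
  nlinarith

theorem nondeg_of_det {r n : ℕ} (hn : 0 < n) (M : Matrix (Fin r) (Fin n) ℝ)
    (hM : ∀ i j, |M i j| ≤ 1) (κ c : ℝ) (hc : 0 < c)
    (hdet : κ * n ^ r ≤ (M * Mᵀ).det)
    (hcκ : (r + 1) * (r ^ 2 * r.factorial) * c ≤ κ) : NonDeg c M := by
  intro e he
  have hn' : (0:ℝ) < n := by exact_mod_cast hn
  set x : Fin n → ℝ := fun j => ∑ i, M i j * e i with hx
  set G : Matrix (Fin r) (Fin r) ℝ := (n:ℝ)⁻¹ • (M * Mᵀ) with hG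
  have he1 : ∀ i, |e i| ≤ 1 := by
    intro i
    rw [← sq_le_one_iff_abs_le_one, ← he]
    exact Finset.single_le_sum (f := fun i => e i ^ 2) (fun _ _ => sq_nonneg _) (mem_univ i)
  have hxr : ∀ j, |x j| ≤ r := by
    intro j
    refine (Finset.abs_sum_le_sum_abs _ _).trans ?_
    calc _ ≤ ∑ i : Fin r, (1:ℝ) := Finset.sum_le_sum fun i _ => by
          rw [abs_mul]; exact mul_le_one₀ (hM i j) (abs_nonneg _) (he1 i)
      _ = r := by simp
  have hGe : ∀ i k, |G i k| ≤ 1 := by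
    intro i k
    rw [hG, Matrix.smul_apply, smul_eq_mul, abs_mul, abs_of_pos (by positivity),
      inv_mul_le_iff₀ hn', mul_one, Matrix.mul_apply]
    refine (Finset.abs_sum_le_sum_abs _ _).trans ?_
    calc _ ≤ ∑ i : Fin n, (1:ℝ) := Finset.sum_le_sum fun j _ => by
          rw [abs_mul]; exact mul_le_one₀ (hM i j) (abs_nonneg _) (hM k j)
      _ = n := by simp
  have hdG : κ ≤ G.det := by
    rw [hG, Matrix.det_smul, Fintype.card_fin, inv_pow, le_inv_mul_iff₀ (by positivity)]
    linarith
  have hadj : ∀ i k, |G.adjugate i k| ≤ r.factorial := by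
    intro i k
    rw [Matrix.adjugate_apply]
    have := Matrix.det_le (A := G.updateRow k (Pi.single i 1)) (abv := AbsoluteValue.abs) (x := 1)
      (by
        intro a b
        rw [Matrix.updateRow_apply]
        split_ifs
        · rw [Pi.single_apply]; split_ifs <;> simp
        · exact hGe a b)
    simpa using this
  have hGv : ∀ i, |(G *ᵥ e) i| ≤ (n:ℝ)⁻¹ * ∑ j, |x j| := by
    intro i
    have : (G *ᵥ e) i = (n:ℝ)⁻¹ * ∑ j, M i j * x j := by
      rw [hG, Matrix.smul_mulVec, ← Matrix.mulVec_mulVec, Pi.smul_apply, smul_eq_mul]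
      rfl
    rw [this, abs_mul, abs_of_pos (by positivity : (0:ℝ) < (n:ℝ)⁻¹)]
    refine mul_le_mul_of_nonneg_left ?_ (by positivity)
    refine (Finset.abs_sum_le_sum_abs _ _).trans (Finset.sum_le_sum fun j _ => ?_)
    rw [abs_mul]
    exact mul_le_of_le_one_left (abs_nonneg _) (hM i j)
  set S := (n:ℝ)⁻¹ * ∑ j, |x j| with hS
  have hS0 : 0 ≤ S := by positivity
  have hdet2 : G.det ≤ r ^ 2 * r.factorial * S := by
    have h1 : e ⬝ᵥ (G.adjugate *ᵥ (G *ᵥ e)) = G.det := by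
      rw [Matrix.mulVec_mulVec, Matrix.adjugate_mul, Matrix.smul_mulVec, Matrix.one_mulVec,
        dotProduct_smul, smul_eq_mul]
      have : e ⬝ᵥ e = 1 := by rw [← he]; simp [dotProduct, sq]
      rw [this, mul_one]
    rw [← h1]
    refine (le_abs_self _).trans ((Finset.abs_sum_le_sum_abs _ _).trans ?_)
    calc _ ≤ ∑ i : Fin r, ((r:ℝ) * (r.factorial * S)) := Finset.sum_le_sum fun i _ => by
          rw [abs_mul]
          refine (mul_le_of_le_one_left (abs_nonneg _) (he1 i)).trans ?_
          rw [Matrix.mulVec, dotProduct]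
          refine (Finset.abs_sum_le_sum_abs _ _).trans ?_
          calc _ ≤ ∑ k : Fin r, ((r.factorial:ℝ) * S) := Finset.sum_le_sum fun k _ => by
                rw [abs_mul]
                exact mul_le_mul (hadj i k) (hGv k) (abs_nonneg _) (by positivity)
            _ = _ := by simp
      _ = _ := by simp; ring
  have hr0 : (0:ℝ) ≤ r := by positivity
  have hSc : (r + 1) * c ≤ S := by
    rcases Nat.eq_zero_or_pos r with h0 | h0
    · subst h0; simp at he
    have hp : (0:ℝ) < r ^ 2 * r.factorial := by
      have : (0:ℝ) < r := by exact_mod_cast h0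
      positivity
    refine le_of_mul_le_mul_left ?_ hp
    linarith
  have hsum : (r + 1) * c * n ≤ ∑ j, |x j| := by
    rw [hS, le_inv_mul_iff₀ hn'] at hSc
    linarith
  classical
  have hcard : (Nat.card {j : Fin n | c ≤ |∑ i, M i j * e i|} : ℝ) =
      ((univ.filter fun j => c ≤ |x j|).card : ℝ) := by
    rw [Nat.card_eq_fintype_card, Fintype.card_subtype]
    rfl
  rw [hcard]
  have hub : ∑ j, |x j| ≤ c * n + r * ((univ.filter fun j => c ≤ |x j|).card : ℝ) := by
    calc ∑ j, |x j| ≤ ∑ j, (c + if c ≤ |x j| then (r:ℝ) else 0) := Finset.sum_le_sum fun j _ => by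
          split_ifs with h
          · linarith [hxr j]
          · push Not at h; linarith
      _ = _ := by
          rw [Finset.sum_add_distrib, ← Finset.sum_filter]
          simp; ring
  rcases Nat.eq_zero_or_pos r with h0 | h0
  · subst h0; simp at he
  have hrp : (0:ℝ) < r := by exact_mod_cast h0
  refine le_of_mul_le_mul_left ?_ hrp
  linarith

end Aux12

open Finset Matrix Aux12 in
theorem statement12 (r : ℕ) (hr : 1 ≤ r) (ε : ℝ) (hε : 0 < ε) (hε1 : ε ≤ 1) :
    ∃ c : ℝ, 0 < c ∧ ∀ (n : ℕ) (v : Fin r → Fin n → ℂ),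
      EpsIndependent ℂ ε v → (∀ i j, ‖v i j‖ ≤ 1) →
      -- with probability at least `c` over a uniformly random phase `θ ∈ [-π, π]`, the real
      -- matrix with rows `Re(e^{iθ}v₁),…,Re(e^{iθ}v_r)` is `c`-non-degenerate
      c ≤ (MeasureTheory.volume {θ : ℝ | θ ∈ Set.Icc (-Real.pi) Real.pi ∧
            NonDeg c (Matrix.of fun i j =>
              (Complex.exp ((θ : ℂ) * Complex.I) * v i j).re)}).toReal / (2 * Real.pi) := by
  have hr' : (0:ℝ) < r := by exact_mod_cast hr
  have hf : (0:ℝ) < r.factorial := by exact_mod_cast r.factorial_pos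
  set κ : ℝ := (ε ^ 2 / r) ^ r / 4 ^ r with hκ
  have hκ0 : 0 < κ := by positivity
  set P : ℝ := (r + 1) * (r ^ 2 * r.factorial) with hP
  have hP0 : 0 < P := by positivity
  set c : ℝ := min (κ / P) (1 / (2 * (r + 1))) with hc
  have hc0 : 0 < c := lt_min (by positivity) (by positivity)
  refine ⟨c, hc0, fun n v hv hv1 => ?_⟩
  rcases Nat.eq_zero_or_pos n with hn | hn
  · exfalso
    subst hn
    refine hv ⟨v, ?_, by simp⟩
    rw [Fintype.not_linearIndependent_iff]
    exact ⟨fun _ => 1, Subsingleton.elim _ _, ⟨0, hr⟩, one_ne_zero⟩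
  have hgood : ∀ θ : ℝ, ∃ k ∈ range (r + 1), NonDeg c (rotM v (θ + k * (Real.pi / (r + 1)))) := by
    intro θ
    obtain ⟨k, hk, h⟩ := exists_rot v θ
    refine ⟨k, hk, nondeg_of_det hn _ ?_ κ c hc0 ?_ ?_⟩
    · intro i j
      refine (Complex.abs_re_le_norm _).trans ?_
      rw [norm_mul, Complex.norm_exp_ofReal_mul_I, one_mul]
      exact hv1 i j
    · have h2 := (det_lower hr hε hn hv).trans h
      rw [hκ, div_mul_eq_mul_div, div_le_iff₀' (by positivity), ← mul_pow]
      refine le_trans (le_of_eq ?_) h2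
      congr 1; ring
    · rw [← hP, ← le_div_iff₀' hP0]
      exact min_le_left _ _
  set A : Set ℝ := {θ : ℝ | θ ∈ Set.Icc (-Real.pi) Real.pi ∧ NonDeg c (rotM v θ)} with hA
  change c ≤ (MeasureTheory.volume A).toReal / (2 * Real.pi)
  have hpi := Real.pi_pos
  have hAfin : MeasureTheory.volume A ≠ ⊤ := by
    refine ne_top_of_le_ne_top ?_ (MeasureTheory.measure_mono (fun θ h => h.1 :
      A ⊆ Set.Icc (-Real.pi) Real.pi))
    simp
  have hcover : Set.Icc (-Real.pi) 0 ⊆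
      ⋃ k ∈ range (r + 1), (fun θ : ℝ => θ + k * (Real.pi / (r + 1))) ⁻¹' A := by
    intro θ hθ
    obtain ⟨k, hk, h⟩ := hgood θ
    simp only [Set.mem_iUnion]
    refine ⟨k, hk, ?_, h⟩
    have hk' : (k:ℝ) ≤ r + 1 := by
      have := Finset.mem_range.1 hk
      exact_mod_cast this.le
    have h1 : (k:ℝ) * (Real.pi / (r + 1)) ≤ Real.pi := by
      rw [mul_div_assoc', div_le_iff₀ (by positivity)]
      nlinarith
    have h0 : 0 ≤ (k:ℝ) * (Real.pi / (r + 1)) := by positivity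
    exact ⟨by linarith [hθ.1], by linarith [hθ.2]⟩
  have hm := (MeasureTheory.measure_mono (μ := MeasureTheory.volume) hcover).trans
    (MeasureTheory.measure_biUnion_finset_le _ _)
  simp only [MeasureTheory.measure_preimage_add_right, Finset.sum_const, Finset.card_range,
    nsmul_eq_mul, Real.volume_Icc] at hm
  have hm2 := ENNReal.toReal_mono (ENNReal.mul_ne_top (by simp) hAfin) hm
  rw [ENNReal.toReal_mul, ENNReal.toReal_ofReal (by linarith), ENNReal.toReal_natCast] at hm2
  push_cast at hm2
  refine (min_le_right _ _).trans ?_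
  rw [div_le_div_iff₀ (by positivity) (by positivity)]
  nlinarith
end
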